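/- arXiv:1707.04745 — 3 statements merged into one kernel-verified Lean document; each statement's English description precedes it below -/
import Mathlib

section
/- Let n ≥ 1 and k ≥ 2 be integers and let V : ℝⁿ → ℝ be smooth and satisfy Assumption (i)–(iii). Then for every τ > 0 there exists a constant C_τ > 0 such that for every u ∈ C_c^∞(ℝⁿ; ℝ) one has ∫_{ℝⁿ} f̃_τ(x)² |u(x)|² dx ≤ C_τ·Q_{τV}(u) + C_τ·‖u‖²_{L²}. -/
open MeasureTheory Filter Topology Metric

noncomputable section

/-- Euclidean space ℝⁿ. -/
abbrev En (n : ℕ) := EuclideanSpace ℝ (Fin n)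

/-- First-order partial derivative in direction `i`, as an endomorphism of functions. -/
noncomputable def pd1 (n : ℕ) (i : Fin n) : Function.End (En n → ℝ) :=
  fun f x => fderiv ℝ f x (EuclideanSpace.single i 1)

/-- Order `|α|` of a multi-index. -/
def mdeg {n : ℕ} (α : Fin n → ℕ) : ℕ := ∑ i, α i

/-- Iterated partial derivative `∂^α`. -/
noncomputable def pdm (n : ℕ) (α : Fin n → ℕ) (f : En n → ℝ) : En n → ℝ :=
  ((List.ofFn fun i : Fin n => (pd1 n i) ^ (α i)).prod) f

/-- The finite set of multi-indices `lo ≤ |α| ≤ k`. -/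
def midx (n k lo : ℕ) : Finset (Fin n → ℕ) :=
  (Finset.Iic fun _ => k).filter fun α => lo ≤ mdeg α ∧ mdeg α ≤ k

/-- `f̃(x) = Σ_{1≤|α|≤k} |∂^α V(x)|^{1/|α|}`. -/
noncomputable def ftil (n k : ℕ) (V : En n → ℝ) (x : En n) : ℝ :=
  ∑ α ∈ midx n k 1, |pdm n α V x| ^ ((1 : ℝ) / (mdeg α))

/-- `f̃_τ(x) = Σ_{1≤|α|≤k} τ^{1/|α|} |∂^α V(x)|^{1/|α|}`. -/
noncomputable def ftilTau (n k : ℕ) (V : En n → ℝ) (τ : ℝ) (x : En n) : ℝ :=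
  ∑ α ∈ midx n k 1, τ ^ ((1 : ℝ) / (mdeg α)) * |pdm n α V x| ^ ((1 : ℝ) / (mdeg α))

/-- Regularized weight `f(x) = Σ_{1≤|α|≤k} (1 + |∂^α V(x)|²)^{1/(2|α|)}`. -/
noncomputable def freg (n k : ℕ) (V : En n → ℝ) (x : En n) : ℝ :=
  ∑ α ∈ midx n k 1, (1 + |pdm n α V x| ^ 2) ^ ((1 : ℝ) / (2 * mdeg α))

/-- The Hessian matrix `(∂_i ∂_j ρ)(x)`. -/
noncomputable def hessM (n : ℕ) (ρ : En n → ℝ) (x : En n) : Matrix (Fin n) (Fin n) ℝ :=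
  fun i j => pd1 n i (pd1 n j ρ) x

/-- Eigenvalues of the Hessian matrix (with value 0 in the degenerate non-symmetric case). -/
noncomputable def hessEig (n : ℕ) (ρ : En n → ℝ) (x : En n) : Fin n → ℝ :=
  if h : (hessM n ρ x).IsHermitian then h.eigenvalues else 0

/-- `Σ_{j ∈ I_{x,ρ}} λ_{ρ,j}(x)`, the sum of the positive eigenvalues of the Hessian. -/
noncomputable def lamPos (n : ℕ) (ρ : En n → ℝ) (x : En n) : ℝ :=
  ∑ j, max (hessEig n ρ x j) 0

/-- `M_ρ(x) = Σ_j max{−λ_{ρ,j}(x), 0}`. -/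
noncomputable def lamNeg (n : ℕ) (ρ : En n → ℝ) (x : En n) : ℝ :=
  ∑ j, max (-(hessEig n ρ x j)) 0

/-- Assumption (i)–(iii) of the paper. -/
def AssumptionA (n k : ℕ) (V : En n → ℝ) : Prop :=
  (∃ C₀ > (1 : ℝ), ∃ δ₁ ∈ Set.Ioo (0 : ℝ) 1, ∀ x : En n,
      lamPos n V x ≤ C₀ * (lamNeg n V x + ‖gradient V x‖ ^ 2
        + (∑ α ∈ midx n k 2, |pdm n α V x| ^ ((2 - δ₁) / (mdeg α))) + 1)) ∧
  (∃ δ₂ ∈ Set.Ioo (0 : ℝ) 1, ∀ α : Fin n → ℕ, mdeg α = k + 1 →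
      ∃ Cα > (0 : ℝ), ∀ x : En n,
        |pdm n α V x| ≤ Cα * (1 + ftil n k V x) ^ ((k : ℝ) + 1 - δ₂)) ∧
  (∀ M : ℝ, ∃ R : ℝ, ∀ x : En n, R ≤ ‖x‖ → M ≤ ftil n k V x)

/-- The Witten-Laplacian quadratic form `Q_{τV}(u) = ∫ |∇u + τ u ∇V|²`. -/
noncomputable def Qform (n : ℕ) (V : En n → ℝ) (τ : ℝ) (u : En n → ℝ) : ℝ :=
  ∫ x : En n, ‖gradient u x + (τ * u x) • gradient V x‖ ^ 2

/-- `u ∈ C_c^∞(ℝⁿ; ℝ)`. -/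
def TestFun (n : ℕ) (u : En n → ℝ) : Prop :=
  ContDiff ℝ (⊤ : ℕ∞) u ∧ HasCompactSupport u

/-- `p` is (given by) a real polynomial of total degree at most `r`. -/
def IsPolyDeg (n r : ℕ) (p : En n → ℝ) : Prop :=
  ∃ P : MvPolynomial (Fin n) ℝ, P.totalDegree ≤ r ∧
    ∀ x : En n, p x = MvPolynomial.eval (fun i => x i) P

/-- `q ∈ L_{p,0}` (limiting polynomials of `p` at `0` of degree at most `r`). -/
def memL (n r : ℕ) (p q : En n → ℝ) : Prop :=
  IsPolyDeg n r q ∧ q 0 = 0 ∧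
  ∃ y : ℕ → En n, ∃ τ h : ℕ → ℝ,
    Tendsto y atTop (nhds 0) ∧ (∀ j, 0 < τ j) ∧ (∀ j, 0 < h j) ∧
    Tendsto τ atTop atTop ∧ Tendsto h atTop (nhds 0) ∧
    ∀ α : Fin n → ℕ, 1 ≤ mdeg α → mdeg α ≤ r →
      Tendsto (fun j => τ j * h j ^ (mdeg α) * pdm n α p (y j)) atTop
        (nhds (pdm n α q 0))



/-- norm of the `m`-th derivative -/
def gj (n : ℕ) (V : En n → ℝ) (m : ℕ) (x : En n) : ℝ := ‖iteratedFDeriv ℝ m V x‖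

/-- the weight -/
def phj (n k : ℕ) (V : En n → ℝ) (x : En n) : ℝ :=
  ∑ m ∈ Finset.Icc 1 k, (gj n V m x) ^ ((1 : ℝ) / m)

theorem gj_nonneg (n : ℕ) (V : En n → ℝ) (m : ℕ) (x : En n) : 0 ≤ gj n V m x := norm_nonneg _

theorem phj_nonneg (n k : ℕ) (V : En n → ℝ) (x : En n) : 0 ≤ phj n k V x :=
  Finset.sum_nonneg fun _ _ => Real.rpow_nonneg (gj_nonneg _ _ _ _) _

theorem gj_le_phj (n k : ℕ) (V : En n → ℝ) (x : En n) (m : ℕ) (h1 : 1 ≤ m) (hm : m ≤ k) :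
    gj n V m x ≤ phj n k V x ^ m := by
  have h : (gj n V m x) ^ ((1 : ℝ) / m) ≤ phj n k V x :=
    Finset.single_le_sum (f := fun m : ℕ => (gj n V m x) ^ ((1 : ℝ) / m))
      (fun _ _ => Real.rpow_nonneg (gj_nonneg _ _ _ _) _) (Finset.mem_Icc.2 ⟨h1, hm⟩)
  have h2 := pow_le_pow_left₀ (Real.rpow_nonneg (gj_nonneg n V m x) _) h m
  rwa [one_div, Real.rpow_inv_natCast_pow (gj_nonneg n V m x) (by omega)] at h2

theorem phj_le (n k : ℕ) (V : En n → ℝ) (x : En n) (c : ℝ) (hc : 0 ≤ c)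
    (h : ∀ m, 1 ≤ m → m ≤ k → gj n V m x ≤ c ^ m) : phj n k V x ≤ k * c := by
  have : ∀ m ∈ Finset.Icc 1 k, (gj n V m x) ^ ((1 : ℝ) / m) ≤ c := by
    intro m hm
    obtain ⟨h1, h2⟩ := Finset.mem_Icc.1 hm
    have := Real.rpow_le_rpow (gj_nonneg n V m x) (h m h1 h2) (z := (1 : ℝ) / m) (by positivity)
    rw [one_div, Real.pow_rpow_inv_natCast hc (by omega)] at this
    rwa [one_div]
  calc phj n k V x ≤ ∑ m ∈ Finset.Icc 1 k, c := Finset.sum_le_sum this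
    _ = k * c := by simp

theorem gj_continuous (n : ℕ) (V : En n → ℝ) (hV : ContDiff ℝ (⊤ : ℕ∞) V) (m : ℕ) :
    Continuous (gj n V m) :=
  (hV.continuous_iteratedFDeriv (by exact_mod_cast le_top)).norm

theorem phj_continuous (n k : ℕ) (V : En n → ℝ) (hV : ContDiff ℝ (⊤ : ℕ∞) V) :
    Continuous (phj n k V) := by
  unfold phj
  refine continuous_finsetSum _ fun m _ => ?_
  exact (gj_continuous n V hV m).rpow_const (fun x => Or.inr (by positivity))

theorem itd_differentiable (n : ℕ) (V : En n → ℝ) (hV : ContDiff ℝ (⊤ : ℕ∞) V) (m : ℕ) :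
    Differentiable ℝ (iteratedFDeriv ℝ m V) :=
  hV.differentiable_iteratedFDeriv (by exact_mod_cast WithTop.coe_lt_top _)

/-- mean value inequality on a convex set -/
theorem jet_mvt (n : ℕ) (V : En n → ℝ) (hV : ContDiff ℝ (⊤ : ℕ∞) V) (m : ℕ)
    (s : Set (En n)) (hs : Convex ℝ s) (B : ℝ) (hB : ∀ z ∈ s, gj n V (m+1) z ≤ B)
    (x y : En n) (hx : x ∈ s) (hy : y ∈ s) :
    ‖iteratedFDeriv ℝ m V y - iteratedFDeriv ℝ m V x‖ ≤ B * ‖y - x‖ := by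
  refine hs.norm_image_sub_le_of_norm_fderiv_le (𝕜 := ℝ)
    (fun z _ => itd_differentiable n V hV m z) (fun z hz => ?_) hx hy
  rw [norm_fderiv_iteratedFDeriv]; exact hB z hz

theorem jet_taylor (n : ℕ) (V : En n → ℝ) (hV : ContDiff ℝ (⊤ : ℕ∞) V)
    (x y : En n) (r : ℝ) (hr : ‖y - x‖ ≤ r) (i : ℕ) : ∀ (m : ℕ) (B : ℝ),
    (∀ z ∈ segment ℝ x y, gj n V (m+i) z ≤ B) →
    ∀ z ∈ segment ℝ x y, gj n V m z ≤ ∑ j ∈ Finset.range i, gj n V (m+j) x * r^j + r^i * B := by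
  have hr0 : 0 ≤ r := (norm_nonneg _).trans hr
  induction i with
  | zero => intro m B h z hz; simpa using h z hz
  | succ i ih =>
    intro m B h z hz
    have h' := ih (m+1) B (fun z hz => by
      have := h z hz; rwa [show m + 1 + i = m + (i+1) by ring])
    have hx : x ∈ segment ℝ x y := left_mem_segment ℝ x y
    have h1 := jet_mvt n V hV m _ (convex_segment x y) _ h' x z hx hz
    have hzx : ‖z - x‖ ≤ r := by
      obtain ⟨t, ht, rfl⟩ := (segment_eq_image' ℝ x y ▸ hz)
      simp only [add_sub_cancel_left, norm_smul]
      rw [Real.norm_of_nonneg ht.1]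
      nlinarith [norm_nonneg (y - x), ht.2]
    set B' := ∑ j ∈ Finset.range i, gj n V (m+1+j) x * r^j + r^i * B with hB'
    have hB0 : 0 ≤ B' := (gj_nonneg n V (m+1) x).trans (h' x hx)
    have h2 : gj n V m z ≤ gj n V m x + r * B' := by
      have := norm_sub_norm_le (iteratedFDeriv ℝ m V z) (iteratedFDeriv ℝ m V x)
      unfold gj
      nlinarith [mul_le_mul_of_nonneg_left hzx hB0]
    refine h2.trans (le_of_eq ?_)
    rw [Finset.sum_range_succ', hB', mul_add, Finset.mul_sum]
    simp only [add_zero, pow_zero, mul_one]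
    have : ∀ j ∈ Finset.range i, r * (gj n V (m+1+j) x * r^j) = gj n V (m+(j+1)) x * r^(j+1) := by
      intro j _
      rw [show m + 1 + j = m + (j+1) by ring]; ring
    rw [Finset.sum_congr rfl this]; ring

/-- condition (ii) in terms of norms -/
def CondII (n k : ℕ) (V : En n → ℝ) : Prop :=
  ∃ C > (0:ℝ), ∃ δ ∈ Set.Ioo (0:ℝ) 1, ∀ x, gj n V (k+1) x ≤ C * (1 + phj n k V x) ^ ((k:ℝ) + 1 - δ)

theorem rpow_large (δ : ℝ) (hδ : 0 < δ) (M : ℝ) : ∃ Λ ≥ (1:ℝ), ∀ L ≥ Λ, M ≤ L ^ δ := by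
  obtain ⟨a, ha⟩ := ((tendsto_rpow_atTop hδ).eventually_ge_atTop M).exists_forall_of_atTop
  exact ⟨max a 1, le_max_right _ _, fun L hL => ha L ((le_max_left _ _).trans hL)⟩

/-- bound of the top derivative given a bound of the weight -/
theorem top_small (n k : ℕ) (V : En n → ℝ) (hII : CondII n k V) (A : ℝ) (hA : 1 ≤ A) (η : ℝ)
    (hη : 0 < η) : ∃ Λ ≥ (1:ℝ), ∀ L ≥ Λ, ∀ y, phj n k V y ≤ A * L → gj n V (k+1) y ≤ η * L^(k+1) := by
  obtain ⟨C, hC, δ, ⟨hδ0, hδ1⟩, h⟩ := hII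
  obtain ⟨Λ, hΛ, hL⟩ := rpow_large δ hδ0 (C * (2*A)^(k+1) / η)
  refine ⟨Λ, hΛ, fun L hLΛ y hy => (h y).trans ?_⟩
  have hL1 : 1 ≤ L := hΛ.trans hLΛ
  have hL0 : 0 < L := by linarith
  have hAL : 1 ≤ A * L := by nlinarith
  have e1 : (1 + phj n k V y) ^ ((k:ℝ) + 1 - δ) ≤ (2*A*L) ^ ((k:ℝ) + 1 - δ) := by
    apply Real.rpow_le_rpow
    · linarith [phj_nonneg n k V y]
    · nlinarith
    · have : (0:ℝ) ≤ k := by positivity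
      linarith
  have e2 : (2*A*L) ^ ((k:ℝ) + 1 - δ) ≤ (2*A)^(k+1) * L^(k+1) / L^δ := by
    rw [Real.mul_rpow (by positivity) hL0.le, Real.rpow_sub hL0, mul_div_assoc]
    have : L ^ ((k:ℝ)+1) = L^(k+1) := by exact_mod_cast Real.rpow_natCast L (k+1)
    rw [this]
    gcongr
    have : (2*A) ^ ((k:ℝ)+1) = (2*A)^(k+1) := by exact_mod_cast Real.rpow_natCast (2*A) (k+1)
    rw [← this]
    apply Real.rpow_le_rpow_of_exponent_le <;> linarith
  have hLδ : 0 < L^δ := Real.rpow_pos_of_pos hL0 _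
  have e3 := hL L hLΛ
  rw [div_le_iff₀ hη] at e3
  calc C * (1 + phj n k V y) ^ ((k:ℝ) + 1 - δ) ≤ C * ((2*A)^(k+1) * L^(k+1) / L^δ) := by
        gcongr; exact e1.trans e2
    _ = (C * (2*A)^(k+1)) * L^(k+1) / L^δ := by ring
    _ ≤ (L^δ * η) * L^(k+1) / L^δ := by gcongr
    _ = η * L^(k+1) := by field_simp

theorem jet_up (n k : ℕ) (hk : 1 ≤ k) (V : En n → ℝ) (hV : ContDiff ℝ (⊤ : ℕ∞) V)
    (hII : CondII n k V) (R : ℝ) (hR : 1 ≤ R) (η : ℝ) (hη : 0 < η) :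
    ∃ Λ ≥ (1:ℝ), ∀ x, Λ ≤ phj n k V x → ∀ y ∈ closedBall x (R / phj n k V x),
      (∀ m, 1 ≤ m → m ≤ k → gj n V m y ≤ (k+1) * R^k * phj n k V x ^ m) ∧
      gj n V (k+1) y ≤ η * phj n k V x ^ (k+1) ∧
      phj n k V y ≤ (k*(k+1) + 1) * R^k * phj n k V x := by
  have hRk : 1 ≤ R^k := one_le_pow₀ hR
  set A : ℝ := (k*(k+1) + 1) * R^k with hAdef
  have hA : 1 ≤ A := by
    have : (0:ℝ) ≤ k*(k+1) := by positivity
    nlinarith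
  obtain ⟨Λ, hΛ, htop⟩ := top_small n k V hII A hA (min η (1/R)) (by positivity)
  refine ⟨Λ, hΛ, fun x hx y hy => ?_⟩
  set L := phj n k V x with hL
  have hL1 : 1 ≤ L := hΛ.trans hx
  have hL0 : 0 < L := by linarith
  -- the key: from a bound on the segment
  have key : ∀ y ∈ closedBall x (R / L), (∀ z ∈ segment ℝ x y, phj n k V z ≤ A * L) →
      (∀ m, 1 ≤ m → m ≤ k → gj n V m y ≤ (k+1) * R^k * L ^ m) ∧
      gj n V (k+1) y ≤ η * L ^ (k+1) ∧ phj n k V y ≤ k * ((k+1) * R^k * L) := by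
    intro y hy hseg
    have hyr : ‖y - x‖ ≤ R / L := by simpa [dist_eq_norm] using hy
    have hB : ∀ z ∈ segment ℝ x y, gj n V (k+1) z ≤ 1/R * L^(k+1) := fun z hz =>
      (htop L hx z (hseg z hz)).trans (by gcongr; exact min_le_right _ _)
    have b : ∀ m, 1 ≤ m → m ≤ k → gj n V m y ≤ (k+1) * R^k * L ^ m := by
      intro m h1 hm
      have := jet_taylor n V hV x y _ hyr (k+1-m) m _ (by
        rw [show m + (k+1-m) = k+1 by omega]; exact hB) y (right_mem_segment ℝ x y)
      refine this.trans ?_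
      have t1 : ∀ j ∈ Finset.range (k+1-m), gj n V (m+j) x * (R/L)^j ≤ R^k * L^m := by
        intro j hj
        have hj' := Finset.mem_range.1 hj
        calc gj n V (m+j) x * (R/L)^j ≤ L^(m+j) * (R/L)^j := by
              gcongr; exact gj_le_phj n k V x _ (by omega) (by omega)
          _ = R^j * L^m := by rw [pow_add, div_pow]; field_simp
          _ ≤ R^k * L^m := by gcongr; omega
      have t2 : (R/L)^(k+1-m) * (1/R * L^(k+1)) ≤ R^k * L^m := by
        obtain ⟨i, hi⟩ : ∃ i, k = m + i := ⟨k - m, by omega⟩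
        rw [show k + 1 - m = i + 1 by omega, show k + 1 = m + (i+1) by omega, pow_add L, div_pow]
        have : R^(i+1)/L^(i+1) * (1/R*(L^m*L^(i+1))) = R^i * L^m := by field_simp; ring
        rw [this]
        gcongr; omega
      have t3 := Finset.sum_le_sum t1
      rw [Finset.sum_const, Finset.card_range, nsmul_eq_mul] at t3
      have : ((k+1-m : ℕ):ℝ) ≤ k := by exact_mod_cast (by omega : k+1-m ≤ k)
      have h0 : 0 ≤ R^k * L^m := by positivity
      nlinarith
    refine ⟨b, (htop L hx y (hseg y (right_mem_segment ℝ x y))).trans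
      (by gcongr; exact min_le_left _ _), phj_le n k V y _ (by positivity) fun m h1 hm => ?_⟩
    refine (b m h1 hm).trans ?_
    rw [mul_pow]
    gcongr
    apply le_self_pow₀ _ (by omega)
    have : (0:ℝ) ≤ k := by positivity
    nlinarith
  -- bootstrap
  have hall : ∀ y ∈ closedBall x (R / L), phj n k V y < A * L := by
    by_contra hcon
    push Not at hcon
    obtain ⟨y0, hy0, hy0'⟩ := hcon
    have hcpt : IsCompact (closedBall x (R/L) ∩ {z | A * L ≤ phj n k V z}) :=
      (isCompact_closedBall x _).inter_right
        (isClosed_le continuous_const (phj_continuous n k V hV))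
    obtain ⟨y1, ⟨hy1, hy1'⟩, hmin⟩ := hcpt.exists_isMinOn ⟨y0, hy0, hy0'⟩
      (continuous_id.dist continuous_const : Continuous fun z => dist z x).continuousOn
    have hne : y1 ≠ x := by
      rintro rfl
      have h3 : A * L ≤ L := hy1'
      have : (1:ℝ) ≤ k := by exact_mod_cast hk
      have : 2 ≤ k*(k+1) + (1:ℝ) := by nlinarith
      have : 2 ≤ A := by nlinarith
      nlinarith
    -- points strictly before y1
    have hbefore : ∀ t ∈ Set.Ico (0:ℝ) 1, phj n k V (x + t • (y1 - x)) < A * L := by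
      intro t ht
      by_contra hc
      push Not at hc
      have hd : dist (x + t • (y1 - x)) x = t * dist y1 x := by
        rw [dist_eq_norm, dist_eq_norm, add_sub_cancel_left, norm_smul, Real.norm_of_nonneg ht.1]
      have hpos : 0 < dist y1 x := dist_pos.2 hne
      have hmem : x + t • (y1 - x) ∈ closedBall x (R/L) := by
        rw [mem_closedBall, hd]
        have : dist y1 x ≤ R/L := hy1
        nlinarith [ht.2]
      have h4 : dist y1 x ≤ dist (x + t • (y1 - x)) x := hmin ⟨hmem, hc⟩
      rw [hd] at h4
      nlinarith [ht.2]
    have hseg : ∀ z ∈ segment ℝ x y1, phj n k V z ≤ A * L := by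
      have hcont : Continuous fun t : ℝ => phj n k V (x + t • (y1 - x)) :=
        (phj_continuous n k V hV).comp (by fun_prop)
      have hcl : IsClosed {t : ℝ | phj n k V (x + t • (y1 - x)) ≤ A * L} :=
        isClosed_le hcont continuous_const
      have hsub : Set.Icc (0:ℝ) 1 ⊆ {t : ℝ | phj n k V (x + t • (y1 - x)) ≤ A * L} := by
        rw [← closure_Ico (zero_ne_one)]
        exact hcl.closure_subset_iff.2 fun t ht => (hbefore t ht).le
      intro z hz
      obtain ⟨t, ht, rfl⟩ := (segment_eq_image' ℝ x y1 ▸ hz)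
      exact hsub ht
    have := (key y1 hy1 hseg).2.2
    have h5 : A * L ≤ phj n k V y1 := hy1'
    have : 0 < R^k * L := by positivity
    nlinarith
  have hyseg : ∀ z ∈ segment ℝ x y, phj n k V z ≤ A * L := fun z hz =>
    (hall z ((convex_closedBall x _).segment_subset (mem_closedBall_self (by positivity)) hy hz)).le
  exact ⟨(key y hy hyseg).1, (key y hy hyseg).2.1, (hall y hy).le⟩

theorem jet_low (n k : ℕ) (hk : 1 ≤ k) (V : En n → ℝ) (hV : ContDiff ℝ (⊤ : ℕ∞) V)
    (hII : CondII n k V) (S : ℝ) (hS : 1 ≤ S) :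
    ∃ Λ ≥ (1:ℝ), ∀ x, Λ ≤ phj n k V x → ∀ y ∈ closedBall x (S^k / phj n k V x),
      (((k:ℝ)+1)^(k+1))⁻¹ / S^(k-1) * phj n k V x ≤ phj n k V y := by
  have hS0 : 0 < S := by linarith
  set c0 : ℝ := (((k:ℝ)+1)^(k+1))⁻¹ with hc0
  have hc0p : 0 < c0 := by positivity
  have hc01 : c0 ≤ 1 := by
    apply inv_le_one_of_one_le₀
    apply one_le_pow₀
    have : (0:ℝ) ≤ k := by positivity
    linarith
  have hR : 1 ≤ S^k := one_le_pow₀ hS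
  set R := S^k with hRdef
  obtain ⟨Λ, hΛ, hup⟩ := jet_up n k hk V hV hII R hR (c0 / R^(k+1)) (by positivity)
  refine ⟨Λ, hΛ, fun x hx y hy => ?_⟩
  set L := phj n k V x with hL
  have hL1 : 1 ≤ L := hΛ.trans hx
  have hL0 : 0 < L := by linarith
  by_contra hcon
  push Not at hcon
  set d := c0 / S^(k-1) with hd
  have hd0 : 0 < d := by positivity
  have hyr : ‖x - y‖ ≤ R / L := by rw [← dist_eq_norm, dist_comm]; exact hy
  have hB : ∀ z ∈ segment ℝ y x, gj n V (k+1) z ≤ c0 / R^(k+1) * L^(k+1) := fun z hz =>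
    (hup x hx z ((convex_closedBall x _).segment_subset hy
      (mem_closedBall_self (by positivity)) hz)).2.1
  have b : ∀ m, 1 ≤ m → m ≤ k → gj n V m x ≤ (1/((k:ℝ)+1) * L) ^ m := by
    intro m h1 hm
    have := jet_taylor n V hV y x _ hyr (k+1-m) m _ (by
        rw [show m + (k+1-m) = k+1 by omega]; exact hB) x (right_mem_segment ℝ y x)
    have t1 : ∀ j ∈ Finset.range (k+1-m), gj n V (m+j) y * (R/L)^j ≤ c0 * L^m := by
      intro j hj
      have hj' := Finset.mem_range.1 hj
      have hSj : (S^k)^j ≤ (S^(k-1))^(m+j) := by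
        rw [← pow_mul, ← pow_mul]
        apply pow_le_pow_right₀ hS
        obtain ⟨q, rfl⟩ : ∃ q, k = q + 1 := ⟨k-1, by omega⟩
        obtain ⟨p, rfl⟩ : ∃ p, m = p + 1 := ⟨m-1, by omega⟩
        simp only [Nat.add_sub_cancel]
        have : j ≤ q := by omega
        nlinarith [Nat.zero_le (q*p)]
      calc gj n V (m+j) y * (R/L)^j ≤ (phj n k V y)^(m+j) * (R/L)^j := by
              gcongr; exact gj_le_phj n k V y _ (by omega) (by omega)
        _ ≤ (d*L)^(m+j) * (R/L)^j := by
            gcongr; exact phj_nonneg n k V y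
        _ = d^(m+j) * R^j * L^m := by
            have e : L^j * (R/L)^j = R^j := by rw [← mul_pow, mul_div_cancel₀ _ hL0.ne']
            rw [mul_pow, pow_add L, mul_assoc, mul_assoc (L^m), e]; ring
        _ ≤ c0 * L^m := by
            gcongr
            rw [hd, div_pow, hRdef, div_mul_eq_mul_div, div_le_iff₀ (by positivity)]
            have : c0^(m+j) ≤ c0 := pow_le_of_le_one hc0p.le hc01 (by omega)
            exact mul_le_mul this hSj (by positivity) hc0p.le
    have t2 : (R/L)^(k+1-m) * (c0 / R^(k+1) * L^(k+1)) ≤ c0 * L^m := by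
        obtain ⟨i, hi⟩ : ∃ i, k + 1 = m + i := ⟨k + 1 - m, by omega⟩
        rw [show k + 1 - m = i by omega, hi, pow_add L, div_pow]
        have : R^i/L^i * (c0/R^(m+i)*(L^m*L^i)) = c0 / R^m * L^m := by
          rw [pow_add]; field_simp
        rw [this]
        gcongr
        apply div_le_self hc0p.le (one_le_pow₀ hR)
    have t3 := Finset.sum_le_sum t1
    rw [Finset.sum_const, Finset.card_range, nsmul_eq_mul] at t3
    have h3 : ((k+1-m : ℕ):ℝ) ≤ k := by exact_mod_cast (by omega : k+1-m ≤ k)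
    have h0 : 0 ≤ c0 * L^m := by positivity
    have h4 : gj n V m x ≤ (k+1) * c0 * L^m := by nlinarith
    refine h4.trans ?_
    rw [mul_pow]
    gcongr
    have : ((k:ℝ)+1) * c0 = (1/((k:ℝ)+1))^k := by
      rw [hc0, one_div, inv_pow, pow_succ]; field_simp
    rw [this]
    apply pow_le_pow_of_le_one (by positivity) _ hm
    rw [div_le_one (by positivity)]
    have : (0:ℝ) ≤ k := by positivity
    linarith
  have := phj_le n k V x _ (by positivity) b
  have h5 : (k:ℝ) * (1/((k:ℝ)+1) * L) < L := by
    rw [show (k:ℝ) * (1/((k:ℝ)+1) * L) = (k / (k+1)) * L by ring]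
    have : (k:ℝ) / (k+1) < 1 := by rw [div_lt_one (by positivity)]; linarith
    nlinarith
  linarith

theorem norm_fderiv_itd_sub {E F : Type*} [NormedAddCommGroup E] [NormedSpace ℝ E]
    [NormedAddCommGroup F] [NormedSpace ℝ F] (f : E → F) (m : ℕ) (z y : E) :
    ‖fderiv ℝ (iteratedFDeriv ℝ m f) z - fderiv ℝ (iteratedFDeriv ℝ m f) y‖
      = ‖iteratedFDeriv ℝ (m+1) f z - iteratedFDeriv ℝ (m+1) f y‖ := by
  rw [fderiv_iteratedFDeriv, Function.comp_apply, Function.comp_apply]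
  rw [← LinearIsometryEquiv.map_sub, LinearIsometryEquiv.norm_map]

/-- one Landau step -/
theorem landau_step (n : ℕ) (V : En n → ℝ) (hV : ContDiff ℝ (⊤ : ℕ∞) V) (m : ℕ)
    (s : Set (En n)) (hs : Convex ℝ s) (A e h : ℝ) (hh : 0 < h) (he : 0 ≤ e)
    (hA : ∀ z ∈ s, gj n V (m+2) z ≤ A) (y : En n) (hy : closedBall y h ⊆ s)
    (hosc : ∀ z ∈ s, ‖iteratedFDeriv ℝ m V z - iteratedFDeriv ℝ m V y‖ ≤ e) :
    gj n V (m+1) y ≤ e / h + h * A := by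
  have hys : y ∈ s := hy (mem_closedBall_self hh.le)
  have hA0 : 0 ≤ A := (gj_nonneg _ _ _ _).trans (hA y hys)
  unfold gj
  rw [← norm_fderiv_iteratedFDeriv]
  refine ContinuousLinearMap.opNorm_le_of_unit_norm (𝕜 := ℝ) (by positivity) fun v hv => ?_
  set F := iteratedFDeriv ℝ m V
  -- mean value for F - DF(y)
  have hcv : Convex ℝ (closedBall y h) := convex_closedBall y h
  have hyb : y + h • v ∈ closedBall y h := by
    simp [norm_smul, hv, abs_of_pos hh]
  have h1 : ‖F (y + h • v) - F y - fderiv ℝ F y (y + h • v - y)‖ ≤ (h*A) * ‖y + h • v - y‖ := by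
    refine hcv.norm_image_sub_le_of_norm_fderiv_le' (𝕜 := ℝ)
      (fun z _ => itd_differentiable n V hV m z) (fun z hz => ?_) (mem_closedBall_self hh.le) hyb
    have h2 : ‖fderiv ℝ F z - fderiv ℝ F y‖ ≤ A * ‖z - y‖ := by
      have := jet_mvt n V hV (m+1) _ hcv A (fun z hz => hA z (hy hz)) y z
        (mem_closedBall_self hh.le) hz
      rw [norm_fderiv_itd_sub]
      exact this
    refine h2.trans ?_
    rw [mul_comm]
    gcongr
    simpa [dist_eq_norm] using hz
  rw [add_sub_cancel_left, map_smul] at h1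
  have h3 : ‖h • fderiv ℝ F y v‖ ≤ e + h*A*h := by
    have h4 := hosc _ (hy hyb)
    have h5 : h • fderiv ℝ F y v = (F (y + h • v) - F y) - (F (y + h • v) - F y - h • fderiv ℝ F y v) := by
      abel
    rw [h5]
    refine (norm_sub_le _ _).trans ?_
    have : ‖h • v‖ = h := by simp [norm_smul, hv, abs_of_pos hh]
    rw [this] at h1
    linarith
  rw [norm_smul, Real.norm_of_nonneg hh.le] at h3
  have : ‖fderiv ℝ F y v‖ ≤ (e + h*A*h)/h := by
    rw [le_div_iff₀ hh]; linarith
  refine this.trans (le_of_eq ?_)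
  field_simp

theorem itd_zero_sub (n : ℕ) (V : En n → ℝ) (x y : En n) :
    ‖iteratedFDeriv ℝ 0 V x - iteratedFDeriv ℝ 0 V y‖ = |V x - V y| := by
  rw [iteratedFDeriv_zero_eq_comp, Function.comp_apply, Function.comp_apply,
    ← LinearIsometryEquiv.map_sub, LinearIsometryEquiv.norm_map, Real.norm_eq_abs]

theorem osc_lemma (n k : ℕ) (hk : 1 ≤ k) (V : En n → ℝ) (hV : ContDiff ℝ (⊤ : ℕ∞) V)
    (hII : CondII n k V) : ∃ c > (0:ℝ), ∃ Λ ≥ (1:ℝ), ∀ x, Λ ≤ phj n k V x →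
      ∃ y ∈ closedBall x (1 / phj n k V x), c ≤ |V y - V x| := by
  obtain ⟨Λ, hΛ, hup⟩ := jet_up n k hk V hV hII 1 le_rfl 1 one_pos
  set A : ℝ := k + 1 with hA
  have hA1 : 1 ≤ A := by
    have : (0:ℝ) ≤ k := by positivity
    linarith
  have hbd : ∀ x, Λ ≤ phj n k V x → ∀ y ∈ closedBall x (1 / phj n k V x), ∀ m, 1 ≤ m → m ≤ k + 1 →
      gj n V m y ≤ A * phj n k V x ^ m := by
    intro x hx y hy m h1 h2
    have := hup x hx y hy
    rcases Nat.lt_or_ge k m with h | h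
    · obtain rfl : m = k + 1 := by omega
      refine this.2.1.trans ?_
      have := phj_nonneg n k V x
      gcongr
    · simpa using this.1 m h1 h
  have P : ∀ m, m ≤ k → ∀ ε > (0:ℝ), ∃ c > (0:ℝ), ∀ x, Λ ≤ phj n k V x →
      (∀ y ∈ closedBall x (1 / phj n k V x), |V y - V x| < c) →
      (∀ y ∈ closedBall x ((1/2)^m / phj n k V x), ∀ y' ∈ closedBall x ((1/2)^m / phj n k V x),
        ‖iteratedFDeriv ℝ m V y - iteratedFDeriv ℝ m V y'‖ ≤ ε * phj n k V x ^ m) ∧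
      (1 ≤ m → gj n V m x ≤ ε * phj n k V x ^ m) := by
    intro m
    induction m with
    | zero =>
      intro _ ε hε
      refine ⟨ε/2, by positivity, fun x hx h => ⟨fun y hy y' hy' => ?_, by simp⟩⟩
      rw [itd_zero_sub]
      have h1 := h y (by simpa using hy)
      have h2 := h y' (by simpa using hy')
      rw [abs_lt] at h1 h2
      rw [abs_le]
      constructor <;> simp <;> linarith
    | succ m ih =>
      intro hm ε' hε'
      set t : ℝ := min ((1/2)^(m+1)) (ε' / (4*A)) with ht
      have ht0 : 0 < t := by positivity
      obtain ⟨c, hc, hP⟩ := ih (by omega) (t * ε' / 4) (by positivity)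
      refine ⟨c, hc, fun x hx h => ?_⟩
      have hL1 : 1 ≤ phj n k V x := hΛ.trans hx
      have hPx := (hP x hx h).1
      set L := phj n k V x with hL
      have hL0 : 0 < L := by linarith
      have main : ∀ y ∈ closedBall x ((1/2)^(m+1) / L), gj n V (m+1) y ≤ ε'/2 * L^(m+1) := by
        intro y hy
        have hsub : closedBall y (t/L) ⊆ closedBall x ((1/2)^m / L) := by
          apply closedBall_subset_closedBall'
          have h1 : dist y x ≤ (1/2)^(m+1)/L := hy
          have h2 : t/L ≤ (1/2)^(m+1)/L := by gcongr; exact min_le_left _ _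
          have h3 : ((1:ℝ)/2)^m/L = (1/2)^(m+1)/L + (1/2)^(m+1)/L := by ring
          linarith
        have hsub2 : closedBall x ((1/2)^m / L) ⊆ closedBall x (1 / L) := by
          apply closedBall_subset_closedBall
          gcongr
          apply pow_le_one₀ <;> norm_num
        have h4 := landau_step n V hV m _ (convex_closedBall x ((1/2)^m / L)) (A * L^(m+2))
          (t * ε' / 4 * L^m) (t/L) (by positivity) (by positivity)
          (fun z hz => hbd x hx z (hsub2 hz) (m+2) (by omega) (by omega)) y hsub
          (fun z hz => hPx z hz y (hsub (mem_closedBall_self (by positivity))))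
        refine h4.trans ?_
        have e1 : t * ε' / 4 * L ^ m / (t / L) = ε'/4 * L^(m+1) := by field_simp; ring
        have e2 : t / L * (A * L ^ (m + 2)) = t * A * L^(m+1) := by field_simp; ring
        have e3 : t * A ≤ ε'/4 := by
          calc t * A ≤ ε' / (4*A) * A := by gcongr; exact min_le_right _ _
            _ = ε'/4 := by field_simp
        have : 0 < L^(m+1) := by positivity
        rw [e1, e2]
        nlinarith
      refine ⟨fun y hy y' hy' => ?_, fun _ => ?_⟩
      · refine (norm_sub_le _ _).trans ?_
        have := main y hy
        have := main y' hy'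
        unfold gj at *
        linarith
      · have h5 := main x (mem_closedBall_self (by positivity))
        have : 0 < L^(m+1) := by positivity
        nlinarith
  have P' : ∀ m : ℕ, ∃ c > (0:ℝ), m ≤ k → ∀ x, Λ ≤ phj n k V x →
      (∀ y ∈ closedBall x (1 / phj n k V x), |V y - V x| < c) →
      (1 ≤ m → gj n V m x ≤ (1/((k:ℝ)+1))^k * phj n k V x ^ m) := by
    intro m
    by_cases hm : m ≤ k
    · obtain ⟨c, hc, h⟩ := P m hm ((1/((k:ℝ)+1))^k) (by positivity)
      exact ⟨c, hc, fun _ x hx h' => (h x hx h').2⟩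
    · exact ⟨1, one_pos, fun h => absurd h hm⟩
  choose c hc hP' using P'
  have hne : (Finset.range (k+1)).Nonempty := ⟨0, by simp⟩
  refine ⟨(Finset.range (k+1)).inf' hne c, ?_, Λ, hΛ, fun x hx => ?_⟩
  · simp only [gt_iff_lt, Finset.lt_inf'_iff]
    exact fun i _ => hc i
  · by_contra hcon
    push Not at hcon
    have hL1 : 1 ≤ phj n k V x := hΛ.trans hx
    have b : ∀ m, 1 ≤ m → m ≤ k → gj n V m x ≤ (1/((k:ℝ)+1) * phj n k V x) ^ m := by
      intro m h1 hm
      refine (hP' m hm x hx (fun y hy => (hcon y hy).trans_le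
        (Finset.inf'_le _ (by simp; omega))) h1).trans ?_
      rw [mul_pow]
      gcongr ?_ * _
      apply pow_le_pow_of_le_one (by positivity) _ hm
      rw [div_le_one (by positivity)]
      have : (0:ℝ) ≤ k := by positivity
      linarith
    have := phj_le n k V x _ (by positivity) b
    have h5 : (k:ℝ) * (1/((k:ℝ)+1) * phj n k V x) < phj n k V x := by
      rw [show (k:ℝ) * (1/((k:ℝ)+1) * phj n k V x) = (k / (k+1)) * phj n k V x by ring]
      have : (k:ℝ) / (k+1) < 1 := by rw [div_lt_one (by positivity)]; linarith
      nlinarith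
    linarith

/-- Partial derivatives along a list of coordinate directions. -/
def pdl (n : ℕ) : List (Fin n) → (En n → ℝ) → En n → ℝ
  | [], f => f
  | i :: l, f => pd1 n i (pdl n l f)

/-- The list of directions attached to a multi-index. -/
def idxL (n : ℕ) (α : Fin n → ℕ) : List (Fin n) :=
  (List.ofFn fun i => List.replicate (α i) i).flatten

theorem pdl_eq_prod (n : ℕ) (l : List (Fin n)) (f : En n → ℝ) :
    pdl n l f = ((l.map (pd1 n)).prod : Function.End (En n → ℝ)) f := by
  induction l with
  | nil => rfl
  | cons i l ih => 
    rw [List.map_cons, List.prod_cons, pdl, ih]; rfl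

theorem pdm_eq_pdl (n : ℕ) (α : Fin n → ℕ) (f : En n → ℝ) :
    pdm n α f = pdl n (idxL n α) f := by
  rw [pdl_eq_prod, idxL, List.map_flatten, List.prod_flatten, List.map_ofFn, List.map_ofFn]
  unfold pdm
  refine congrArg (fun l : List (Function.End (En n → ℝ)) => l.prod f) ?_
  refine congrArg List.ofFn ?_
  funext i
  change _ = (List.map (pd1 n) (List.replicate (α i) i)).prod
  rw [List.map_replicate, List.prod_replicate]

theorem idxL_length (n : ℕ) (α : Fin n → ℕ) : (idxL n α).length = mdeg α := by
  simp [idxL, mdeg, List.length_flatten, List.map_ofFn, List.sum_ofFn]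

theorem idxL_count (n : ℕ) (α : Fin n → ℕ) (i : Fin n) : (idxL n α).count i = α i := by
  rw [idxL, List.count_flatten, List.map_ofFn, List.sum_ofFn]
  simp [List.count_replicate]

theorem pd1_smooth (n : ℕ) (f : En n → ℝ) (hf : ContDiff ℝ (⊤ : ℕ∞) f) (i : Fin n) :
    ContDiff ℝ (⊤ : ℕ∞) (pd1 n i f) := by
  have h1 : ContDiff ℝ (⊤ : ℕ∞) (fderiv ℝ f) := hf.fderiv_right (by simp)
  exact h1.clm_apply contDiff_const

theorem pdl_smooth (n : ℕ) (f : En n → ℝ) (hf : ContDiff ℝ (⊤ : ℕ∞) f) (l : List (Fin n)) :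
    ContDiff ℝ (⊤ : ℕ∞) (pdl n l f) := by
  induction l with
  | nil => exact hf
  | cons i l ih => exact pd1_smooth n _ ih i

theorem pd1_pd1 (n : ℕ) (f : En n → ℝ) (hf : ContDiff ℝ (⊤ : ℕ∞) f) (i j : Fin n) (x : En n) :
    pd1 n i (pd1 n j f) x
      = fderiv ℝ (fderiv ℝ f) x (EuclideanSpace.single i 1) (EuclideanSpace.single j 1) := by
  have h1 : ContDiff ℝ (⊤ : ℕ∞) (fderiv ℝ f) := hf.fderiv_right (by simp)
  have h2 : DifferentiableAt ℝ (fderiv ℝ f) x := h1.differentiable (by simp) x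
  change fderiv ℝ (fun y => fderiv ℝ f y (EuclideanSpace.single j 1)) x _ = _
  rw [fderiv_clm_apply h2 (by fun_prop)]
  simp

theorem hess_symm (n : ℕ) (f : En n → ℝ) (hf : ContDiff ℝ (⊤ : ℕ∞) f) (x v w : En n) :
    fderiv ℝ (fderiv ℝ f) x v w = fderiv ℝ (fderiv ℝ f) x w v := by
  have := hf.contDiffAt (x := x) |>.isSymmSndFDerivAt (by
    rw [minSmoothness_of_isRCLikeNormedField]; exact WithTop.coe_le_coe.2 le_top)
  exact this v w

theorem pd1_comm (n : ℕ) (f : En n → ℝ) (hf : ContDiff ℝ (⊤ : ℕ∞) f) (i j : Fin n) :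
    pd1 n i (pd1 n j f) = pd1 n j (pd1 n i f) := by
  funext x
  rw [pd1_pd1 n f hf, pd1_pd1 n f hf, hess_symm n f hf]

theorem pdl_perm (n : ℕ) (f : En n → ℝ) (hf : ContDiff ℝ (⊤ : ℕ∞) f) (l l' : List (Fin n))
    (h : l.Perm l') : pdl n l f = pdl n l' f := by
  induction h with
  | nil => rfl
  | cons i _ ih => rw [pdl, pdl, ih]
  | swap i j l => 
    change pd1 n j (pd1 n i _) = pd1 n i (pd1 n j _)
    exact pd1_comm n _ (pdl_smooth n f hf l) _ _
  | trans _ _ h1 h2 => rw [h1, h2]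

theorem pdl_apply (n : ℕ) (f : En n → ℝ) (hf : ContDiff ℝ (⊤ : ℕ∞) f) (l : List (Fin n)) (x : En n) :
    pdl n l f x = iteratedFDeriv ℝ l.length f x
      (fun j => EuclideanSpace.single (l.get j) 1) := by
  induction l generalizing x with
  | nil => simp [pdl]
  | cons i l ih =>
    have e : pdl n l f = fun y => iteratedFDeriv ℝ l.length f y
      (fun j => EuclideanSpace.single (l.get j) 1) := funext ih
    rw [pdl, e]
    change _ = iteratedFDeriv ℝ (l.length+1) f x _
    rw [iteratedFDeriv_succ_apply_left]
    change fderiv ℝ _ x _ = _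
    rw [fderiv_continuousMultilinear_apply_const_apply (itd_differentiable n f hf _ x)]
    rfl

theorem abs_pdm_le (n : ℕ) (f : En n → ℝ) (hf : ContDiff ℝ (⊤ : ℕ∞) f) (α : Fin n → ℕ) (x : En n) :
    |pdm n α f x| ≤ gj n f (mdeg α) x := by
  rw [pdm_eq_pdl, pdl_apply n f hf, ← Real.norm_eq_abs, ← idxL_length, gj]
  refine (ContinuousMultilinearMap.le_opNorm _ _).trans ?_
  simp

/-- multi-index counting the values of a word. -/
def cnt (n m : ℕ) (v : Fin m → Fin n) : Fin n → ℕ := fun i => (List.ofFn v).count i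

theorem perm_cnt (n m : ℕ) (v : Fin m → Fin n) : (List.ofFn v).Perm (idxL n (cnt n m v)) := by
  rw [List.perm_iff_count]
  intro i
  rw [idxL_count]; rfl

theorem mdeg_cnt (n m : ℕ) (v : Fin m → Fin n) : mdeg (cnt n m v) = m := by
  rw [← idxL_length, ← (perm_cnt n m v).length_eq]; simp

theorem itd_basis (n : ℕ) (f : En n → ℝ) (hf : ContDiff ℝ (⊤ : ℕ∞) f) (m : ℕ) (x : En n)
    (v : Fin m → Fin n) :
    iteratedFDeriv ℝ m f x (fun j => EuclideanSpace.single (v j) 1) = pdm n (cnt n m v) f x := by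
  rw [pdm_eq_pdl, ← pdl_perm n f hf _ _ (perm_cnt n m v), pdl_apply n f hf]
  have : ∀ (p : ℕ) (hp : p = m), iteratedFDeriv ℝ m f x (fun j => EuclideanSpace.single (v j) 1)
     = iteratedFDeriv ℝ p f x (fun j => EuclideanSpace.single (v (Fin.cast hp j)) 1) := by
    rintro p rfl; rfl
  rw [this (List.ofFn v).length (by simp)]
  congr 1
  funext j
  simp only [List.get_ofFn]

theorem gj_le_sum (n : ℕ) (f : En n → ℝ) (hf : ContDiff ℝ (⊤ : ℕ∞) f) (m : ℕ) (x : En n) :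
    gj n f m x ≤ ∑ v : Fin m → Fin n, |pdm n (cnt n m v) f x| := by
  refine ContinuousMultilinearMap.opNorm_le_bound (Finset.sum_nonneg fun _ _ => abs_nonneg _) ?_
  intro w
  have e : w = fun j => ∑ i : Fin n, w j i • (EuclideanSpace.single i (1:ℝ) : En n) := by
    funext j
    ext a
    simp [Finset.sum_apply, Pi.single_apply]
  have h1 : iteratedFDeriv ℝ m f x w = ∑ v : Fin m → Fin n, (∏ j, w j (v j)) * pdm n (cnt n m v) f x := by
    conv_lhs => rw [e]
    rw [ContinuousMultilinearMap.map_sum]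
    refine Finset.sum_congr rfl fun v _ => ?_
    rw [ContinuousMultilinearMap.map_smul_univ, itd_basis n f hf, smul_eq_mul]
  rw [h1, Finset.sum_mul]
  refine (norm_sum_le _ _).trans (Finset.sum_le_sum fun v _ => ?_)
  rw [norm_mul, mul_comm, norm_prod, Real.norm_eq_abs (pdm _ _ _ _)]
  gcongr with j
  exact PiLp.norm_apply_le _ _

theorem mem_midx (n k lo : ℕ) (α : Fin n → ℕ) : α ∈ midx n k lo ↔ lo ≤ mdeg α ∧ mdeg α ≤ k := by
  simp only [midx, Finset.mem_filter, Finset.mem_Iic, and_iff_right_iff_imp]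
  intro h i
  exact (Finset.single_le_sum (f := α) (fun _ _ => Nat.zero_le _) (Finset.mem_univ i)).trans h.2

theorem ftil_nonneg (n k : ℕ) (V : En n → ℝ) (x : En n) : 0 ≤ ftil n k V x :=
  Finset.sum_nonneg fun _ _ => by positivity

theorem pdm_rpow_le (n k : ℕ) (V : En n → ℝ) (hV : ContDiff ℝ (⊤ : ℕ∞) V) (x : En n)
    (α : Fin n → ℕ) (h1 : 1 ≤ mdeg α) (h2 : mdeg α ≤ k) (s : ℝ) (hs : 0 ≤ s) :
    |pdm n α V x| ^ (s / (mdeg α)) ≤ phj n k V x ^ s := by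
  have h := (abs_pdm_le n V hV α x).trans (gj_le_phj n k V x _ h1 h2)
  have hm : (0:ℝ) < mdeg α := by exact_mod_cast h1
  calc |pdm n α V x| ^ (s / (mdeg α)) ≤ (phj n k V x ^ (mdeg α)) ^ (s / (mdeg α)) := by
        gcongr
    _ = phj n k V x ^ s := by
        rw [← Real.rpow_natCast, ← Real.rpow_mul (phj_nonneg _ _ _ _)]
        congr 1; field_simp

theorem ftil_le (n k : ℕ) (V : En n → ℝ) (hV : ContDiff ℝ (⊤ : ℕ∞) V) (x : En n) :
    ftil n k V x ≤ (midx n k 1).card * phj n k V x := by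
  unfold ftil
  rw [← nsmul_eq_mul]
  refine Finset.sum_le_card_nsmul _ _ _ fun α hα => ?_
  rw [mem_midx] at hα
  have := pdm_rpow_le n k V hV x α hα.1 hα.2 1 (by norm_num)
  simpa using this

theorem ftilTau_le (n k : ℕ) (V : En n → ℝ) (hV : ContDiff ℝ (⊤ : ℕ∞) V) (τ : ℝ) (hτ : 0 < τ) (x : En n) :
    ftilTau n k V τ x ≤ (∑ α ∈ midx n k 1, τ ^ ((1 : ℝ) / (mdeg α))) * phj n k V x := by
  unfold ftilTau
  rw [Finset.sum_mul]
  refine Finset.sum_le_sum fun α hα => ?_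
  rw [mem_midx] at hα
  have := pdm_rpow_le n k V hV x α hα.1 hα.2 1 (by norm_num)
  gcongr
  simpa using this

theorem phj_le_ftil (n k : ℕ) (V : En n → ℝ) (hV : ContDiff ℝ (⊤ : ℕ∞) V) :
    ∃ C > (0:ℝ), ∀ x, phj n k V x ≤ C * ftil n k V x := by
  set N : ℝ := 1 + (n:ℝ)^k with hN
  refine ⟨k * N + 1, by positivity, fun x => ?_⟩
  have hF := ftil_nonneg n k V x
  have : phj n k V x ≤ k * (N * ftil n k V x) := by
    refine phj_le n k V x _ (by positivity) fun m hm1 hm2 => ?_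
    refine (gj_le_sum n V hV m x).trans ?_
    have hb : ∀ v : Fin m → Fin n, |pdm n (cnt n m v) V x| ≤ ftil n k V x ^ m := by
      intro v
      have h1 : |pdm n (cnt n m v) V x| ^ ((1:ℝ)/m) ≤ ftil n k V x := by
        have := Finset.single_le_sum (f := fun α => |pdm n α V x| ^ ((1 : ℝ) / (mdeg α)))
          (fun _ _ => by positivity) (a := cnt n m v) (s := midx n k 1)
          ((mem_midx _ _ _ _).2 (by rw [mdeg_cnt]; exact ⟨hm1, hm2⟩))
        simpa only [mdeg_cnt, ftil] using this
      calc |pdm n (cnt n m v) V x| = (|pdm n (cnt n m v) V x| ^ ((1:ℝ)/m)) ^ m := by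
            rw [one_div, Real.rpow_inv_natCast_pow (abs_nonneg _) (by omega)]
        _ ≤ _ := by gcongr
    refine (Finset.sum_le_card_nsmul _ _ _ fun v _ => hb v).trans ?_
    rw [nsmul_eq_mul, mul_pow]
    gcongr
    have hc : (Finset.univ : Finset (Fin m → Fin n)).card = n^m := by simp
    rw [hc]
    rcases Nat.eq_zero_or_pos n with h | h
    · subst h
      rw [zero_pow (by omega)]; push_cast; positivity
    · have : (1:ℝ) ≤ n := by exact_mod_cast h
      have h1 : ((n^m : ℕ):ℝ) ≤ (n:ℝ)^k := by push_cast; gcongr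
      have h2 : 1 ≤ N := by rw [hN]; have : 0 ≤ (n:ℝ)^k := by positivity
                            linarith
      calc ((n^m : ℕ):ℝ) ≤ N := by linarith
        _ = N^1 := by ring
        _ ≤ N^m := by gcongr
  nlinarith

theorem condII_of (n k : ℕ) (V : En n → ℝ) (hV : ContDiff ℝ (⊤ : ℕ∞) V)
    (h : ∃ δ₂ ∈ Set.Ioo (0 : ℝ) 1, ∀ α : Fin n → ℕ, mdeg α = k + 1 →
      ∃ Cα > (0 : ℝ), ∀ x : En n,
        |pdm n α V x| ≤ Cα * (1 + ftil n k V x) ^ ((k : ℝ) + 1 - δ₂)) : CondII n k V := by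
  obtain ⟨δ, hδ, h⟩ := h
  choose! C hC h using h
  set N : ℝ := 1 + (midx n k 1).card with hN
  have hs : 0 ≤ (k:ℝ) + 1 - δ := by have := hδ.2; have : (0:ℝ) ≤ k := by positivity
                                    linarith
  set S : ℝ := ∑ v : Fin (k+1) → Fin n, C (cnt n (k+1) v)
  have hS : 0 ≤ S := Finset.sum_nonneg fun v _ => (hC _ (mdeg_cnt _ _ _)).le
  refine ⟨(S + 1) * N ^ ((k:ℝ)+1-δ), by positivity, δ, hδ, fun x => ?_⟩
  have hp := phj_nonneg n k V x
  have hf := ftil_nonneg n k V x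
  have h1 : (1 + ftil n k V x) ^ ((k : ℝ) + 1 - δ) ≤ N ^ ((k:ℝ)+1-δ) * (1 + phj n k V x) ^ ((k : ℝ) + 1 - δ) := by
    rw [← Real.mul_rpow (by positivity) (by positivity)]
    gcongr
    have := ftil_le n k V hV x
    have : (0:ℝ) ≤ (midx n k 1).card := by positivity
    rw [hN]; nlinarith
  calc gj n V (k+1) x ≤ ∑ v : Fin (k+1) → Fin n, |pdm n (cnt n (k+1) v) V x| := gj_le_sum n V hV _ x
    _ ≤ ∑ v : Fin (k+1) → Fin n, C (cnt n (k+1) v) * (1 + ftil n k V x) ^ ((k : ℝ) + 1 - δ) :=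
        Finset.sum_le_sum fun v _ => h _ (mdeg_cnt _ _ _) x
    _ = S * (1 + ftil n k V x) ^ ((k : ℝ) + 1 - δ) := by rw [Finset.sum_mul]
    _ ≤ (S + 1) * (N ^ ((k:ℝ)+1-δ) * (1 + phj n k V x) ^ ((k : ℝ) + 1 - δ)) := by
        gcongr; linarith
    _ = _ := by ring

/-- Usable form of condition (i). -/
def CondI (n k : ℕ) (V : En n → ℝ) : Prop :=
  ∃ C > (0:ℝ), ∃ δ ∈ Set.Ioo (0:ℝ) 1, ∀ x : En n, ∀ a b : ℝ, 0 ≤ b → ∀ v : En n, ‖v‖ = 1 →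
    a ≤ fderiv ℝ (fderiv ℝ V) x v v →
    (∀ w : En n, -b * ‖w‖^2 ≤ fderiv ℝ (fderiv ℝ V) x w w) →
    a ≤ C * (b + ‖fderiv ℝ V x‖^2 + phj n k V x ^ (2-δ) + 1)

theorem condI_of (n k : ℕ) (V : En n → ℝ) (hV : ContDiff ℝ (⊤ : ℕ∞) V)
    (h : ∃ C₀ > (1 : ℝ), ∃ δ₁ ∈ Set.Ioo (0 : ℝ) 1, ∀ x : En n,
      lamPos n V x ≤ C₀ * (lamNeg n V x + ‖gradient V x‖ ^ 2
        + (∑ α ∈ midx n k 2, |pdm n α V x| ^ ((2 - δ₁) / (mdeg α))) + 1)) : CondI n k V := by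
  obtain ⟨C₀, hC₀, δ, hδ, h⟩ := h
  set N : ℝ := 1 + n + (midx n k 2).card with hN
  refine ⟨C₀ * N, by positivity, δ, hδ, fun x a b hb v hv hav hw => ?_⟩
  have hsym : (hessM n V x).IsHermitian := by
    refine Matrix.IsHermitian.ext fun i j => ?_
    simp only [hessM, star_trivial]
    rw [pd1_pd1 n V hV, pd1_pd1 n V hV, hess_symm n V hV]
  have hE : hessEig n V x = hsym.eigenvalues := by unfold hessEig; rw [dif_pos hsym]
  have hx := h x
  set B := fderiv ℝ (fderiv ℝ V) x with hB
  have hvec : ∀ v : En n, v = ∑ i : Fin n, v i • (EuclideanSpace.single i (1:ℝ) : En n) := by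
    intro v
    ext a
    simp [Finset.sum_apply, Pi.single_apply]
  have hquad : ∀ v w : En n, B v w = inner ℝ v (WithLp.toLp 2 ((hessM n V x).mulVec w.ofLp)) := by
    intro v w
    conv_lhs => rw [hvec v, hvec w]
    simp only [map_sum, map_smul, _root_.sum_apply, _root_.smul_apply,
      PiLp.inner_apply, Matrix.mulVec, dotProduct, hessM, pd1_pd1 n V hV,
      smul_eq_mul, RCLike.inner_apply, conj_trivial, Finset.sum_mul]
    simp only [← hB]
    rw [Finset.sum_comm]
    refine Finset.sum_congr rfl fun i _ => ?_
    rw [Finset.mul_sum]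
    exact Finset.sum_congr rfl fun j _ => by ring
  set e := hsym.eigenvectorBasis
  have hBe : ∀ i w, B w (e i) = hsym.eigenvalues i * inner ℝ w (e i) := by
    intro i w
    rw [hquad, hsym.mulVec_eigenvectorBasis, WithLp.toLp_smul, inner_smul_right]
  have hBv : B v v = ∑ i, hsym.eigenvalues i * (inner ℝ v (e i))^2 := by
    conv_lhs => rw [← e.sum_repr v]
    conv_lhs => enter [2]; rw [← e.sum_repr v]
    rw [e.sum_repr v]
    rw [map_sum]
    refine Finset.sum_congr rfl fun i _ => ?_
    rw [map_smul, hBe, e.repr_apply_apply, smul_eq_mul, real_inner_comm]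
    ring
  have hle1 : ∀ i, (inner ℝ v (e i))^2 ≤ 1 := by
    intro i
    have := abs_real_inner_le_norm v (e i)
    rw [hv, e.norm_eq_one] at this
    rw [← sq_abs]
    have h0 := abs_nonneg (inner ℝ v (e i))
    nlinarith
  have hpos : a ≤ lamPos n V x := by
    refine hav.trans ?_
    rw [hBv, lamPos, hE]
    refine Finset.sum_le_sum fun i _ => ?_
    have h1 := hle1 i
    have h2 := sq_nonneg (inner ℝ v (e i))
    have h3 := le_max_left (hsym.eigenvalues i) 0
    have h4 := le_max_right (hsym.eigenvalues i) 0
    nlinarith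
  have hneg : lamNeg n V x ≤ n * b := by
    rw [lamNeg, hE]
    calc _ ≤ ∑ i : Fin n, b := by
            refine Finset.sum_le_sum fun i _ => max_le ?_ hb
            have := hw (e i)
            rw [hBe, real_inner_self_eq_norm_sq, e.norm_eq_one] at this
            linarith
      _ = n * b := by simp
  have hgr : ‖gradient V x‖ = ‖fderiv ℝ V x‖ := by simp [gradient]
  have hp := phj_nonneg n k V x
  have hsum : (∑ α ∈ midx n k 2, |pdm n α V x| ^ ((2 - δ) / (mdeg α))) ≤ (midx n k 2).card * phj n k V x ^ (2-δ) := by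
    rw [← nsmul_eq_mul]
    refine Finset.sum_le_card_nsmul _ _ _ fun α hα => ?_
    rw [mem_midx] at hα
    exact pdm_rpow_le n k V hV x α (by omega) hα.2 _ (by have := hδ.2; linarith)
  have hq : 0 ≤ phj n k V x ^ (2-δ) := by positivity
  rw [hgr] at hx
  refine hpos.trans (hx.trans ?_)
  rw [mul_assoc]
  gcongr
  have c0 : (0:ℝ) ≤ (midx n k 2).card := Nat.cast_nonneg _
  have n0 : (0:ℝ) ≤ n := by positivity
  have g0 : 0 ≤ ‖fderiv ℝ V x‖^2 := by positivity
  rw [hN]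
  have t1 : 0 ≤ (n:ℝ) * (‖fderiv ℝ V x‖^2 + phj n k V x ^ (2-δ) + 1) := by positivity
  have t2 : 0 ≤ ((midx n k 2).card:ℝ) * (b + ‖fderiv ℝ V x‖^2 + 1) :=
    mul_nonneg c0 (by positivity)
  nlinarith

theorem second_test (φ φ1 : ℝ → ℝ) (a : ℝ) (h1 : ∀ t, HasDerivAt φ (φ1 t) t)
    (h2 : HasDerivAt φ1 a 0) (hm : IsLocalMin φ 0) : φ1 0 = 0 ∧ 0 ≤ a := by
  have e0 : φ1 0 = 0 := hm.hasDerivAt_eq_zero (h1 0)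
  refine ⟨e0, ?_⟩
  by_contra hneg
  push Not at hneg
  have hd : deriv φ = φ1 := funext fun t => (h1 t).deriv
  have hmax : IsLocalMax φ 0 := by
    apply isLocalMax_of_deriv_deriv_neg
    · rw [hd, h2.deriv]; exact hneg
    · rw [hd, e0]
    · exact (h1 0).continuousAt
  have hc : φ =ᶠ[𝓝 0] fun _ => φ 0 := by
    filter_upwards [hm, hmax] with t ht1 ht2
    exact le_antisymm ht2 ht1
  have hc2 := hc.deriv.deriv.eq_of_nhds
  rw [hd, h2.deriv] at hc2
  simp at hc2
  linarith

theorem line_deriv1 (n : ℕ) (V : En n → ℝ) (hV : ContDiff ℝ (⊤ : ℕ∞) V) (z v : En n) (t : ℝ) :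
    HasDerivAt (fun t : ℝ => V (z + t • v)) (fderiv ℝ V (z + t • v) v) t := by
  have h1 : HasDerivAt (fun t : ℝ => z + t • v) v t := by
    simpa using ((hasDerivAt_id t).smul_const v).const_add z
  exact (hV.differentiable (by simp) _).hasFDerivAt.comp_hasDerivAt t h1

theorem line_deriv2 (n : ℕ) (V : En n → ℝ) (hV : ContDiff ℝ (⊤ : ℕ∞) V) (z v : En n) :
    HasDerivAt (fun t : ℝ => fderiv ℝ V (z + t • v) v) (fderiv ℝ (fderiv ℝ V) z v v) 0 := by
  have h1 : HasDerivAt (fun t : ℝ => z + t • v) v 0 := by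
    simpa using ((hasDerivAt_id (0:ℝ)).smul_const v).const_add z
  have h0 : ContDiff ℝ (⊤ : ℕ∞) (fderiv ℝ V) := hV.fderiv_right (by simp)
  have h2 : HasFDerivAt (fderiv ℝ V) (fderiv ℝ (fderiv ℝ V) z) (z + (0:ℝ) • v) := by
    simpa using (h0.differentiable (by simp) z).hasFDerivAt
  have h3 := h2.comp_hasDerivAt (0:ℝ) h1
  have h4 := h3.clm_apply (hasDerivAt_const (0:ℝ) v)
  simpa using h4

theorem barrier_test (n : ℕ) (V : En n → ℝ) (hV : ContDiff ℝ (⊤ : ℕ∞) V) (z y0 : En n) (β ε : ℝ)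
    (hm : IsLocalMin (fun y => V y - ε * Real.exp (-β * ‖y - y0‖^2)) z) (v : En n) :
    fderiv ℝ V z v = -2 * β * inner ℝ (z - y0) v * (ε * Real.exp (-β * ‖z - y0‖^2)) ∧
    (4 * β^2 * (inner ℝ (z - y0) v)^2 - 2 * β * ‖v‖^2) * (ε * Real.exp (-β * ‖z - y0‖^2))
      ≤ fderiv ℝ (fderiv ℝ V) z v v := by
  set d := z - y0 with hd
  set p : ℝ := inner ℝ d v with hp
  set q : ℝ → ℝ := fun t => ‖d‖^2 + 2 * t * p + t^2 * ‖v‖^2 with hq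
  have hqe : ∀ t : ℝ, ‖z + t • v - y0‖^2 = q t := by
    intro t
    have : z + t • v - y0 = d + t • v := by rw [hd]; abel
    rw [this, norm_add_sq_real, inner_smul_right, norm_smul, mul_pow, Real.norm_eq_abs, sq_abs]
    simp only [hq, hp]; ring
  have hqd : ∀ t, HasDerivAt q (2 * p + 2 * t * ‖v‖^2) t := by
    intro t
    have h1 : HasDerivAt (fun t : ℝ => 2 * t * p) (2 * p) t := by
      simpa using ((hasDerivAt_id t).const_mul 2).mul_const p
    have h2 : HasDerivAt (fun t : ℝ => t^2 * ‖v‖^2) (2 * t * ‖v‖^2) t := by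
      simpa using (hasDerivAt_pow 2 t).mul_const (‖v‖^2)
    exact (h1.const_add (‖d‖^2)).add h2
  set ψ : ℝ → ℝ := fun t => ε * Real.exp (-β * q t) with hψ
  have hψd : ∀ t, HasDerivAt ψ (-β * (2 * p + 2 * t * ‖v‖^2) * ψ t) t := by
    intro t
    have := (((hqd t).const_mul (-β)).exp).const_mul ε
    exact this.congr_deriv (by simp only [hψ]; ring)
  have hψ2 : HasDerivAt (fun t => -β * (2 * p + 2 * t * ‖v‖^2) * ψ t)
      ((4 * β^2 * p^2 - 2 * β * ‖v‖^2) * ψ 0) 0 := by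
    have h1 : HasDerivAt (fun t : ℝ => -β * (2 * p + 2 * t * ‖v‖^2)) (-β * (2 * ‖v‖^2)) 0 := by
      have : HasDerivAt (fun t : ℝ => 2 * t * ‖v‖^2) (2 * ‖v‖^2) 0 := by
        simpa using ((hasDerivAt_id (0:ℝ)).const_mul 2).mul_const (‖v‖^2)
      exact (this.const_add (2 * p)).const_mul (-β)
    exact (h1.mul (hψd 0)).congr_deriv (by ring)
  have hψ0 : ψ 0 = ε * Real.exp (-β * ‖d‖^2) := by simp [hψ, hq]
  have hmin : IsLocalMin (fun t : ℝ => V (z + t • v) - ψ t) 0 := by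
    have hcont : ContinuousAt (fun t : ℝ => z + t • v) 0 := by fun_prop
    have hcont' : Tendsto (fun t : ℝ => z + t • v) (𝓝 0) (𝓝 z) := by
      simpa [ContinuousAt] using hcont
    have h := hcont'.eventually hm
    filter_upwards [h] with t ht
    have e1 : V z - ε * Real.exp (-β * ‖z - y0‖^2) = V (z + (0:ℝ) • v) - ψ 0 := by
      rw [hψ0, zero_smul, add_zero]
    have e2 : V (z + t • v) - ε * Real.exp (-β * ‖z + t • v - y0‖^2) = V (z + t • v) - ψ t := by
      rw [hqe]
    rw [e1, e2] at ht
    exact ht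
  have key := second_test _ (fun t => fderiv ℝ V (z + t • v) v - -β * (2 * p + 2 * t * ‖v‖^2) * ψ t) _
    (fun t => (line_deriv1 n V hV z v t).sub (hψd t)) ((line_deriv2 n V hV z v).sub hψ2) hmin
  obtain ⟨k1, k2⟩ := key
  simp only [zero_smul, add_zero, hψ0] at k1 k2
  constructor <;> linarith

theorem gj_one (n : ℕ) (V : En n → ℝ) (x : En n) : gj n V 1 x = ‖fderiv ℝ V x‖ := by
  rw [gj, norm_iteratedFDeriv_one]

theorem lip_of_gj (n : ℕ) (V : En n → ℝ) (hV : ContDiff ℝ (⊤ : ℕ∞) V) (x : En n) (r M : ℝ)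
    (h : ∀ y ∈ closedBall x r, gj n V 1 y ≤ M) (y z : En n) (hy : y ∈ closedBall x r)
    (hz : z ∈ closedBall x r) : |V y - V z| ≤ M * dist y z := by
  have := (convex_closedBall x r).norm_image_sub_le_of_norm_fderiv_le (𝕜 := ℝ) (f := V) (C := M)
    (fun w _ => hV.differentiable (by simp) w) (fun w hw => by rw [← gj_one]; exact h w hw) hz hy
  rwa [dist_eq_norm]

set_option maxHeartbeats 4000000 in
theorem descent_step (n k : ℕ) (hk : 1 ≤ k) (V : En n → ℝ) (hV : ContDiff ℝ (⊤ : ℕ∞) V)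
    (hI : CondI n k V) (hII : CondII n k V) :
    ∃ c > (0:ℝ), ∃ Λ ≥ (1:ℝ), ∀ x, Λ ≤ phj n k V x →
      ∃ y ∈ closedBall x (3 / phj n k V x), V y ≤ V x - c := by
  obtain ⟨c1, hc1, Λ1, hΛ1, hosc⟩ := osc_lemma n k hk V hV hII
  obtain ⟨C, hC, δ, hδ, hI⟩ := hI
  obtain ⟨Λ2, hΛ2, hup⟩ := jet_up n k hk V hV hII 4 (by norm_num) 1 one_pos
  set A : ℝ := (k+1)*4^k with hA
  set A' : ℝ := (k*(k+1)+1)*4^k with hA'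
  have hApos : 0 < A := by positivity
  have hA'1 : 1 ≤ A' := by
    rw [hA']
    have h1 : (1:ℝ) ≤ 4^k := one_le_pow₀ (by norm_num)
    have h2 : (1:ℝ) ≤ k*(k+1)+1 := by have : (0:ℝ) ≤ k*(k+1) := by positivity
                                      linarith
    nlinarith
  set r0 : ℝ := min 1 (c1/(2*A)) with hr0
  have hr0p : 0 < r0 := by rw [hr0]; positivity
  have hr01 : r0 ≤ 1 := min_le_left _ _
  have hr0c : A * r0 ≤ c1/2 := by
    calc A * r0 ≤ A * (c1/(2*A)) := by gcongr; exact min_le_right _ _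
      _ = c1/2 := by field_simp
  set α : ℝ := (2+C)/r0^2 with hα
  have hαp : 0 < α := by positivity
  have hαr : α * r0^2 = 2 + C := by rw [hα]; field_simp
  set ε : ℝ := min (c1/2) (1/(16*C*α)) with hε
  have hεp : 0 < ε := by rw [hε]; positivity
  have hε1 : ε ≤ c1/2 := min_le_left _ _
  have hε2 : 16 * C * α * ε ≤ 1 := by
    calc 16 * C * α * ε ≤ 16 * C * α * (1/(16*C*α)) := by gcongr; exact min_le_right _ _
      _ = 1 := by field_simp
  have hexp : Real.exp (-(4*α)) < Real.exp (-α) := Real.exp_lt_exp.2 (by linarith)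
  have hexp1 : Real.exp (-α) < 1 := by rw [Real.exp_lt_one_iff]; linarith
  have hexp4 : 0 < Real.exp (-(4*α)) := Real.exp_pos _
  set c : ℝ := ε * (Real.exp (-α) - Real.exp (-(4*α))) / 2 with hc
  have hcp : 0 < c := by rw [hc]; have := sub_pos.2 hexp; positivity
  have hcc1 : c < c1 := by rw [hc]; nlinarith only [hεp, hε1, hexp, hexp1, hexp4]
  obtain ⟨Λ3, hΛ3, hbig⟩ := rpow_large δ hδ.1 (2*C*A'^2/(5*α*ε*Real.exp (-(4*α))) + 1)
  refine ⟨c, hcp, max Λ1 (max Λ2 Λ3), le_max_of_le_left hΛ1, fun x hx => ?_⟩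
  set L := phj n k V x with hL
  have hx1 : Λ1 ≤ L := (le_max_left _ _).trans hx
  have hx2 : Λ2 ≤ L := ((le_max_left _ _).trans (le_max_right _ _)).trans hx
  have hx3 : Λ3 ≤ L := ((le_max_right _ _).trans (le_max_right _ _)).trans hx
  have hL1 : 1 ≤ L := hΛ1.le.trans hx1
  have hLp : 0 < L := by linarith
  by_contra hno
  push Not at hno
  have hup := hup x hx2
  obtain ⟨y0, hy0, hy0c⟩ := hosc x hx1
  have hy0x : dist y0 x ≤ 1/L := hy0
  have hV0 : V x + c1 ≤ V y0 := by
    have h1 := hno y0 (closedBall_subset_closedBall (by gcongr; norm_num) hy0)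
    rcases le_abs.1 hy0c with h | h <;> linarith
  have hinner : ∀ y ∈ closedBall y0 (r0/L), V x + c1/2 ≤ V y := by
    intro y hy
    have hyd : dist y y0 ≤ r0/L := hy
    have hr : r0 / L ≤ 1/L := by gcongr
    have h14 : 1/L ≤ 4/L := by gcongr; norm_num
    have h4 : 4/L = 1/L + 1/L + 1/L + 1/L := by ring
    have hp : 0 < 1/L := by positivity
    have hy4 : y ∈ closedBall x (4/L) := by
      rw [mem_closedBall]; have := dist_triangle y y0 x; linarith
    have := lip_of_gj n V hV x (4/L) (A*L) (fun w hw => by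
      have := (hup w hw).1 1 le_rfl hk; simpa [hA] using this) y0 y
      (by rw [mem_closedBall]; linarith) hy4
    have h5 : A * L * dist y0 y ≤ A * r0 := by
      rw [dist_comm]
      calc A * L * dist y y0 ≤ A * L * (r0/L) := by gcongr
        _ = A * r0 := by field_simp
    have := (le_abs_self _).trans this
    linarith
  set β : ℝ := α * L^2 with hβ
  set F : En n → ℝ := fun y => V y - ε * Real.exp (-β * ‖y - y0‖^2) with hF
  have hFc : Continuous F := by
    have := hV.continuous
    fun_prop
  obtain ⟨z, hz, hzmin⟩ := (isCompact_closedBall y0 (2/L)).exists_isMinOn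
    ⟨y0, mem_closedBall_self (by positivity)⟩ hFc.continuousOn
  have hxK : x ∈ closedBall y0 (2/L) := by
    rw [mem_closedBall, dist_comm]
    refine hy0x.trans ?_
    gcongr; norm_num
  have hβn : ∀ y : En n, ∀ s : ℝ, -β * ‖y - y0‖^2 = -(α * (L * ‖y-y0‖)^2) := by
    intro y s; rw [hβ]; ring
  have hFx : F x ≤ V x - ε * Real.exp (-α) := by
    simp only [hF]
    gcongr
    have h1 : L * ‖x - y0‖ ≤ 1 := by
      rw [← dist_eq_norm, dist_comm]
      calc L * dist y0 x ≤ L * (1/L) := by gcongr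
        _ = 1 := by field_simp
    have h2 : (L * ‖x - y0‖)^2 ≤ 1 := pow_le_one₀ (by positivity) h1
    rw [hβn x 0]; nlinarith only [h2, hαp]
  have hzx : F z ≤ V x - ε * Real.exp (-α) := (hzmin hxK).trans hFx
  have hz3 : z ∈ closedBall x (3/L) := by
    rw [mem_closedBall] at hz ⊢
    have := dist_triangle z y0 x
    have h3 : 3/L = 2/L + 1/L := by ring
    linarith
  have hVz := hno z hz3
  set ρ := ‖z - y0‖ with hρ
  have hρ2 : L * ρ ≤ 2 := by
    rw [mem_closedBall, dist_eq_norm] at hz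
    calc L * ρ ≤ L * (2/L) := by gcongr
      _ = 2 := by field_simp
  have hρ2' : L * ρ < 2 := by
    rcases lt_or_eq_of_le hρ2 with h | h
    · exact h
    · exfalso
      have : F z = V z - ε * Real.exp (-(4*α)) := by
        simp only [hF]; rw [hβn z 0, h]; ring_nf
      rw [this] at hzx
      rw [hc] at hVz
      have : 0 < ε * (Real.exp (-α) - Real.exp (-(4*α))) := mul_pos hεp (sub_pos.2 hexp)
      linarith
  have hρ0 : r0 < L * ρ := by
    by_contra hcon
    push Not at hcon
    have h1 : z ∈ closedBall y0 (r0/L) := by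
      rw [mem_closedBall, dist_eq_norm, le_div_iff₀ hLp]; linarith
    have h2 := hinner z h1
    have h3 : F z ≥ V z - ε * 1 := by
      simp only [hF]
      gcongr
      rw [Real.exp_le_one_iff, hβn z 0]
      have : 0 ≤ α * (L*ρ)^2 := by positivity
      linarith
    have : 0 < ε * Real.exp (-α) := by positivity
    linarith
  have hρp : 0 < ρ := by
    by_contra hcon
    push Not at hcon
    have hz0 : ρ = 0 := le_antisymm hcon (norm_nonneg _)
    rw [hz0, mul_zero] at hρ0
    linarith
  have hloc : IsLocalMin F z := by
    refine hzmin.isLocalMin (mem_of_superset (isOpen_ball.mem_nhds ?_) ball_subset_closedBall)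
    rw [mem_ball, dist_eq_norm, lt_div_iff₀ hLp]; linarith
  have hbar := barrier_test n V hV z y0 β ε hloc
  set W : ℝ := ε * Real.exp (-β * ‖z - y0‖^2) with hW
  have hWp : 0 < W := by positivity
  have hWle : W ≤ ε := by
    rw [hW]
    have : Real.exp (-β * ‖z - y0‖^2) ≤ 1 := by
      rw [Real.exp_le_one_iff, hβn z 0]
      have : 0 ≤ α * (L*ρ)^2 := by positivity
      linarith
    nlinarith only [this, hεp]
  have hWge : ε * Real.exp (-(4*α)) ≤ W := by
    rw [hW]
    gcongr
    rw [hβn z 0]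
    have : (L*ρ)^2 ≤ 2^2 := by gcongr
    nlinarith only [this, hαp]
  have hβp : 0 < β := by positivity
  have hfd : ‖fderiv ℝ V z‖ ≤ 4 * α * L * W := by
    refine ContinuousLinearMap.opNorm_le_bound _ (by positivity) fun v => ?_
    rw [(hbar v).1, Real.norm_eq_abs, abs_mul, abs_mul, abs_mul, abs_of_pos hWp, abs_of_pos hβp]
    have h1 := abs_real_inner_le_norm (z - y0) v
    rw [show |(-2:ℝ)| = 2 by norm_num]
    calc 2 * β * |inner ℝ (z - y0) v| * W ≤ 2 * β * (ρ * ‖v‖) * W := by gcongr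
      _ = 2 * α * L * (L * ρ) * ‖v‖ * W := by rw [hβ]; ring
      _ ≤ 2 * α * L * 2 * ‖v‖ * W := by gcongr
      _ = _ := by ring
  have hhess : ∀ w : En n, -(2 * β * W) * ‖w‖^2 ≤ fderiv ℝ (fderiv ℝ V) z w w := by
    intro w
    refine le_trans ?_ (hbar w).2
    have : 0 ≤ 4 * β^2 * (inner ℝ (z - y0) w)^2 * W := by positivity
    linarith
  have hdir := (hbar (ρ⁻¹ • (z - y0))).2
  have hnv : ‖ρ⁻¹ • (z - y0)‖ = 1 := by
    rw [norm_smul, norm_inv, ← hρ, Real.norm_of_nonneg hρp.le]; field_simp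
  rw [hnv, inner_smul_right, real_inner_self_eq_norm_sq, ← hρ] at hdir
  have hcond := hI z _ (2*β*W) (by positivity) _ hnv hdir hhess
  have e1 : ρ⁻¹ * ρ^2 = ρ := by field_simp
  rw [e1] at hcond
  have hLHS : (4 * α * (α * r0^2) - 2 * α) * L^2 * W ≤ (4 * β^2 * ρ^2 - 2*β*1^2) * W := by
    have : r0^2 ≤ (L*ρ)^2 := by gcongr
    have e : 4 * β^2 * ρ^2 - 2*β*1^2 = (4 * α * (α * (L*ρ)^2) - 2*α) * L^2 := by rw [hβ]; ring
    rw [e]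
    gcongr
  rw [hαr] at hLHS
  have hfsq : ‖fderiv ℝ V z‖^2 ≤ (4 * α * L * W)^2 := by gcongr
  have hphz : phj n k V z ≤ A' * L := (hup z (closedBall_subset_closedBall (by gcongr; norm_num) hz3)).2.2
  have h2δ : 0 ≤ 2 - δ := by linarith [hδ.2]
  have hL2δ : 1 ≤ L^(2-δ) := Real.one_le_rpow hL1 h2δ
  have hpow : phj n k V z ^ (2-δ) + 1 ≤ 2 * A'^2 * L^(2-δ) := by
    have h1 : phj n k V z ^ (2-δ) ≤ A'^(2-δ) * L^(2-δ) := by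
      rw [← Real.mul_rpow (by linarith) (by linarith)]
      have := phj_nonneg n k V z
      gcongr
    have h2 : A'^(2-δ) ≤ A'^2 := by
      rw [← Real.rpow_natCast]
      apply Real.rpow_le_rpow_of_exponent_le hA'1
      push_cast; linarith [hδ.1]
    have h3 : 1 ≤ A'^2 := one_le_pow₀ hA'1
    have h4 : A'^(2-δ) * L^(2-δ) ≤ A'^2 * L^(2-δ) := by gcongr
    have h5 : 1 * 1 ≤ A'^2 * L^(2-δ) := by gcongr
    linarith only [h1, h4, h5]
  have hfin : 5 * α * L^2 * W ≤ C * (2 * A'^2 * L^(2-δ)) := by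
    have h16 : C * (4 * α * L * W)^2 ≤ α * L^2 * W := by
      have : C * (4 * α * L * W)^2 = (16 * C * α * W) * (α * L^2 * W) := by ring
      rw [this]
      have h17 : 16 * C * α * W ≤ 1 := le_trans (by gcongr) hε2
      have : 0 < α * L^2 * W := by positivity
      nlinarith only [h17, this]
    have h18 : C * (2*β*W + ‖fderiv ℝ V z‖^2 + phj n k V z ^ (2-δ) + 1)
      ≤ C * (2*(α*L^2)*W + (4 * α * L * W)^2 + 2 * A'^2 * L^(2-δ)) := by
      rw [← hβ]
      have : 2*β*W + ‖fderiv ℝ V z‖^2 + phj n k V z ^ (2-δ) + 1 ≤ 2*β*W + (4 * α * L * W)^2 + 2 * A'^2 * L^(2-δ) := by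
        linarith
      gcongr
    have h19 : 0 < C * (α * L^2 * W) := by positivity
    have h20 := hLHS.trans (hcond.trans h18)
    linarith only [h20, h16, h19]
  have hLL : L^2 = L^(2-δ) * L^δ := by
    rw [← Real.rpow_add hLp, ← Real.rpow_natCast]; congr 1; push_cast; ring
  have hfin2 : 5 * α * ε * Real.exp (-(4*α)) * L^δ ≤ 2 * C * A'^2 := by
    have h1 : 5 * α * L^2 * (ε * Real.exp (-(4*α))) ≤ C * (2 * A'^2 * L^(2-δ)) :=
      le_trans (by gcongr) hfin
    rw [hLL] at h1
    have h2 : 0 < L^(2-δ) := by linarith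
    have h3 : L^(2-δ) * (5 * α * ε * Real.exp (-(4*α)) * L^δ) ≤ L^(2-δ) * (2 * C * A'^2) := by linarith
    exact le_of_mul_le_mul_left h3 h2
  have hb := hbig L hx3
  have h5 : 0 < 5 * α * ε * Real.exp (-(4*α)) := by positivity
  have : L^δ ≤ 2 * C * A'^2 / (5 * α * ε * Real.exp (-(4*α))) := by
    rw [le_div_iff₀ h5]; linarith
  linarith

theorem descent_chain (n k : ℕ) (hk : 1 ≤ k) (V : En n → ℝ) (hV : ContDiff ℝ (⊤ : ℕ∞) V)
    (hI : CondI n k V) (hII : CondII n k V) :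
    ∃ c > (0:ℝ), ∀ J : ℕ, 1 ≤ J → ∃ Λ ≥ (1:ℝ), ∀ x, Λ ≤ phj n k V x →
      ∃ z ∈ closedBall x ((3 * J * ((k:ℝ)+1)^(k+1))^k / phj n k V x), V z ≤ V x - c * J := by
  obtain ⟨c, hc, Λ0, hΛ0, hstep⟩ := descent_step n k hk V hV hI hII
  refine ⟨c, hc, fun J hJ => ?_⟩
  set K : ℝ := ((k:ℝ)+1)^(k+1) with hK
  have hK1 : 1 ≤ K := one_le_pow₀ (by have : (0:ℝ) ≤ k := by positivity
                                      linarith)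
  have hJ1 : (1:ℝ) ≤ J := by exact_mod_cast hJ
  set S : ℝ := 3 * J * K with hS
  have hS1 : 1 ≤ S := by rw [hS]; nlinarith
  obtain ⟨Λ1, hΛ1, hlow⟩ := jet_low n k hk V hV hII S hS1
  refine ⟨max Λ1 (Λ0 * (K * S^(k-1))), le_max_of_le_left hΛ1, fun x hx => ?_⟩
  set L := phj n k V x with hL
  have hLp : 0 < L := by have := (le_max_left _ _).trans hx; linarith
  have hxl := hlow x ((le_max_left _ _).trans hx)
  have hx2 : Λ0 * (K * S^(k-1)) ≤ L := (le_max_right _ _).trans hx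
  have hSk : S^k = S * S^(k-1) := by
    conv_lhs => rw [show k = (k-1)+1 by omega]
    ring
  have hind : ∀ j : ℕ, j ≤ J → ∃ z ∈ closedBall x (j * (3 * (K * S^(k-1)) / L)), V z ≤ V x - c * j := by
    intro j
    induction j with
    | zero => intro _; exact ⟨x, by simp, by simp⟩
    | succ j ih =>
      intro hj
      obtain ⟨z, hz, hzV⟩ := ih (by omega)
      have hjJ : (j:ℝ) ≤ J := by exact_mod_cast (by omega : j ≤ J)
      have hzS : z ∈ closedBall x (S^k / L) := by
        refine closedBall_subset_closedBall ?_ hz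
        calc (j:ℝ) * (3 * (K * S^(k-1)) / L) ≤ J * (3 * (K * S^(k-1)) / L) := by gcongr
          _ = S^k / L := by rw [hSk, hS]; ring
      have h1 := hxl z hzS
      have h2 : L / (K * S^(k-1)) ≤ phj n k V z := by
        refine le_trans (le_of_eq ?_) h1
        rw [← hK, ← hL]
        field_simp
      have h3 : Λ0 ≤ phj n k V z := by
        refine le_trans ?_ h2
        rw [le_div_iff₀ (by positivity)]; exact hx2
      obtain ⟨y, hy, hyV⟩ := hstep z h3
      refine ⟨y, ?_, ?_⟩
      · rw [mem_closedBall] at hz hy ⊢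
        have h4 : 3 / phj n k V z ≤ 3 * (K * S^(k-1)) / L := by
          calc 3 / phj n k V z ≤ 3 / (L / (K * S^(k-1))) := by gcongr
            _ = _ := by field_simp
        have := dist_triangle y z x
        push_cast
        linarith
      · push_cast; linarith
  obtain ⟨z, hz, hzV⟩ := hind J le_rfl
  refine ⟨z, ?_, hzV⟩
  have : (J:ℝ) * (3 * (K * S^(k-1)) / L) = S^k / L := by rw [hSk, hS]; ring
  rwa [this] at hz

/-- integrand of the quadratic form. -/
def Gq (n : ℕ) (V : En n → ℝ) (τ : ℝ) (u : En n → ℝ) (y : En n) : En n :=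
  gradient u y + (τ * u y) • gradient V y

theorem gradient_continuous (n : ℕ) (u : En n → ℝ) (hu : ContDiff ℝ (⊤ : ℕ∞) u) :
    Continuous (fun y => gradient u y) := by
  have h1 : Continuous (fderiv ℝ u) := hu.continuous_fderiv (by simp)
  exact (LinearIsometryEquiv.continuous _).comp h1

theorem Gq_continuous (n : ℕ) (V : En n → ℝ) (hV : ContDiff ℝ (⊤ : ℕ∞) V) (τ : ℝ) (u : En n → ℝ)
    (hu : ContDiff ℝ (⊤ : ℕ∞) u) : Continuous (Gq n V τ u) := by
  have h1 := gradient_continuous n u hu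
  have h2 := gradient_continuous n V hV
  have h3 := hu.continuous
  unfold Gq
  fun_prop

theorem inner_gradient (n : ℕ) (u : En n → ℝ) (y h : En n) :
    inner ℝ (gradient u y) h = fderiv ℝ u y h := by
  simp [gradient]

theorem cs_unit (g : ℝ → ℝ) (hg : Continuous g) :
    (∫ t in (0:ℝ)..1, g t)^2 ≤ ∫ t in (0:ℝ)..1, g t ^2 := by
  set m := ∫ t in (0:ℝ)..1, g t with hm
  have h0 : 0 ≤ ∫ t in (0:ℝ)..1, (g t - m)^2 :=
    intervalIntegral.integral_nonneg (by norm_num) fun t _ => sq_nonneg _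
  have e : ∫ t in (0:ℝ)..1, (g t - m)^2 = (∫ t in (0:ℝ)..1, g t^2) - m^2 := by
    have : ∀ t, (g t - m)^2 = (g t^2 - 2 * m * g t) + m^2 := fun t => by ring
    simp_rw [this]
    rw [intervalIntegral.integral_add, intervalIntegral.integral_sub, intervalIntegral.integral_const_mul,
      ← hm]
    · simp; ring
    all_goals
      apply Continuous.intervalIntegrable
      fun_prop
  linarith

theorem ptwise (n : ℕ) (V u : En n → ℝ) (hV : ContDiff ℝ (⊤ : ℕ∞) V) (hu : ContDiff ℝ (⊤ : ℕ∞) u)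
    (τ : ℝ) (hτ : 0 < τ) (p h : En n) (D M : ℝ) (hD : V (p + h) ≤ V p - D)
    (hM : ∀ t ∈ Set.Icc (0:ℝ) 1, |V (p + t • h) - V p| ≤ M) :
    u p ^ 2 ≤ 2 * Real.exp (-(2 * τ * D)) * u (p + h)^2 +
      2 * ‖h‖^2 * Real.exp (2 * τ * M) * ∫ t in (0:ℝ)..1, ‖Gq n V τ u (p + t • h)‖^2 := by
  set v : ℝ → ℝ := fun t => u (p + t • h) * Real.exp (τ * (V (p + t • h) - V p)) with hv
  set v' : ℝ → ℝ := fun t => inner ℝ (Gq n V τ u (p + t • h)) h * Real.exp (τ * (V (p + t • h) - V p)) with hv'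
  have hd : ∀ t, HasDerivAt v (v' t) t := by
    intro t
    have h1 := line_deriv1 n u hu p h t
    have h2 := (((line_deriv1 n V hV p h t).sub_const (V p)).const_mul τ).exp
    refine (h1.mul h2).congr_deriv ?_
    simp only [hv', Gq, inner_add_left, inner_smul_left, inner_gradient]
    simp
    ring
  have hGc := Gq_continuous n V hV τ u hu
  have hVc := hV.continuous
  have hv'c : Continuous v' := by
    simp only [hv']
    fun_prop
  have hftc : ∫ t in (0:ℝ)..1, v' t = v 1 - v 0 :=
    intervalIntegral.integral_eq_sub_of_hasDerivAt (fun t _ => hd t) (hv'c.intervalIntegrable _ _)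
  have hv0 : v 0 = u p := by simp [hv]
  have hv1 : v 1 = u (p+h) * Real.exp (τ * (V (p+h) - V p)) := by simp [hv]
  have hcs := cs_unit v' hv'c
  have hb : ∫ t in (0:ℝ)..1, v' t^2 ≤ ∫ t in (0:ℝ)..1, ‖h‖^2 * Real.exp (2 * τ * M) * ‖Gq n V τ u (p + t • h)‖^2 := by
    apply intervalIntegral.integral_mono_on (by norm_num)
    · apply Continuous.intervalIntegrable; fun_prop
    · apply Continuous.intervalIntegrable; fun_prop
    · intro t ht
      have h1 := abs_real_inner_le_norm (Gq n V τ u (p + t • h)) h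
      have h2 : Real.exp (τ * (V (p + t • h) - V p)) ≤ Real.exp (τ * M) := by
        apply Real.exp_le_exp.2
        have := (le_abs_self _).trans (hM t ht)
        gcongr
      have h3 : |v' t| ≤ ‖Gq n V τ u (p + t • h)‖ * ‖h‖ * Real.exp (τ * M) := by
        simp only [hv', abs_mul, Real.abs_exp]
        gcongr
      rw [← sq_abs]
      calc |v' t|^2 ≤ (‖Gq n V τ u (p + t • h)‖ * ‖h‖ * Real.exp (τ * M))^2 := by gcongr
        _ = ‖h‖^2 * (Real.exp (τ*M))^2 * ‖Gq n V τ u (p + t • h)‖^2 := by ring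
        _ = _ := by rw [← Real.exp_nat_mul]; push_cast; ring_nf
  rw [intervalIntegral.integral_const_mul] at hb
  have h1 : v 1^2 ≤ Real.exp (-(2*τ*D)) * u (p+h)^2 := by
    rw [hv1, mul_pow, ← Real.exp_nat_mul, mul_comm]
    gcongr
    push_cast
    nlinarith
  have h2 : u p^2 ≤ 2 * v 1^2 + 2 * (∫ t in (0:ℝ)..1, v' t)^2 := by
    rw [hftc, ← hv0]
    nlinarith [sq_nonneg (2 * v 1 - v 0)]
  linarith

theorem shift_le (n : ℕ) (φ : En n → ENNReal) (x w : En n) (r r' : ℝ)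
    (h : r + ‖w‖ ≤ r') :
    ∫⁻ p in closedBall x r, φ (p + w) ≤ ∫⁻ p in closedBall x r', φ p := by
  rw [← lintegral_indicator isClosed_closedBall.measurableSet,
    ← lintegral_indicator isClosed_closedBall.measurableSet,
    ← lintegral_add_right_eq_self ((closedBall x r').indicator φ) w]
  refine lintegral_mono fun p => ?_
  by_cases hp : p ∈ closedBall x r
  · have hp' : p + w ∈ closedBall x r' := by
      rw [mem_closedBall] at hp ⊢
      have := dist_triangle (p+w) p x
      have h2 : dist (p+w) p = ‖w‖ := by simp
      linarith
    rw [Set.indicator_of_mem hp, Set.indicator_of_mem hp']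
  · rw [Set.indicator_of_notMem hp]; exact bot_le

theorem local_ineq (n : ℕ) (V u : En n → ℝ) (hV : ContDiff ℝ (⊤ : ℕ∞) V) (hu : ContDiff ℝ (⊤ : ℕ∞) u)
    (τ : ℝ) (hτ : 0 < τ) (x h : En n) (r r' D M : ℝ) (hr : r + ‖h‖ ≤ r')
    (hD : ∀ p ∈ closedBall x r, V (p + h) ≤ V p - D)
    (hM : ∀ p ∈ closedBall x r, ∀ t ∈ Set.Icc (0:ℝ) 1, |V (p + t • h) - V p| ≤ M) :
    ∫⁻ p in closedBall x r, ENNReal.ofReal (u p ^2) ≤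
      ENNReal.ofReal (2 * Real.exp (-(2 * τ * D))) * (∫⁻ p in closedBall x r', ENNReal.ofReal (u p ^2)) +
      ENNReal.ofReal (2 * ‖h‖^2 * Real.exp (2 * τ * M)) *
        ∫⁻ p in closedBall x r', ENNReal.ofReal (‖Gq n V τ u p‖^2) := by
  have hGc := Gq_continuous n V hV τ u hu
  have huc := hu.continuous
  have h1 : ∀ p ∈ closedBall x r, ENNReal.ofReal (u p ^2) ≤
      ENNReal.ofReal (2 * Real.exp (-(2 * τ * D))) * ENNReal.ofReal (u (p+h) ^2) +
      ENNReal.ofReal (2 * ‖h‖^2 * Real.exp (2 * τ * M)) *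
        ∫⁻ t in Set.Ioc (0:ℝ) 1, ENNReal.ofReal (‖Gq n V τ u (p + t • h)‖^2) := by
    intro p hp
    have := ptwise n V u hV hu τ hτ p h D M (hD p hp) (hM p hp)
    rw [← ofReal_integral_eq_lintegral_ofReal, ← ENNReal.ofReal_mul (by positivity),
      ← ENNReal.ofReal_mul (by positivity), ← ENNReal.ofReal_add (by positivity) (by
        refine mul_nonneg (by positivity) (integral_nonneg fun t => by positivity))]
    · rw [intervalIntegral.integral_of_le (by norm_num)] at this
      exact ENNReal.ofReal_le_ofReal this
    · have : Continuous fun t : ℝ => ‖Gq n V τ u (p + t • h)‖^2 := by fun_prop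
      exact (this.integrableOn_Icc (a := (0:ℝ)) (b := 1)).mono_set Set.Ioc_subset_Icc_self
    · exact Eventually.of_forall fun t => by positivity
  have m2 : Measurable fun q : En n × ℝ => ENNReal.ofReal (‖Gq n V τ u (q.1 + q.2 • h)‖^2) := by
    have : Continuous fun q : En n × ℝ => ‖Gq n V τ u (q.1 + q.2 • h)‖^2 := by fun_prop
    exact this.measurable.ennreal_ofReal
  have m1 : Measurable fun p : En n => ENNReal.ofReal (u (p+h)^2) := by
    have : Continuous fun p : En n => u (p+h)^2 := by fun_prop
    exact this.measurable.ennreal_ofReal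
  calc ∫⁻ p in closedBall x r, ENNReal.ofReal (u p ^2) ≤ ∫⁻ p in closedBall x r,
      (ENNReal.ofReal (2 * Real.exp (-(2 * τ * D))) * ENNReal.ofReal (u (p+h) ^2) +
      ENNReal.ofReal (2 * ‖h‖^2 * Real.exp (2 * τ * M)) *
        ∫⁻ t in Set.Ioc (0:ℝ) 1, ENNReal.ofReal (‖Gq n V τ u (p + t • h)‖^2)) :=
        setLIntegral_mono' isClosed_closedBall.measurableSet h1
    _ = ENNReal.ofReal (2 * Real.exp (-(2 * τ * D))) * (∫⁻ p in closedBall x r, ENNReal.ofReal (u (p+h) ^2)) +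
      ENNReal.ofReal (2 * ‖h‖^2 * Real.exp (2 * τ * M)) *
        ∫⁻ p in closedBall x r, ∫⁻ t in Set.Ioc (0:ℝ) 1, ENNReal.ofReal (‖Gq n V τ u (p + t • h)‖^2) := by
        rw [lintegral_add_left (m1.const_mul _), lintegral_const_mul _ m1,
          lintegral_const_mul _ m2.lintegral_prod_right']
    _ ≤ _ := by
        refine add_le_add (mul_le_mul_right ?_ _) (mul_le_mul_right ?_ _)
        · exact shift_le n (fun p => ENNReal.ofReal (u p ^2)) x h r r' hr
        · rw [lintegral_lintegral_swap (f := fun p t => ENNReal.ofReal (‖Gq n V τ u (p + t • h)‖^2)) m2.aemeasurable]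
          calc _ ≤ ∫⁻ t in Set.Ioc (0:ℝ) 1, ∫⁻ p in closedBall x r', ENNReal.ofReal (‖Gq n V τ u p‖^2) := by
                refine setLIntegral_mono' measurableSet_Ioc fun t ht => ?_
                refine shift_le n (fun p => ENNReal.ofReal (‖Gq n V τ u p‖^2)) x (t • h) r r' ?_
                rw [norm_smul, Real.norm_of_nonneg ht.1.le]
                have := norm_nonneg h
                nlinarith [ht.2]
            _ = _ := by simp

/-- The local estimate at large points. -/
theorem local_est (n k : ℕ) (hk : 1 ≤ k) (V : En n → ℝ) (hV : ContDiff ℝ (⊤ : ℕ∞) V)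
    (hI : CondI n k V) (hII : CondII n k V) :
    ∃ c > (0:ℝ), ∀ J : ℕ, 1 ≤ J → ∀ R : ℝ, R = (3 * J * ((k:ℝ)+1)^(k+1))^k →
      ∃ Λ ≥ (1:ℝ), ∀ x, Λ ≤ phj n k V x → ∀ τ > (0:ℝ), ∀ u : En n → ℝ, ContDiff ℝ (⊤ : ℕ∞) u →
      ∫⁻ p in closedBall x ((((k:ℝ)+1)*(2*R)^k)⁻¹ / phj n k V x), ENNReal.ofReal (u p ^2) ≤
        ENNReal.ofReal (2 * Real.exp (-(2 * τ * (c * J - 2)))) *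
          (∫⁻ p in closedBall x (2 * R / phj n k V x), ENNReal.ofReal (u p ^2)) +
        ENNReal.ofReal (2 * R^2 * Real.exp (2 * τ * (((k:ℝ)+1)*(2*R)^k*R)) / phj n k V x ^ 2) *
          ∫⁻ p in closedBall x (2 * R / phj n k V x), ENNReal.ofReal (‖Gq n V τ u p‖^2) := by
  obtain ⟨c, hc, hch⟩ := descent_chain n k hk V hV hI hII
  refine ⟨c, hc, fun J hJ R hR => ?_⟩
  have hJ1 : (1:ℝ) ≤ J := by exact_mod_cast hJ
  have hk0 : (0:ℝ) ≤ k := by positivity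
  have hR1 : 1 ≤ R := by
    rw [hR]
    apply one_le_pow₀
    have : (1:ℝ) ≤ ((k:ℝ)+1)^(k+1) := one_le_pow₀ (by linarith)
    nlinarith
  obtain ⟨Λ1, hΛ1, hch⟩ := hch J hJ
  obtain ⟨Λ2, hΛ2, hup⟩ := jet_up n k hk V hV hII (2*R) (by linarith) 1 one_pos
  set A : ℝ := ((k:ℝ)+1)*(2*R)^k with hA
  have hA1 : 1 ≤ A := by
    have : (1:ℝ) ≤ (2*R)^k := one_le_pow₀ (by linarith)
    rw [hA]; nlinarith
  refine ⟨max Λ1 Λ2, le_max_of_le_left hΛ1, fun x hx τ hτ u hu => ?_⟩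
  set L := phj n k V x with hL
  have hLp : 0 < L := by have := (le_max_left _ _).trans hx; linarith
  obtain ⟨z, hz, hzV⟩ := hch x ((le_max_left _ _).trans hx)
  have hup := hup x ((le_max_right _ _).trans hx)
  rw [← hR, ← hL] at hz
  have hhn : ‖z - x‖ ≤ R / L := by rw [← dist_eq_norm]; exact hz
  have hinv : A⁻¹ ≤ 1 := inv_le_one_of_one_le₀ hA1
  have hAR : A⁻¹ / L + R / L ≤ 2 * R / L := by rw [← add_div]; gcongr; linarith
  have hlip := lip_of_gj n V hV x (2*R/L) (A*L) (fun w hw => by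
      have := (hup w hw).1 1 le_rfl hk; simpa [hA] using this)
  have hmem : ∀ p ∈ closedBall x (A⁻¹/L), ∀ t ∈ Set.Icc (0:ℝ) 1, p + t • (z - x) ∈ closedBall x (2*R/L) := by
    intro p hp t ht
    rw [mem_closedBall] at hp ⊢
    have h1 := dist_triangle (p + t • (z-x)) p x
    have h2 : dist (p + t • (z-x)) p = t * ‖z - x‖ := by
      rw [dist_eq_norm, add_sub_cancel_left, norm_smul, Real.norm_of_nonneg ht.1]
    have h3 : t * ‖z - x‖ ≤ 1 * ‖z - x‖ := by gcongr; exact ht.2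
    linarith
  have hpm : ∀ p ∈ closedBall x (A⁻¹/L), p ∈ closedBall x (2*R/L) := fun p hp => by
    simpa using hmem p hp 0 (by simp)
  have hxm : x ∈ closedBall x (2*R/L) := mem_closedBall_self (by positivity)
  have key := local_ineq n V u hV hu τ hτ x (z - x) (A⁻¹/L) (2*R/L) (c*J-2) (A*R) (by linarith)
    (fun p hp => by
      have hpx : dist p x ≤ A⁻¹/L := hp
      have hmul : A * L * dist p x ≤ 1 := by
        calc A * L * dist p x ≤ A * L * (A⁻¹/L) := by gcongr
          _ = 1 := by field_simp
      have h1 := hlip p x (hpm p hp) hxm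
      have hz2 : z ∈ closedBall x (2*R/L) := closedBall_subset_closedBall (by gcongr; linarith) hz
      have h2 := hlip (p + (z-x)) z (by simpa using hmem p hp 1 (by simp)) hz2
      have e : dist (p + (z-x)) z = dist p x := by
        rw [dist_eq_norm, dist_eq_norm]; congr 1; abel
      rw [e] at h2
      have h3 := (abs_le.1 h1).1
      have h4 := (abs_le.1 h2).2
      linarith)
    (fun p hp t ht => by
      refine (hlip _ p (hmem p hp t ht) (hpm p hp)).trans ?_
      have h2 : dist (p + t • (z-x)) p = t * ‖z - x‖ := by
        rw [dist_eq_norm, add_sub_cancel_left, norm_smul, Real.norm_of_nonneg ht.1]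
      have h3 : t * ‖z - x‖ ≤ 1 * ‖z - x‖ := by gcongr; exact ht.2
      rw [h2]
      calc A * L * (t * ‖z - x‖) ≤ A * L * (R/L) := by gcongr; linarith
        _ = A * R := by field_simp)
  refine key.trans ?_
  gcongr
  calc 2 * ‖z - x‖^2 * Real.exp (2 * τ * (A*R)) ≤ 2 * (R/L)^2 * Real.exp (2 * τ * (A*R)) := by gcongr
    _ = _ := by ring

/-- averaged weight. -/
def KK (n : ℕ) (f : En n → ℝ) (Λ r : ℝ) (m : ℕ) (y : En n) : ENNReal :=
  ∫⁻ x in {x | Λ ≤ f x ∧ dist y x ≤ r / f x}, ENNReal.ofReal (f x ^ m)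

theorem tonelli_K (n : ℕ) (f : En n → ℝ) (hf : Continuous f) (Λ r : ℝ) (m : ℕ)
    (Φ : En n → ENNReal) (hΦ : Measurable Φ) :
    ∫⁻ x in {x | Λ ≤ f x}, ENNReal.ofReal (f x ^ m) * ∫⁻ y in closedBall x (r / f x), Φ y
      = ∫⁻ y, Φ y * KK n f Λ r m y := by
  have hfm : Measurable f := hf.measurable
  set T : Set (En n × En n) := {q | Λ ≤ f q.1 ∧ dist q.2 q.1 ≤ r / f q.1} with hT
  have hTm : MeasurableSet T := by
    apply MeasurableSet.inter
    · exact measurableSet_le measurable_const (hfm.comp measurable_fst)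
    · exact measurableSet_le (measurable_snd.dist measurable_fst)
        (measurable_const.div (hfm.comp measurable_fst))
  set Ψ : En n → En n → ENNReal := fun x y =>
    T.indicator (fun q => ENNReal.ofReal (f q.1 ^ m) * Φ q.2) (x, y) with hΨ
  have hΨm : Measurable (Function.uncurry Ψ) := by
    have : Function.uncurry Ψ = T.indicator (fun q => ENNReal.ofReal (f q.1 ^ m) * Φ q.2) := by
      ext ⟨x, y⟩; rfl
    rw [this]
    refine Measurable.indicator ?_ hTm
    exact (((hfm.comp measurable_fst).pow_const m).ennreal_ofReal).mul (hΦ.comp measurable_snd)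
  have hE : MeasurableSet {x | Λ ≤ f x} := measurableSet_le measurable_const hfm
  have e1 : ∫⁻ x in {x | Λ ≤ f x}, ENNReal.ofReal (f x ^ m) * ∫⁻ y in closedBall x (r / f x), Φ y
      = ∫⁻ x, ∫⁻ y, Ψ x y := by
    rw [← lintegral_indicator hE]
    refine lintegral_congr fun x => ?_
    by_cases hx : Λ ≤ f x
    · rw [Set.indicator_of_mem (by exact hx), ← lintegral_indicator isClosed_closedBall.measurableSet,
        ← lintegral_const_mul _ (hΦ.indicator isClosed_closedBall.measurableSet)]
      refine lintegral_congr fun y => ?_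
      by_cases hy : y ∈ closedBall x (r / f x)
      · rw [Set.indicator_of_mem hy]
        simp only [hΨ]
        rw [Set.indicator_of_mem (show (x,y) ∈ T from ⟨hx, hy⟩)]
      · rw [Set.indicator_of_notMem hy]
        simp only [hΨ]
        rw [Set.indicator_of_notMem (show (x,y) ∉ T from fun h => hy h.2)]
        simp
    · rw [Set.indicator_of_notMem (by exact hx)]
      symm
      rw [lintegral_eq_zero_iff' (by
        exact (hΨm.comp (measurable_const.prodMk measurable_id)).aemeasurable)]
      refine Eventually.of_forall fun y => ?_
      simp only [hΨ]
      rw [Set.indicator_of_notMem (show (x,y) ∉ T from fun h => hx h.1)]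
      rfl
  rw [e1, lintegral_lintegral_swap hΨm.aemeasurable]
  refine lintegral_congr fun y => ?_
  have hS : MeasurableSet {x | Λ ≤ f x ∧ dist y x ≤ r / f x} :=
    (measurable_id.prodMk measurable_const) hTm
  rw [KK, ← lintegral_indicator hS, ← lintegral_const_mul _
    ((hfm.pow_const m).ennreal_ofReal.indicator hS)]
  refine lintegral_congr fun x => ?_
  by_cases hx : Λ ≤ f x ∧ dist y x ≤ r / f x
  · rw [Set.indicator_of_mem (by exact hx)]
    simp only [hΨ]
    rw [Set.indicator_of_mem (show (x,y) ∈ T from hx), mul_comm]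
  · rw [Set.indicator_of_notMem (by exact hx)]
    simp only [hΨ]
    rw [Set.indicator_of_notMem (show (x,y) ∉ T from hx)]
    simp

theorem vol_cB (n : ℕ) (y : En n) (r : ℝ) (hr : 0 ≤ r) :
    volume (closedBall y r) = ENNReal.ofReal (r^n) * volume (ball (0 : En n) 1) := by
  have := Measure.addHaar_closedBall (volume : Measure (En n)) y hr
  rwa [finrank_euclideanSpace_fin] at this

theorem K_upper (n : ℕ) (f : En n → ℝ) (Λ r a A : ℝ) (hΛ : 1 ≤ Λ) (hr : 0 < r)
    (ha : 0 < a) (hA : 0 < A)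
    (H : ∀ x, Λ ≤ f x → ∀ y ∈ closedBall x (r / f x), a * f x ≤ f y ∧ f y ≤ A * f x) (j : ℕ)
    (y : En n) :
    KK n f Λ r (n+j) y ≤ ENNReal.ofReal (a⁻¹^(n+j) * (r*A)^n * f y ^ j) * volume (ball (0 : En n) 1) := by
  rcases Set.eq_empty_or_nonempty {x | Λ ≤ f x ∧ dist y x ≤ r / f x} with h | ⟨x0, h0⟩
  · rw [KK, h]; simp
  have hfy : 0 < f y := by
    have h1 := (H x0 h0.1 y h0.2).1
    have : 0 < a * f x0 := mul_pos ha (by linarith [h0.1])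
    linarith
  have hsub : {x | Λ ≤ f x ∧ dist y x ≤ r / f x} ⊆ closedBall y (r * A / f y) := by
    intro x hx
    have h1 := (H x hx.1 y hx.2).2
    have hfx : 0 < f x := by linarith [hx.1]
    rw [mem_closedBall, dist_comm]
    refine hx.2.trans ?_
    rw [div_le_div_iff₀ hfx hfy]
    calc r * f y ≤ r * (A * f x) := by gcongr
      _ = _ := by ring
  calc KK n f Λ r (n+j) y ≤ ∫⁻ x in {x | Λ ≤ f x ∧ dist y x ≤ r / f x}, ENNReal.ofReal ((a⁻¹ * f y)^(n+j)) := by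
        refine setLIntegral_mono measurable_const fun x hx => ?_
        have h1 := (H x hx.1 y hx.2).1
        have hfx : 0 < f x := by linarith [hx.1]
        gcongr
        rw [← div_eq_inv_mul, le_div_iff₀ ha]; linarith
    _ = ENNReal.ofReal ((a⁻¹ * f y)^(n+j)) * volume {x | Λ ≤ f x ∧ dist y x ≤ r / f x} := by simp
    _ ≤ ENNReal.ofReal ((a⁻¹ * f y)^(n+j)) * volume (closedBall y (r * A / f y)) := by gcongr
    _ = _ := by
        rw [vol_cB _ _ _ (by positivity), ← mul_assoc, ← ENNReal.ofReal_mul (by positivity)]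
        congr 2
        rw [mul_pow, div_pow, pow_add (f y)]
        field_simp

theorem K_lower (n : ℕ) (f : En n → ℝ) (Λ s c A : ℝ) (hs : 0 < s) (hs1 : s ≤ 1) (hΛ : 1 ≤ Λ)
    (hc : 0 < c) (hA : 1 ≤ A) (j : ℕ) (y : En n) (hy : Λ ≤ c * f y) 
    (H : ∀ x ∈ closedBall y (1 / f y), c * f y ≤ f x ∧ f x ≤ A * f y) :
    ENNReal.ofReal (c^(n+j) * (s/A)^n * f y ^ j) * volume (ball (0 : En n) 1) ≤ KK n f Λ s (n+j) y := by
  have hfy : 0 < f y := by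
    by_contra h
    push Not at h
    nlinarith
  have hsub : closedBall y (s / A / f y) ⊆ {x | Λ ≤ f x ∧ dist y x ≤ s / f x} := by
    intro x hx
    have hx1 : x ∈ closedBall y (1 / f y) := by
      refine closedBall_subset_closedBall ?_ hx
      gcongr
      rw [div_le_one (by linarith)]; linarith
    obtain ⟨h1, h2⟩ := H x hx1
    have hfx : 0 < f x := lt_of_lt_of_le (by positivity) h1
    refine ⟨hy.trans h1, ?_⟩
    rw [dist_comm]
    refine (mem_closedBall.1 hx).trans ?_
    rw [div_div]
    gcongr
  calc _ = ENNReal.ofReal ((c * f y)^(n+j)) * volume (closedBall y (s / A / f y)) := by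
        rw [vol_cB _ _ _ (by positivity), ← mul_assoc, ← ENNReal.ofReal_mul (by positivity)]
        congr 2
        rw [mul_pow, div_pow _ (f y), pow_add (f y)]
        field_simp
    _ = ∫⁻ x in closedBall y (s / A / f y), ENNReal.ofReal ((c * f y)^(n+j)) := by simp
    _ ≤ ∫⁻ x in closedBall y (s / A / f y), ENNReal.ofReal (f x^(n+j)) := by
        refine setLIntegral_mono' isClosed_closedBall.measurableSet fun x hx => ?_
        have h1 := (hsub hx).1
        have hx1 : x ∈ closedBall y (1 / f y) := by
          refine closedBall_subset_closedBall ?_ hx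
          gcongr
          rw [div_le_one (by linarith)]; linarith
        have := (H x hx1).1
        gcongr
    _ ≤ _ := lintegral_mono_set hsub

theorem choose_J (C b : ℝ) (hb : 0 < b) (N : ℕ) :
    ∃ J : ℕ, 1 ≤ J ∧ C * (J:ℝ)^N * Real.exp (-(b * J)) ≤ 1 := by
  have h := (Real.tendsto_pow_mul_exp_neg_atTop_nhds_zero N).comp
    ((tendsto_natCast_atTop_atTop (R := ℝ)).const_mul_atTop hb)
  have h2 := h.const_mul (C * (b^N)⁻¹)
  rw [mul_zero] at h2
  have h3 := (h2.eventually (eventually_le_nhds one_pos)).and (eventually_ge_atTop 1)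
  obtain ⟨J, hJ, hJ1⟩ := h3.exists
  refine ⟨J, hJ1, le_trans (le_of_eq ?_) hJ⟩
  simp only [Function.comp]
  rw [mul_pow]
  field_simp

theorem measurable_ballInt (n : ℕ) (f : En n → ℝ) (hf : Continuous f) (r : ℝ)
    (Φ : En n → ENNReal) (hΦ : Measurable Φ) :
    Measurable fun x => ∫⁻ y in closedBall x (r / f x), Φ y := by
  have hfm : Measurable f := hf.measurable
  set T : Set (En n × En n) := {q | dist q.2 q.1 ≤ r / f q.1} with hT
  have hTm : MeasurableSet T := measurableSet_le (measurable_snd.dist measurable_fst)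
        (measurable_const.div (hfm.comp measurable_fst))
  have hm : Measurable (T.indicator (fun q => Φ q.2)) := (hΦ.comp measurable_snd).indicator hTm
  have := hm.lintegral_prod_right' (ν := (volume : Measure (En n)))
  convert this using 2 with x
  rw [← lintegral_indicator isClosed_closedBall.measurableSet]
  rfl

theorem core_abs (n : ℕ) (f : En n → ℝ) (hf : Continuous f) (hf0 : ∀ x, 0 ≤ f x)
    (Λ Λ' T s a A c0 A1 κ B : ℝ) (hΛ : 1 ≤ Λ) (hT : 0 < T) (hs : 0 < s) (hs1 : s ≤ 1)
    (ha : 0 < a) (hA : 0 < A) (hc0 : 0 < c0) (hA1 : 1 ≤ A1) (hκ : 0 ≤ κ) (hB : 0 ≤ B)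
    (hΛ' : Λ ≤ c0 * Λ')
    (H1 : ∀ x, Λ ≤ f x → ∀ y ∈ closedBall x (T / f x), a * f x ≤ f y ∧ f y ≤ A * f x)
    (H2 : ∀ y, Λ' ≤ f y → ∀ x ∈ closedBall y (1 / f y), c0 * f y ≤ f x ∧ f x ≤ A1 * f y)
    (U Γ : En n → ℝ) (hU : Continuous U) (hΓ : Continuous Γ) (hU0 : ∀ x, 0 ≤ U x) (hΓ0 : ∀ x, 0 ≤ Γ x)
    (hUs : HasCompactSupport U) (hΓs : HasCompactSupport Γ)
    (H3 : ∀ x, Λ ≤ f x → ∫⁻ p in closedBall x (s / f x), ENNReal.ofReal (U p) ≤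
      ENNReal.ofReal κ * (∫⁻ p in closedBall x (T / f x), ENNReal.ofReal (U p)) +
      ENNReal.ofReal (B / f x^2) * ∫⁻ p in closedBall x (T / f x), ENNReal.ofReal (Γ p))
    (hJ : κ * (a⁻¹^(n+2) * (T*A)^n) ≤ c0^(n+2) * (s/A1)^n / 2) :
    ∫ x, f x^2 * U x ≤ 2 * (B * (a⁻¹^n * (T*A)^n)) / (c0^(n+2) * (s/A1)^n) * (∫ x, Γ x)
      + 2 * Λ'^2 * ∫ x, U x := by
  set P : ℝ := a⁻¹^(n+2) * (T*A)^n with hP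
  set P0 : ℝ := a⁻¹^n * (T*A)^n with hP0
  set l : ℝ := c0^(n+2) * (s/A1)^n with hl
  have hlp : 0 < l := by positivity
  have hPp : 0 < P := by positivity
  have hP0p : 0 < P0 := by positivity
  set ω := volume (ball (0 : En n) 1) with hω
  have hω0 : ω ≠ 0 := (measure_ball_pos volume _ one_pos).ne'
  have hωt : ω ≠ ⊤ := measure_ball_lt_top.ne
  have hfm := hf.measurable
  have mU : Measurable fun p => ENNReal.ofReal (U p) := hU.measurable.ennreal_ofReal
  have mΓ : Measurable fun p => ENNReal.ofReal (Γ p) := hΓ.measurable.ennreal_ofReal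
  have hE : MeasurableSet {x | Λ ≤ f x} := measurableSet_le measurable_const hfm
  have hE' : MeasurableSet {x | Λ' ≤ f x} := measurableSet_le measurable_const hfm
  have step1 : ∫⁻ y, ENNReal.ofReal (U y) * KK n f Λ s (n+2) y ≤
      ENNReal.ofReal κ * (∫⁻ y, ENNReal.ofReal (U y) * KK n f Λ T (n+2) y) +
      ENNReal.ofReal B * ∫⁻ y, ENNReal.ofReal (Γ y) * KK n f Λ T (n+0) y := by
    rw [← tonelli_K n f hf Λ s (n+2) _ mU, ← tonelli_K n f hf Λ T (n+2) _ mU,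
      ← tonelli_K n f hf Λ T (n+0) _ mΓ]
    have m1 : Measurable fun x => ENNReal.ofReal (f x ^ (n+2)) * ∫⁻ y in closedBall x (T / f x), ENNReal.ofReal (U y) :=
      ((hfm.pow_const _).ennreal_ofReal).mul (measurable_ballInt n f hf T _ mU)
    have m2 : Measurable fun x => ENNReal.ofReal (f x ^ (n+0)) * ∫⁻ y in closedBall x (T / f x), ENNReal.ofReal (Γ y) :=
      ((hfm.pow_const _).ennreal_ofReal).mul (measurable_ballInt n f hf T _ mΓ)
    rw [← lintegral_const_mul _ m1, ← lintegral_const_mul _ m2, ← lintegral_add_left (m1.const_mul _)]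
    refine setLIntegral_mono' hE fun x hx => ?_
    have hfx : 0 < f x := by have : Λ ≤ f x := hx
                             linarith
    calc ENNReal.ofReal (f x ^ (n+2)) * ∫⁻ y in closedBall x (s / f x), ENNReal.ofReal (U y)
        ≤ ENNReal.ofReal (f x ^ (n+2)) * (ENNReal.ofReal κ * (∫⁻ p in closedBall x (T / f x), ENNReal.ofReal (U p)) +
      ENNReal.ofReal (B / f x^2) * ∫⁻ p in closedBall x (T / f x), ENNReal.ofReal (Γ p)) := by
          exact mul_le_mul_right (H3 x hx) _
      _ = _ := by
          rw [mul_add, ← mul_assoc, ← mul_assoc, ← mul_assoc, ← mul_assoc,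
            mul_comm (ENNReal.ofReal (f x ^ (n+2))) (ENNReal.ofReal κ),
            ← ENNReal.ofReal_mul (p := f x ^ (n+2)) (q := B / f x ^ 2) (by positivity),
            ← ENNReal.ofReal_mul (p := B) (q := f x ^ (n+0)) hB,
            show f x^(n+2) * (B / f x^2) = B * f x^(n+0) by rw [pow_add, add_zero]; field_simp]
  have low : ENNReal.ofReal l * ω * (∫⁻ y in {y | Λ' ≤ f y}, ENNReal.ofReal (f y^2 * U y)) ≤
      ∫⁻ y, ENNReal.ofReal (U y) * KK n f Λ s (n+2) y := by
    rw [← lintegral_const_mul _ (by fun_prop)]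
    refine le_trans ?_ (setLIntegral_le_lintegral {y | Λ' ≤ f y} _)
    refine setLIntegral_mono' hE' fun y hy => ?_
    have h := K_lower n f Λ s c0 A1 hs hs1 hΛ hc0 hA1 2 y
      (hΛ'.trans (by have : Λ' ≤ f y := hy
                     gcongr)) (H2 y hy)
    calc _ = ENNReal.ofReal (U y) * (ENNReal.ofReal (l * f y^2) * ω) := by
            rw [ENNReal.ofReal_mul (p := f y^2) (q := U y) (by positivity), ENNReal.ofReal_mul (p := l) (q := f y^2) hlp.le]; ring
      _ ≤ _ := mul_le_mul_right h _
  have up2 : ∫⁻ y, ENNReal.ofReal (U y) * KK n f Λ T (n+2) y ≤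
      ENNReal.ofReal P * ω * ∫⁻ y, ENNReal.ofReal (f y^2 * U y) := by
    rw [← lintegral_const_mul _ (by fun_prop)]
    refine lintegral_mono fun y => ?_
    have h := K_upper n f Λ T a A hΛ hT ha hA H1 2 y
    refine (mul_le_mul_right h _).trans (le_of_eq ?_)
    rw [← hω, ENNReal.ofReal_mul (by positivity), ENNReal.ofReal_mul (p := f y^2) (by positivity)]
    ring
  have up0 : ∫⁻ y, ENNReal.ofReal (Γ y) * KK n f Λ T (n+0) y ≤
      ENNReal.ofReal P0 * ω * ∫⁻ y, ENNReal.ofReal (Γ y) := by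
    rw [← lintegral_const_mul _ mΓ]
    refine lintegral_mono fun y => ?_
    have h := K_upper n f Λ T a A hΛ hT ha hA H1 0 y
    refine (mul_le_mul_right h _).trans (le_of_eq ?_)
    rw [← hω, pow_zero, mul_one, add_zero]
    ring
  have iU : Integrable U := hU.integrable_of_hasCompactSupport hUs
  have iΓ : Integrable Γ := hΓ.integrable_of_hasCompactSupport hΓs
  have ifU : Integrable fun x => f x^2 * U x :=
    (by fun_prop : Continuous fun x => f x^2 * U x).integrable_of_hasCompactSupport hUs.mul_left
  rw [← ofReal_integral_eq_lintegral_ofReal ifU.integrableOn (Eventually.of_forall fun x => by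
    have := hU0 x; positivity)] at low
  rw [← ofReal_integral_eq_lintegral_ofReal ifU (Eventually.of_forall fun x => by
    have := hU0 x; positivity)] at up2
  rw [← ofReal_integral_eq_lintegral_ofReal iΓ (Eventually.of_forall hΓ0)] at up0
  set X := ∫ x, f x^2 * U x with hX
  set Q := ∫ x, Γ x with hQ
  set Y := ∫ x, U x with hY
  set Xh := ∫ x in {y | Λ' ≤ f y}, f x^2 * U x with hXh
  have hXn : 0 ≤ X := integral_nonneg fun x => by have := hU0 x; positivity
  have hQn : 0 ≤ Q := integral_nonneg hΓ0
  have main : ENNReal.ofReal (l * Xh) * ω ≤ ENNReal.ofReal (κ * P * X + B * P0 * Q) * ω := by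
    have := low.trans (step1.trans (add_le_add (mul_le_mul_right up2 _) (mul_le_mul_right up0 _)))
    rw [ENNReal.ofReal_mul (p := l) (q := Xh) hlp.le, ENNReal.ofReal_add (by positivity) (by positivity),
      ENNReal.ofReal_mul (p := κ * P) (q := X) (by positivity), ENNReal.ofReal_mul (p := κ) (q := P) hκ,
      ENNReal.ofReal_mul (p := B * P0) (q := Q) (by positivity),
      ENNReal.ofReal_mul (p := B) (q := P0) hB]
    refine le_trans (le_of_eq (by ring)) (this.trans (le_of_eq (by ring)))
  have main2 := (ENNReal.mul_le_mul_iff_left hω0 hωt).1 main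
  rw [ENNReal.ofReal_le_ofReal_iff (by positivity)] at main2
  have split : X ≤ Xh + Λ'^2 * Y := by
    rw [hX, ← integral_add_compl hE' ifU, ← hXh]
    gcongr
    calc ∫ x in {y | Λ' ≤ f y}ᶜ, f x^2 * U x ≤ ∫ x in {y | Λ' ≤ f y}ᶜ, Λ'^2 * U x := by
          refine setIntegral_mono_on ifU.integrableOn (iU.const_mul _).integrableOn hE'.compl fun x hx => ?_
          have h1 : f x ≤ Λ' := by
            simp only [Set.mem_compl_iff, Set.mem_ofPred_eq, not_le] at hx; exact hx.le
          have := hU0 x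
          have := hf0 x
          gcongr
      _ ≤ ∫ x, Λ'^2 * U x := setIntegral_le_integral (iU.const_mul _) (Eventually.of_forall fun x => by
            have := hU0 x; positivity)
      _ = Λ'^2 * Y := by rw [integral_const_mul]
  have e : κ * P * X ≤ l/2 * X := by gcongr
  have e2 : l * X ≤ l * (Xh + Λ'^2 * Y) := by gcongr
  have e3 : l * X ≤ 2 * (B * P0 * Q) + l * (2 * Λ'^2 * Y) := by linarith
  have e4 : X ≤ (2 * (B * P0 * Q) + l * (2 * Λ'^2 * Y)) / l := by
    rw [le_div_iff₀ hlp]; linarith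
  refine e4.trans (le_of_eq ?_)
  field_simp

theorem core_est (n k : ℕ) (hk : 1 ≤ k) (V : En n → ℝ) (hV : ContDiff ℝ (⊤ : ℕ∞) V)
    (hI : CondI n k V) (hII : CondII n k V) (τ : ℝ) (hτ : 0 < τ) :
    ∃ D > (0:ℝ), ∀ u : En n → ℝ, TestFun n u →
      ∫ x, phj n k V x^2 * u x^2 ≤ D * Qform n V τ u + D * ∫ x, u x^2 := by
  obtain ⟨c, hc, hloc⟩ := local_est n k hk V hV hI hII
  set K : ℝ := ((k:ℝ)+1)^(k+1) with hK
  have hk0 : (0:ℝ) ≤ k := by positivity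
  have hK1 : 1 ≤ K := one_le_pow₀ (by linarith)
  set A1 : ℝ := k*(k+1)+1 with hA1
  have hA11 : 1 ≤ A1 := by have : (0:ℝ) ≤ k*(k+1) := by positivity
                           linarith
  set e : ℕ := (k-1)*(n+2)+n+k*n+k*n with he
  obtain ⟨J, hJ1, hJ⟩ := choose_J (4 * Real.exp (4*τ) * (K^(2*(n+2)) * A1^(2*n) * ((k:ℝ)+1)^n * (2*(3*K)^k)^e))
    (2*τ*c) (by positivity) (k*e)
  have hJr : (1:ℝ) ≤ J := by exact_mod_cast hJ1
  set R : ℝ := (3 * J * K)^k with hR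
  have hR1 : 1 ≤ R := one_le_pow₀ (by nlinarith)
  set T : ℝ := 2 * R with hT
  have hT1 : 1 ≤ T := by linarith
  obtain ⟨Λ1, hΛ1, hloc⟩ := hloc J hJ1 R rfl
  obtain ⟨Λ2, hΛ2, hup⟩ := jet_up n k hk V hV hII T hT1 1 one_pos
  obtain ⟨Λ3, hΛ3, hlow⟩ := jet_low n k hk V hV hII T hT1
  obtain ⟨Λ4, hΛ4, hup1⟩ := jet_up n k hk V hV hII 1 le_rfl 1 one_pos
  obtain ⟨Λ5, hΛ5, hlow1⟩ := jet_low n k hk V hV hII 1 le_rfl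
  set Λ := max Λ1 (max Λ2 Λ3) with hΛ
  have l1 : Λ1 ≤ Λ := le_max_left _ _
  have l2 : Λ2 ≤ Λ := (le_max_left _ _).trans (le_max_right _ _)
  have l3 : Λ3 ≤ Λ := (le_max_right _ _).trans (le_max_right _ _)
  set Λ' := max (K*Λ) (max Λ4 Λ5) with hΛ'
  have l4 : Λ4 ≤ Λ' := (le_max_left _ _).trans (le_max_right _ _)
  have l5 : Λ5 ≤ Λ' := (le_max_right _ _).trans (le_max_right _ _)
  have l0 : K*Λ ≤ Λ' := le_max_left _ _
  set s : ℝ := (((k:ℝ)+1)*T^k)⁻¹ with hs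
  have hsp : 0 < s := by positivity
  have hs1 : s ≤ 1 := by
    apply inv_le_one_of_one_le₀
    have : 1 ≤ T^k := one_le_pow₀ hT1
    nlinarith
  set B : ℝ := 2 * R^2 * Real.exp (2 * τ * (((k:ℝ)+1)*T^k*R)) with hB
  set κ : ℝ := 2 * Real.exp (-(2 * τ * (c * J - 2))) with hκ
  set a : ℝ := K⁻¹ / T^(k-1) with ha
  set A : ℝ := A1 * T^k with hA
  have hap : 0 < a := by positivity
  have hAp : 0 < A := by positivity
  have hPl : a⁻¹^(n+2) * (T*A)^n = K⁻¹^(n+2) * (s/A1)^n * (K^(2*(n+2)) * A1^(2*n) * ((k:ℝ)+1)^n * T^e) := by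
    have e1 : a⁻¹ = K * T^(k-1) := by rw [ha]; field_simp
    rw [e1, hs, hA, he]
    have hTp : 0 < T := by linarith
    simp only [mul_pow, div_pow, inv_pow, pow_add, pow_mul, mul_inv]
    field_simp
    ring
  have hTe : T^e = (2*(3*K)^k)^e * (J:ℝ)^(k*e) := by
    rw [hT, hR, pow_mul, ← mul_pow]; congr 1
    rw [show 3 * (J:ℝ) * K = (3*K) * J by ring, mul_pow]; ring
  have hexp : κ = 2 * Real.exp (4*τ) * Real.exp (-(2*τ*c*J)) := by
    rw [hκ, mul_assoc 2 (Real.exp (4*τ)), ← Real.exp_add]; congr 2; ring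
  have hJfin : κ * (a⁻¹^(n+2) * (T*A)^n) ≤ K⁻¹^(n+2) * (s/A1)^n / 2 := by
    rw [hPl, hexp, hTe]
    set l := K⁻¹^(n+2) * (s/A1)^n
    have hlp : 0 < l := by positivity
    calc _ = l / 2 * (4 * Real.exp (4*τ) * (K^(2*(n+2)) * A1^(2*n) * ((k:ℝ)+1)^n * (2*(3*K)^k)^e) * (J:ℝ)^(k*e) * Real.exp (-(2*τ*c*J))) := by ring
      _ ≤ l / 2 * 1 := by gcongr
      _ = l / 2 := by ring
  set D := 2 * (B * (a⁻¹^n * (T*A)^n)) / (K⁻¹^(n+2) * (s/A1)^n) with hD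
  have hDp : 0 < D := by positivity
  refine ⟨D + 2*Λ'^2, by positivity, fun u hu => ?_⟩
  have huc := hu.1.continuous
  have hGc := Gq_continuous n V hV τ u hu.1
  have hUs : HasCompactSupport (fun x => u x^2) := hu.2.comp_left (g := fun t : ℝ => t^2) (by simp)
  have hΓs : HasCompactSupport (fun x => ‖Gq n V τ u x‖^2) := by
    refine HasCompactSupport.intro hu.2 fun x hx => ?_
    have h1 : u x = 0 := image_eq_zero_of_notMem_tsupport hx
    have h2 : fderiv ℝ u x = 0 := fderiv_of_notMem_tsupport ℝ hx
    simp [Gq, gradient, h1, h2]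
  have hK0 : K⁻¹ * (K * Λ) = Λ := by field_simp
  have key := core_abs n (phj n k V) (phj_continuous n k V hV) (phj_nonneg n k V) Λ Λ' T s a A K⁻¹ A1 κ B
    (hΛ1.le.trans l1) (by positivity) hsp hs1 hap hAp (by positivity) hA11 (by positivity) (by positivity)
    (by rw [← hK0]; gcongr)
    (fun x hx y hy => by
      have hLp : 0 < phj n k V x := by linarith
      refine ⟨hlow x (l3.trans hx) y (closedBall_subset_closedBall ?_ hy), (hup x (l2.trans hx) y hy).2.2⟩
      gcongr
      exact le_self_pow₀ hT1 (by omega))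
    (fun y hy x hx => by
      have h1 := hlow1 y (l5.trans hy) x (by simpa using hx)
      have h2 := (hup1 y (l4.trans hy) x hx).2.2
      simp only [one_pow, div_one, mul_one] at h1 h2
      exact ⟨h1, h2⟩)
    (fun x => u x^2) (fun x => ‖Gq n V τ u x‖^2) (by fun_prop) (by fun_prop)
    (fun x => by positivity) (fun x => by positivity) hUs hΓs
    (fun x hx => hloc x (l1.trans hx) τ hτ u hu.1) hJfin
  have hQ : Qform n V τ u = ∫ x, ‖Gq n V τ u x‖^2 := rfl
  have hQ0 : 0 ≤ Qform n V τ u := by rw [hQ]; exact integral_nonneg fun x => by positivity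
  have hY0 : 0 ≤ ∫ x, u x^2 := integral_nonneg fun x => by positivity
  rw [← hQ, ← hD] at key
  have t1 : 0 ≤ 2 * Λ'^2 * Qform n V τ u := by positivity
  have t2 : 0 ≤ D * ∫ x, u x^2 := by positivity
  linarith

/-- maximal estimate for the Witten Laplacian, for every `τ > 0`. -/
theorem witten_maximal_estimate (n k : ℕ) (hn : 1 ≤ n) (hk : 2 ≤ k)
    (V : En n → ℝ) (hV : ContDiff ℝ (⊤ : ℕ∞) V) (hA : AssumptionA n k V) :
    ∀ τ : ℝ, 0 < τ → ∃ Cτ > (0 : ℝ), ∀ u : En n → ℝ, TestFun n u →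
      (∫ x : En n, ftilTau n k V τ x ^ 2 * u x ^ 2)
        ≤ Cτ * Qform n V τ u + Cτ * ∫ x : En n, u x ^ 2 := by
  intro τ hτ
  obtain ⟨D, hD, h⟩ := core_est n k (by omega) V hV (condI_of n k V hV hA.1)
    (condII_of n k V hV hA.2.1) τ hτ
  set S : ℝ := ∑ α ∈ midx n k 1, τ ^ ((1 : ℝ) / (mdeg α)) with hS
  have hQ0 : ∀ u, 0 ≤ Qform n V τ u := fun u => integral_nonneg fun x => by positivity
  refine ⟨(S^2 + 1) * D, by positivity, fun u hu => ?_⟩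
  have hY0 : 0 ≤ ∫ x, u x^2 := integral_nonneg fun x => by positivity
  have hUs : HasCompactSupport (fun x => u x^2) := hu.2.comp_left (g := fun t : ℝ => t^2) (by simp)
  have huc := hu.1.continuous
  have hpc := phj_continuous n k V hV
  have ifU : Integrable fun x => S^2 * (phj n k V x^2 * u x^2) :=
    ((by fun_prop : Continuous fun x => phj n k V x^2 * u x^2).integrable_of_hasCompactSupport hUs.mul_left).const_mul _
  calc ∫ x : En n, ftilTau n k V τ x ^ 2 * u x ^ 2 ≤ ∫ x, S^2 * (phj n k V x^2 * u x^2) := by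
        refine integral_mono_of_nonneg (Eventually.of_forall fun x => by positivity) ifU
          (Eventually.of_forall fun x => ?_)
        have h0 : 0 ≤ ftilTau n k V τ x := Finset.sum_nonneg fun α _ => by positivity
        have h1 := ftilTau_le n k V hV τ hτ x
        change ftilTau n k V τ x ^ 2 * u x ^ 2 ≤ S^2 * (phj n k V x^2 * u x^2)
        have h2 : ftilTau n k V τ x ^ 2 ≤ (S * phj n k V x)^2 := pow_le_pow_left₀ h0 h1 2
        calc _ ≤ (S * phj n k V x)^2 * u x ^ 2 := mul_le_mul_of_nonneg_right h2 (sq_nonneg _)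
          _ = _ := by ring
    _ = S^2 * ∫ x, phj n k V x^2 * u x^2 := by rw [integral_const_mul]
    _ ≤ S^2 * (D * Qform n V τ u + D * ∫ x, u x^2) := by gcongr; exact h u hu
    _ ≤ _ := by
        have t1 : 0 ≤ D * Qform n V τ u := mul_nonneg hD.le (hQ0 u)
        have t2 : 0 ≤ D * ∫ x, u x^2 := mul_nonneg hD.le hY0
        linarith

end
end

section
/- Let r ≥ 1 and let p ∈ E_r satisfy: there exist constants σ > 0 and C > 0 such that for all x ∈ B_σ, Σ_{j∈I_{x,p}} λ_{p,j}(x) ≤ C (M_p(x) + |∇p(x)|²). Then no nonzero q ∈ L_{p,0} has a local minimum point in ℝⁿ. -/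
open MeasureTheory Filter Topology Metric

noncomputable section

set_option linter.unusedSimpArgs false

open MvPolynomial in
/-- evaluation of a polynomial as a function on Euclidean space -/
def ev {n : ℕ} (P : MvPolynomial (Fin n) ℝ) : En n → ℝ :=
  fun x => MvPolynomial.eval (fun i => x i) P

open MvPolynomial in
theorem ev_hasFDerivAt {n : ℕ} (P : MvPolynomial (Fin n) ℝ) (x : En n) :
    HasFDerivAt (ev P) (∑ i, ev (pderiv i P) x • (EuclideanSpace.proj i : En n →L[ℝ] ℝ)) x := by
  induction P using MvPolynomial.induction_on with
  | C a =>
    have : ev (n := n) (C a) = fun _ => a := by funext x; simp [ev]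
    rw [this]
    convert hasFDerivAt_const a x using 1
    simp [ev]
  | add p q hp hq =>
    have : ev (p + q) = fun x => ev p x + ev q x := by funext x; simp [ev]
    rw [this]
    refine (hp.add hq).congr_fderiv ?_
    symm
    rw [← Finset.sum_add_distrib]
    refine Finset.sum_congr rfl fun i _ => ?_
    simp [ev, add_smul]
  | mul_X p j hp =>
    have : ev (p * X j) = fun x => ev p x * x j := by funext x; simp [ev]
    rw [this]
    have h2 : HasFDerivAt (fun x : En n => x j) (EuclideanSpace.proj j : En n →L[ℝ] ℝ) x :=
      (EuclideanSpace.proj j : En n →L[ℝ] ℝ).hasFDerivAt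
    refine (hp.mul h2).congr_fderiv ?_
    symm
    ext u
    simp only [ev, pderiv_mul, pderiv_X, map_add, map_mul, eval_X, add_smul,
      Finset.sum_add_distrib, add_apply, sum_apply,
      smul_apply, smul_eq_mul, PiLp.proj_apply, Finset.mul_sum]
    rw [add_comm]
    congr 1
    · rw [Finset.sum_eq_single j]
      · simp
      · intro b _ hb
        simp [Pi.single_apply, hb.symm]
      · simp
    · refine Finset.sum_congr rfl fun i _ => ?_
      ring

open MvPolynomial in
theorem ev_fderiv {n : ℕ} (P : MvPolynomial (Fin n) ℝ) (x u : En n) :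
    fderiv ℝ (ev P) x u = ∑ i, ev (pderiv i P) x * u i := by
  rw [(ev_hasFDerivAt P x).fderiv]
  simp

open MvPolynomial in
theorem pd1_ev {n : ℕ} (i : Fin n) (P : MvPolynomial (Fin n) ℝ) :
    pd1 n i (ev P) = ev (pderiv i P) := by
  funext x
  simp only [pd1]
  rw [ev_fderiv, Finset.sum_eq_single i]
  · simp
  · intro b _ hb
    simp [hb]
  · simp

open MvPolynomial in
theorem pderiv_comm' {n : ℕ} (i j : Fin n) (P : MvPolynomial (Fin n) ℝ) :
    pderiv i (pderiv j P) = pderiv j (pderiv i P) := by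
  ext m
  by_cases h : i = j
  · rw [h]
  · simp [coeff_pderiv, h, Ne.symm h, add_right_comm]
    ring

/-- iterated formal derivative along a list -/
def Dl {n : ℕ} (l : List (Fin n)) (P : MvPolynomial (Fin n) ℝ) : MvPolynomial (Fin n) ℝ :=
  l.foldr (fun i Q => MvPolynomial.pderiv i Q) P

theorem prod_pd1_ev {n : ℕ} (l : List (Fin n)) (P : MvPolynomial (Fin n) ℝ) :
    (l.map (pd1 n)).prod (ev P) = ev (Dl l P) := by
  induction l with
  | nil => rfl
  | cons i l ih =>
    rw [List.map_cons, List.prod_cons]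
    change pd1 n i ((l.map (pd1 n)).prod (ev P)) = _
    rw [ih, pd1_ev]
    rfl

/-- the list of indices of a multi-index -/
def lst {n : ℕ} (α : Fin n → ℕ) : List (Fin n) :=
  (List.ofFn fun i => List.replicate (α i) i).flatten

theorem pdm_ev {n : ℕ} (α : Fin n → ℕ) (P : MvPolynomial (Fin n) ℝ) :
    pdm n α (ev P) = ev (Dl (lst α) P) := by
  rw [← prod_pd1_ev, pdm, lst, List.map_flatten, List.prod_flatten, List.map_ofFn, List.map_ofFn]
  have : (fun i => pd1 n i ^ α i) =
      (List.prod ∘ List.map (pd1 n) ∘ fun i => List.replicate (α i) i) := by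
    funext i
    simp
  rw [this]

theorem lst_sum {n : ℕ} (α : Fin n →₀ ℕ) :
    ((lst α).map fun i => Finsupp.single i 1).sum = α := by
  rw [lst, List.map_flatten, List.sum_flatten, List.map_ofFn, List.map_ofFn, List.sum_ofFn]
  ext j
  simp

theorem lst_length {n : ℕ} (α : Fin n → ℕ) : (lst α).length = mdeg α := by
  rw [lst, List.length_flatten, List.map_ofFn, List.sum_ofFn, mdeg]
  simp

open MvPolynomial in
theorem coeff_Dl {n : ℕ} (l : List (Fin n)) : ∀ m : Fin n →₀ ℕ, ∃ c : ℝ, c ≠ 0 ∧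
    ∀ P : MvPolynomial (Fin n) ℝ,
      coeff m (Dl l P) = c * coeff (m + (l.map fun i => Finsupp.single i 1).sum) P := by
  induction l with
  | nil => intro m; exact ⟨1, one_ne_zero, by simp [Dl]⟩
  | cons i l ih =>
    intro m
    obtain ⟨c, hc, h⟩ := ih (m + Finsupp.single i 1)
    refine ⟨c * (m i + 1), mul_ne_zero hc (by positivity), fun P => ?_⟩
    have : Dl (i :: l) P = pderiv i (Dl l P) := rfl
    rw [this, coeff_pderiv, h]
    simp [add_assoc]
    ring

theorem ev_zero {n : ℕ} (P : MvPolynomial (Fin n) ℝ) :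
    ev P 0 = MvPolynomial.coeff 0 P := by
  have : (fun i : Fin n => (0 : En n) i) = 0 := by funext i; simp
  rw [ev, this, MvPolynomial.eval_zero, MvPolynomial.constantCoeff_eq]

/-- affine substitution -/
def aff {n : ℕ} (h : ℝ) (y : En n) : MvPolynomial (Fin n) ℝ →ₐ[ℝ] MvPolynomial (Fin n) ℝ :=
  MvPolynomial.aeval fun i => MvPolynomial.C h * MvPolynomial.X i + MvPolynomial.C (y i)

open MvPolynomial in
theorem ev_aff {n : ℕ} (h : ℝ) (y x : En n) (P : MvPolynomial (Fin n) ℝ) :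
    ev (aff h y P) x = ev P (y + h • x) := by
  induction P using MvPolynomial.induction_on with
  | C a => simp [ev, aff]
  | add p q hp hq =>
    simp only [ev, map_add] at *
    rw [hp, hq]
  | mul_X p j hp =>
    simp only [ev, map_mul] at *
    rw [hp]
    simp [aff, add_comm]

open MvPolynomial in
theorem pderiv_aff {n : ℕ} (h : ℝ) (y : En n) (i : Fin n) (P : MvPolynomial (Fin n) ℝ) :
    pderiv i (aff h y P) = C h * aff h y (pderiv i P) := by
  induction P using MvPolynomial.induction_on with
  | C a => simp [aff]
  | add p q hp hq => simp only [map_add, hp, hq, mul_add]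
  | mul_X p j hp =>
    rw [map_mul, pderiv_mul, hp, pderiv_mul, map_add, map_mul, map_mul]
    by_cases hj : j = i
    · subst hj
      simp [aff]
      ring
    · simp [aff, pderiv_X_of_ne hj]
      ring

open MvPolynomial in
theorem Dl_C_mul {n : ℕ} (a : ℝ) (l : List (Fin n)) (P : MvPolynomial (Fin n) ℝ) :
    Dl l (C a * P) = C a * Dl l P := by
  induction l with
  | nil => rfl
  | cons i l ih =>
    change pderiv i (Dl l (C a * P)) = C a * pderiv i (Dl l P)
    rw [ih, pderiv_C_mul]

open MvPolynomial in
theorem Dl_aff {n : ℕ} (h : ℝ) (y : En n) (l : List (Fin n)) (P : MvPolynomial (Fin n) ℝ) :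
    Dl l (aff h y P) = C (h ^ l.length) * aff h y (Dl l P) := by
  induction l with
  | nil => simp [Dl]
  | cons i l ih =>
    change pderiv i (Dl l (aff h y P)) = _ * aff h y (pderiv i (Dl l P))
    rw [ih, pderiv_C_mul, pderiv_aff, List.length_cons, pow_succ, C_mul]
    ring

theorem mdeg_degree {n : ℕ} (α : Fin n →₀ ℕ) : mdeg α = α.sum fun _ e => e := by
  rw [Finsupp.sum_fintype _ _ (by simp)]
  rfl

open MvPolynomial in
/-- Taylor coefficients of the rescaled polynomial -/
theorem taylor_coeff {n : ℕ} (α : Fin n →₀ ℕ) : ∃ c : ℝ, c ≠ 0 ∧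
    (∀ P : MvPolynomial (Fin n) ℝ, c * coeff α P = pdm n α (ev P) 0) ∧
    (∀ (P : MvPolynomial (Fin n) ℝ) (t h : ℝ) (y : En n), c * coeff α (C t * aff h y P) =
      t * h ^ mdeg α * pdm n α (ev P) y) := by
  obtain ⟨c, hc, hcP⟩ := coeff_Dl (lst α) 0
  have key : ∀ P : MvPolynomial (Fin n) ℝ, c * coeff α P = pdm n α (ev P) 0 := by
    intro P
    rw [pdm_ev, ev_zero, hcP, lst_sum, zero_add]
  refine ⟨c, hc, key, fun P t h y => ?_⟩
  rw [key, pdm_ev, Dl_C_mul, Dl_aff, pdm_ev, lst_length]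
  have := ev_aff h y 0 (Dl (lst α) P)
  simp only [smul_zero, add_zero] at this
  rw [← this]
  simp [ev]
  ring

open MvPolynomial in
theorem coeff_aff_eq_zero {n r : ℕ} (α : Fin n →₀ ℕ) (hα : r < mdeg α)
    (P : MvPolynomial (Fin n) ℝ) (hP : P.totalDegree ≤ r) (t h : ℝ) (y : En n) :
    coeff α (C t * aff h y P) = 0 := by
  obtain ⟨c, hc, -, h2⟩ := taylor_coeff α
  have h0 : Dl (lst α) P = 0 := by
    ext m
    obtain ⟨c', -, h3⟩ := coeff_Dl (lst α) m
    rw [h3, lst_sum, coeff_zero]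
    rw [coeff_eq_zero_of_totalDegree_lt, mul_zero]
    rw [← Finsupp.degree_apply, map_add]
    have : α.degree = mdeg α := by rw [mdeg_degree]; rfl
    omega
  have := h2 P t h y
  rw [pdm_ev, h0] at this
  simpa [ev, hc] using this

/-- multi-indices of degree at most `r`, as finitely supported functions -/
def mset (n r : ℕ) : Finset (Fin n →₀ ℕ) :=
  (midx n r 0).image fun α => Finsupp.equivFunOnFinite.symm α

theorem mem_mset {n r : ℕ} (α : Fin n →₀ ℕ) : α ∈ mset n r ↔ mdeg α ≤ r := by
  simp only [mset, midx, Finset.mem_image, Finset.mem_filter, Finset.mem_Iic]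
  constructor
  · rintro ⟨β, ⟨-, -, h⟩, rfl⟩
    simpa using h
  · intro h
    refine ⟨α, ⟨fun i => ?_, Nat.zero_le _, h⟩, by ext; simp⟩
    exact (Finset.single_le_sum (f := fun i => α i) (fun _ _ => Nat.zero_le _)
      (Finset.mem_univ i)).trans h

open MvPolynomial in
theorem ev_eq_sum {n r : ℕ} (P : MvPolynomial (Fin n) ℝ)
    (hP : ∀ α : Fin n →₀ ℕ, r < mdeg α → coeff α P = 0) (x : En n) :
    ev P x = ∑ α ∈ mset n r, coeff α P * ∏ i, x i ^ α i := by
  rw [ev, eval_eq']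
  refine Finset.sum_subset (fun α hα => ?_) (fun α _ h => ?_)
  · rw [mem_mset]
    by_contra hlt
    exact (mem_support_iff.1 hα) (hP α (not_le.1 hlt))
  · rw [notMem_support_iff.1 h, zero_mul]

open MvPolynomial in
theorem scaled_tendsto {n r : ℕ} (P Q : MvPolynomial (Fin n) ℝ) (hP : P.totalDegree ≤ r)
    (hQ : Q.totalDegree ≤ r) (hQ0 : ev Q 0 = 0) (y : ℕ → En n) (τ h : ℕ → ℝ)
    (H : ∀ α : Fin n → ℕ, 1 ≤ mdeg α → mdeg α ≤ r →
      Tendsto (fun j => τ j * h j ^ (mdeg α) * pdm n α (ev P) (y j)) atTop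
        (nhds (pdm n α (ev Q) 0))) (R ε : ℝ) (hε : 0 < ε) :
    ∀ᶠ j in atTop, ∀ x : En n, ‖x‖ ≤ R →
      |τ j * (ev P (y j + h j • x) - ev P (y j)) - ev Q x| < ε := by
  let S : ℕ → MvPolynomial (Fin n) ℝ := fun j => C (τ j) * aff (h j) (y j) P
  have hS : ∀ j x, ev (S j) x = τ j * ev P (y j + h j • x) := by
    intro j x
    rw [← ev_aff]
    simp [S, ev]
  let b : ℕ → (Fin n →₀ ℕ) → ℝ := fun j α =>
    if α = 0 then 0 else |coeff α (S j) - coeff α Q|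
  have hb : ∀ α ∈ mset n r, Tendsto (fun j => b j α) atTop (nhds 0) := by
    intro α hα
    by_cases h0 : α = 0
    · simp [b, h0]
    · simp only [b, h0, if_false]
      obtain ⟨c, hc, h1, h2⟩ := taylor_coeff α
      have hd : 1 ≤ mdeg α := by
        by_contra hlt
        apply h0
        have : mdeg α = 0 := by omega
        simp only [mdeg, Finset.sum_eq_zero_iff, Finset.mem_univ, true_imp_iff] at this
        ext i
        simp [this i]
      have h3 := H α hd ((mem_mset α).1 hα)
      have h4 : Tendsto (fun j => coeff α (S j)) atTop (nhds (coeff α Q)) := by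
        have h5 := h3.const_mul c⁻¹
        rw [← h1] at h5
        simp_rw [← h2, inv_mul_cancel_left₀ hc] at h5
        exact h5
      have h6 := (h4.sub_const (coeff α Q)).abs
      simpa using h6
  have hsum : Tendsto (fun j => ∑ α ∈ mset n r, b j α * ∏ i, R ^ α i) atTop (nhds 0) := by
    have := tendsto_finsetSum (mset n r) fun α hα => (hb α hα).mul_const (∏ i, R ^ α i)
    simpa using this
  filter_upwards [hsum.eventually (gt_mem_nhds hε)] with j hj x hx
  refine lt_of_le_of_lt ?_ hj
  have e1 : τ j * (ev P (y j + h j • x) - ev P (y j)) - ev Q x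
      = (ev (S j) x - coeff 0 (S j)) - (ev Q x - coeff 0 Q) := by
    rw [← ev_zero, ← ev_zero, hQ0, hS, hS]
    simp
    ring
  have e2 : ∀ T : MvPolynomial (Fin n) ℝ, (∀ α : Fin n →₀ ℕ, r < mdeg α → coeff α T = 0) →
      ev T x - coeff 0 T = ∑ α ∈ mset n r, (if α = 0 then 0 else coeff α T) * ∏ i, x i ^ α i := by
    intro T hT
    have h0m : (0 : Fin n →₀ ℕ) ∈ mset n r := by rw [mem_mset]; simp [mdeg]
    rw [ev_eq_sum T hT x, ← Finset.add_sum_erase _ _ h0m, ← Finset.add_sum_erase _ _ h0m]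
    simp only [Finsupp.coe_zero, Pi.zero_apply, pow_zero, Finset.prod_const_one, mul_one, if_true,
      zero_mul, zero_add]
    rw [add_sub_cancel_left]
    refine Finset.sum_congr rfl fun α hα => ?_
    rw [if_neg (Finset.ne_of_mem_erase hα)]
  rw [e1, e2 _ (fun α hα => coeff_aff_eq_zero α hα P hP _ _ _), e2 _ (fun α hα => ?_),
    ← Finset.sum_sub_distrib]
  · refine (Finset.abs_sum_le_sum_abs _ _).trans (Finset.sum_le_sum fun α _ => ?_)
    rw [← sub_mul, abs_mul, Finset.abs_prod]
    have hbe : |(if α = 0 then 0 else coeff α (S j)) - (if α = 0 then 0 else coeff α Q)| = b j α := by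
      by_cases h0 : α = 0 <;> simp [b, h0]
    rw [hbe]
    refine mul_le_mul_of_nonneg_left ?_ (by rw [← hbe]; positivity)
    refine Finset.prod_le_prod (fun i _ => abs_nonneg _) fun i _ => ?_
    rw [abs_pow]
    refine pow_le_pow_left₀ (abs_nonneg _) ?_ _
    exact (by simpa using PiLp.norm_apply_le x i : |x i| ≤ ‖x‖).trans hx
  · apply coeff_eq_zero_of_totalDegree_lt
    rw [← Finsupp.degree_apply]
    have : α.degree = mdeg α := by rw [mdeg_degree]; rfl
    omega

theorem second_order {f f1 : ℝ → ℝ} {c : ℝ} (hmin : IsLocalMin f 0)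
    (h1 : ∀ t, HasDerivAt f (f1 t) t) (h2 : HasDerivAt f1 c 0) : f1 0 = 0 ∧ 0 ≤ c := by
  have h0 : f1 0 = 0 := hmin.hasDerivAt_eq_zero (h1 0)
  refine ⟨h0, ?_⟩
  by_contra hc
  have hd : deriv f = f1 := funext fun t => (h1 t).deriv
  have hmax : IsLocalMax f 0 := by
    apply isLocalMax_of_deriv_deriv_neg
    · rw [hd, h2.deriv]; exact not_le.1 hc
    · rw [hd, h0]
    · exact (h1 0).continuousAt
  have hconst : f =ᶠ[nhds 0] fun _ => f 0 := by
    filter_upwards [hmin, hmax] with t ha hb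
    exact le_antisymm hb ha
  have h3 : f1 =ᶠ[nhds 0] fun _ => 0 := by
    have := hconst.deriv
    rw [hd] at this
    simpa using this
  have h4 : c = 0 := by
    rw [← h2.deriv, h3.deriv_eq]
    simp
  exact hc h4.ge

open MvPolynomial in
theorem ev_line {n : ℕ} (P : MvPolynomial (Fin n) ℝ) (z u : En n) (t : ℝ) :
    HasDerivAt (fun t : ℝ => ev P (z + t • u)) (∑ i, ev (pderiv i P) (z + t • u) * u i) t := by
  have h1 : HasDerivAt (fun t : ℝ => z + t • u) u t := by
    simpa using ((hasDerivAt_id t).smul_const u).const_add z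
  have h2 := (ev_hasFDerivAt P (z + t • u)).comp_hasDerivAt t h1
  convert! h2 using 1
  simp

theorem exp_line {n : ℕ} (a : ℝ) (v u : En n) (t : ℝ) :
    HasDerivAt (fun t : ℝ => Real.exp (-a * ‖v + t • u‖ ^ 2))
      (Real.exp (-a * ‖v + t • u‖ ^ 2) * (-a * (2 * inner ℝ v u + 2 * t * ‖u‖ ^ 2))) t := by
  have e : ∀ t : ℝ, ‖v + t • u‖ ^ 2 = ‖v‖ ^ 2 + 2 * t * inner ℝ v u + t ^ 2 * ‖u‖ ^ 2 := by
    intro t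
    rw [norm_add_sq_real, inner_smul_right, norm_smul, mul_pow, Real.norm_eq_abs, sq_abs]
    ring
  simp_rw [e]
  apply HasDerivAt.exp
  apply HasDerivAt.const_mul
  have h1 : HasDerivAt (fun t : ℝ => 2 * t * inner ℝ v u) (2 * 1 * inner ℝ v u) t :=
    ((hasDerivAt_id t).const_mul 2).mul_const _
  have h2 : HasDerivAt (fun t : ℝ => t ^ 2 * ‖u‖ ^ 2) ((2 * t) * ‖u‖ ^ 2) t := by
    have := (hasDerivAt_pow 2 t).mul_const (‖u‖ ^ 2)
    simpa using this
  have h3 : HasDerivAt (fun y : ℝ => ‖v‖ ^ 2 + 2 * y * inner ℝ v u + y ^ 2 * ‖u‖ ^ 2)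
    (2 * 1 * inner ℝ v u + (2 * t) * ‖u‖ ^ 2) t := (h1.const_add (‖v‖ ^ 2)).add h2
  rw [mul_one] at h3
  exact h3

open MvPolynomial in
theorem touch {n : ℕ} (P : MvPolynomial (Fin n) ℝ) (τ h ε a : ℝ) (y y0 x1 : En n)
    (hmin : IsLocalMin (fun x => τ * (ev P (y + h • x) - ev P y)
      - ε * Real.exp (-a * ‖x - y0‖ ^ 2)) x1) (u : En n) (E : ℝ)
    (hE : E = ε * Real.exp (-a * ‖x1 - y0‖ ^ 2)) :
    τ * h * (∑ i, ev (pderiv i P) (y + h • x1) * u i) = -(2 * a * E) * inner ℝ (x1 - y0) u ∧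
    E * (4 * a ^ 2 * (inner ℝ (x1 - y0) u) ^ 2 - 2 * a * ‖u‖ ^ 2) ≤
      τ * h ^ 2 * ∑ i, (∑ j, ev (pderiv j (pderiv i P)) (y + h • x1) * u j) * u i := by
  set z := y + h • x1 with hz
  set v := x1 - y0 with hv
  let f : ℝ → ℝ := fun t => τ * (ev P (z + t • (h • u)) - ev P y)
    - ε * Real.exp (-a * ‖v + t • u‖ ^ 2)
  let f1 : ℝ → ℝ := fun t => τ * (∑ i, ev (pderiv i P) (z + t • (h • u)) * (h • u) i)
    - ε * (Real.exp (-a * ‖v + t • u‖ ^ 2) * (-a * (2 * inner ℝ v u + 2 * t * ‖u‖ ^ 2)))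
  have hf : ∀ t, HasDerivAt f (f1 t) t := fun t =>
    (((ev_line P z (h • u) t).sub_const _).const_mul τ).sub ((exp_line a v u t).const_mul ε)
  have hlin : HasDerivAt (fun t : ℝ => -a * (2 * inner ℝ v u + 2 * t * ‖u‖ ^ 2))
      (-a * (2 * ‖u‖ ^ 2)) 0 := by
    have := (((hasDerivAt_id (0 : ℝ)).const_mul 2).mul_const (‖u‖ ^ 2)).const_add (2 * inner ℝ v u)
    simpa using this.const_mul (-a)
  have hf1 := ((HasDerivAt.fun_sum (u := Finset.univ) fun i _ =>
      (ev_line (pderiv i P) z (h • u) 0).mul_const ((h • u) i)).const_mul τ).sub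
      (((exp_line a v u 0).mul hlin).const_mul ε)
  have hmin0 : IsLocalMin f 0 := by
    have hcont : ContinuousAt (fun t : ℝ => x1 + t • u) 0 := by fun_prop
    have h00 : x1 + (0 : ℝ) • u = x1 := by simp
    have hg : ∀ t : ℝ, f t = (fun x => τ * (ev P (y + h • x) - ev P y)
        - ε * Real.exp (-a * ‖x - y0‖ ^ 2)) (x1 + t • u) := by
      intro t
      have e1 : z + t • (h • u) = y + h • (x1 + t • u) := by
        rw [hz, smul_add, smul_comm t h u, add_assoc]
      have e2 : v + t • u = x1 + t • u - y0 := by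
        rw [hv]
        abel
      simp only [f, e1, e2]
    have hm := hcont.tendsto.eventually (by rw [h00]; exact hmin)
    have : ∀ᶠ t in nhds (0 : ℝ), f 0 ≤ f t := by
      filter_upwards [hm] with t ht
      rw [hg, hg, h00]
      exact ht
    exact this
  obtain ⟨h1, h2⟩ := second_order hmin0 hf hf1
  constructor
  · simp only [f1, zero_smul, add_zero, mul_zero, zero_mul, PiLp.smul_apply, smul_eq_mul] at h1
    have e : ∑ i, ev (pderiv i P) z * (h * u i) = h * ∑ i, ev (pderiv i P) z * u i := by
      rw [Finset.mul_sum]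
      exact Finset.sum_congr rfl fun i _ => by ring
    rw [e] at h1
    rw [hE]
    linarith
  · simp only [zero_smul, add_zero, mul_zero, zero_mul, PiLp.smul_apply, smul_eq_mul] at h2
    have e : ∑ i, (∑ j, ev (pderiv j (pderiv i P)) z * (h * u j)) * (h * u i)
        = h ^ 2 * ∑ i, (∑ j, ev (pderiv j (pderiv i P)) z * u j) * u i := by
      rw [Finset.mul_sum]
      refine Finset.sum_congr rfl fun i _ => ?_
      have : ∑ j, ev (pderiv j (pderiv i P)) z * (h * u j)
        = h * ∑ j, ev (pderiv j (pderiv i P)) z * u j := by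
        rw [Finset.mul_sum]
        exact Finset.sum_congr rfl fun i _ => by ring
      rw [this]
      ring
    rw [e] at h2
    rw [hE]
    linarith

open MvPolynomial in
theorem hess_ev {n : ℕ} (P : MvPolynomial (Fin n) ℝ) (z : En n) (i j : Fin n) :
    hessM n (ev P) z i j = ev (pderiv i (pderiv j P)) z := by
  rw [hessM, pd1_ev, pd1_ev]

open MvPolynomial in
theorem hess_herm {n : ℕ} (P : MvPolynomial (Fin n) ℝ) (z : En n) :
    (hessM n (ev P) z).IsHermitian := by
  ext i j
  rw [Matrix.conjTranspose_apply, hess_ev, hess_ev, pderiv_comm']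
  rfl

open MvPolynomial in
theorem touch_ineq {n : ℕ} (P : MvPolynomial (Fin n) ℝ) (τ h ε a C : ℝ) (y y0 x1 : En n)
    (hτ : 0 < τ) (hh : 0 < h) (hε : 0 < ε) (ha : 0 < a) (hC : 0 < C)
    (hmin : IsLocalMin (fun x => τ * (ev P (y + h • x) - ev P y)
      - ε * Real.exp (-a * ‖x - y0‖ ^ 2)) x1)
    (hloc : lamPos n (ev P) (y + h • x1) ≤
      C * (lamNeg n (ev P) (y + h • x1) + ‖gradient (ev P) (y + h • x1)‖ ^ 2)) :
    2 * a * ‖x1 - y0‖ ^ 2 - n ≤ C * (n + 2 * a * ε * ‖x1 - y0‖ ^ 2 / τ) := by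
  obtain ⟨E, hE⟩ : ∃ E, E = ε * Real.exp (-a * ‖x1 - y0‖ ^ 2) := ⟨_, rfl⟩
  have hEpos : 0 < E := by rw [hE]; positivity
  have hEle : E ≤ ε := by
    rw [hE]
    refine mul_le_of_le_one_right hε.le (Real.exp_le_one_iff.2 ?_)
    have : 0 ≤ a * ‖x1 - y0‖ ^ 2 := by positivity
    linarith
  have T := fun u => touch P τ h ε a y y0 x1 hmin u E hE
  set z := y + h • x1 with hz
  set v := x1 - y0 with hv
  -- gradient
  have hgrad : (τ * h) • gradient (ev P) z = (-(2 * a * E)) • v := by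
    refine ext_inner_right ℝ fun u => ?_
    rw [inner_smul_left, inner_smul_left, gradient, InnerProductSpace.toDual_symm_apply, ev_fderiv]
    exact (T u).1
  have hgn : τ * h ^ 2 * ‖gradient (ev P) z‖ ^ 2 = 4 * a ^ 2 * E ^ 2 * ‖v‖ ^ 2 / τ := by
    have := congrArg (fun w => ‖w‖ ^ 2) hgrad
    simp only [norm_smul, mul_pow, Real.norm_eq_abs, sq_abs] at this
    rw [eq_div_iff hτ.ne']
    linarith
  -- eigenvalues
  have hH := hess_herm P z
  have hlam : hessEig n (ev P) z = hH.eigenvalues := by rw [hessEig, dif_pos hH]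
  have hev : ∀ k, E * (4 * a ^ 2 * (inner ℝ v (hH.eigenvectorBasis k)) ^ 2 - 2 * a) ≤
      τ * h ^ 2 * hH.eigenvalues k := by
    intro k
    have h1 := (T (hH.eigenvectorBasis k)).2
    rw [hH.eigenvectorBasis.norm_eq_one k] at h1
    have h2 : hH.eigenvalues k = ∑ i, (∑ j, ev (pderiv j (pderiv i P)) z *
        hH.eigenvectorBasis k j) * hH.eigenvectorBasis k i := by
      rw [hH.eigenvalues_eq k]
      simp only [dotProduct, Matrix.mulVec, RCLike.re_to_real]
      refine Finset.sum_congr rfl fun i _ => ?_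
      rw [mul_comm]
      congr 1
      refine Finset.sum_congr rfl fun j _ => ?_
      rw [hess_ev, pderiv_comm']
    rw [h2]
    simpa using h1
  have hT : 0 < τ * h ^ 2 := by positivity
  have hneg : τ * h ^ 2 * lamNeg n (ev P) z ≤ n * (2 * a * E) := by
    rw [lamNeg, hlam, Finset.mul_sum]
    calc _ ≤ ∑ _k : Fin n, 2 * a * E := by
          refine Finset.sum_le_sum fun k _ => ?_
          rw [mul_max_of_nonneg _ _ hT.le]
          refine max_le ?_ (by rw [mul_zero]; positivity)
          have := hev k
          have h3 : 0 ≤ E * (4 * a ^ 2 * (inner ℝ v (hH.eigenvectorBasis k)) ^ 2) := by positivity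
          linarith
      _ = _ := by simp
  have hpars : ∑ k, (inner ℝ v (hH.eigenvectorBasis k)) ^ 2 = ‖v‖ ^ 2 := by
    rw [← hH.eigenvectorBasis.sum_sq_norm_inner_left v]
    simp
  have hpos : E * (4 * a ^ 2 * ‖v‖ ^ 2 - 2 * a * n) ≤ τ * h ^ 2 * lamPos n (ev P) z := by
    rw [lamPos, hlam, Finset.mul_sum]
    calc E * (4 * a ^ 2 * ‖v‖ ^ 2 - 2 * a * n)
        = ∑ k, E * (4 * a ^ 2 * (inner ℝ v (hH.eigenvectorBasis k)) ^ 2 - 2 * a) := by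
          rw [← Finset.mul_sum, Finset.sum_sub_distrib, ← Finset.mul_sum, hpars]
          simp
          left; ring
      _ ≤ _ := by
          refine Finset.sum_le_sum fun k _ => (hev k).trans ?_
          exact mul_le_mul_of_nonneg_left (le_max_left _ _) hT.le
  have hfin : E * (4 * a ^ 2 * ‖v‖ ^ 2 - 2 * a * n) ≤
      C * (n * (2 * a * E) + 4 * a ^ 2 * E ^ 2 * ‖v‖ ^ 2 / τ) := by
    calc _ ≤ τ * h ^ 2 * lamPos n (ev P) z := hpos
      _ ≤ τ * h ^ 2 * (C * (lamNeg n (ev P) z + ‖gradient (ev P) z‖ ^ 2)) :=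
          mul_le_mul_of_nonneg_left hloc hT.le
      _ = C * (τ * h ^ 2 * lamNeg n (ev P) z + τ * h ^ 2 * ‖gradient (ev P) z‖ ^ 2) := by ring
      _ ≤ _ := by
          rw [hgn]
          gcongr
  have hdiv : 2 * a * ‖v‖ ^ 2 - n ≤ C * (n + 2 * a * E * ‖v‖ ^ 2 / τ) := by
    have hpE : 0 < 2 * a * E := by positivity
    refine le_of_mul_le_mul_left ?_ hpE
    calc _ = E * (4 * a ^ 2 * ‖v‖ ^ 2 - 2 * a * n) := by ring
      _ ≤ _ := hfin
      _ = _ := by ring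
  refine hdiv.trans ?_
  gcongr

theorem ev_continuous {n : ℕ} (P : MvPolynomial (Fin n) ℝ) : Continuous (ev P) :=
  continuous_iff_continuousAt.2 fun x => (ev_hasFDerivAt P x).continuousAt

theorem ev_analytic {n : ℕ} (P : MvPolynomial (Fin n) ℝ) : AnalyticOnNhd ℝ (ev P) Set.univ := by
  have := AnalyticOnNhd.aeval_mvPolynomial (𝕜 := ℝ) (E := En n) (f := fun x i => x i)
    (s := Set.univ) (fun i => (EuclideanSpace.proj i : En n →L[ℝ] ℝ).analyticOnNhd _) P
  exact this

theorem no_min_core {n r : ℕ} (P Q : MvPolynomial (Fin n) ℝ) (hP : P.totalDegree ≤ r)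
    (hQ : Q.totalDegree ≤ r) (σ C : ℝ) (hσ : 0 < σ) (hC : 0 < C)
    (hloc : ∀ x : En n, ‖x‖ < σ →
      lamPos n (ev P) x ≤ C * (lamNeg n (ev P) x + ‖gradient (ev P) x‖ ^ 2))
    (hQ0 : ev Q 0 = 0) (y : ℕ → En n) (τ h : ℕ → ℝ) (hy : Tendsto y atTop (nhds 0))
    (hτ : ∀ j, 0 < τ j) (hh : ∀ j, 0 < h j) (hτt : Tendsto τ atTop atTop)
    (hht : Tendsto h atTop (nhds 0))
    (H : ∀ α : Fin n → ℕ, 1 ≤ mdeg α → mdeg α ≤ r →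
      Tendsto (fun j => τ j * h j ^ (mdeg α) * pdm n α (ev P) (y j)) atTop
        (nhds (pdm n α (ev Q) 0)))
    (x0 : En n) (R : ℝ) (hR : 0 < R) (hmin : ∀ x, ‖x - x0‖ < R → ev Q x0 ≤ ev Q x)
    (y0 : En n) (hy0 : ‖y0 - x0‖ < R / 4) : ev Q y0 = ev Q x0 := by
  by_contra hne
  have hgt : ev Q x0 < ev Q y0 := lt_of_le_of_ne (hmin y0 (by linarith)) (Ne.symm hne)
  set m := ev Q x0 with hm
  obtain ⟨μ, hμ, hμ2⟩ : ∃ μ > 0, m + μ < ev Q y0 :=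
    ⟨(ev Q y0 - m) / 2, by linarith, by linarith⟩
  obtain ⟨s', hs', hball⟩ := Metric.eventually_nhds_iff.1
    ((ev_continuous Q).continuousAt.eventually (lt_mem_nhds hμ2))
  obtain ⟨s, hs, hss⟩ : ∃ s > 0, s < s' := ⟨s' / 2, by linarith, by linarith⟩
  -- the exponent
  obtain ⟨a, ha, has⟩ : ∃ a > 0, n + C * n + C < 2 * a * s ^ 2 := by
    refine ⟨(n + C * n + C + 1) / (2 * s ^ 2), by positivity, ?_⟩
    have : 2 * ((n + C * n + C + 1) / (2 * s ^ 2)) * s ^ 2 = n + C * n + C + 1 := by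
      field_simp
    linarith
  set w : En n → ℝ := fun x => Real.exp (-a * ‖x - y0‖ ^ 2) with hw
  set w0 := Real.exp (-a * (R / 2) ^ 2) with hw0
  have hw0pos : 0 < w0 := Real.exp_pos _
  have hx0y0 : ‖x0 - y0‖ < R / 4 := by rw [norm_sub_rev]; exact hy0
  have hwx0 : w0 < w x0 := by
    rw [hw, hw0]
    apply Real.exp_lt_exp.2
    have : ‖x0 - y0‖ ^ 2 < (R / 2) ^ 2 := by
      apply pow_lt_pow_left₀ (by linarith) (norm_nonneg _) two_ne_zero
    nlinarith
  set δ := μ * (w x0 - w0) with hδ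
  have hδpos : 0 < δ := mul_pos hμ (by linarith)
  have hw1 : ∀ x, w x ≤ 1 := by
    intro x
    refine Real.exp_le_one_iff.2 ?_
    have : 0 ≤ a * ‖x - y0‖ ^ 2 := by positivity
    linarith
  -- choose j
  set R' := ‖y0‖ + R with hR'
  have ev1 := scaled_tendsto P Q hP hQ hQ0 y τ h H R' (δ / 3) (by linarith)
  have ev2 : ∀ᶠ j in atTop, ‖y j‖ + h j * R' < σ := by
    have : Tendsto (fun j => ‖y j‖ + h j * R') atTop (nhds (‖(0 : En n)‖ + 0 * R')) :=
      hy.norm.add (hht.mul_const _)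
    rw [norm_zero, zero_mul, zero_add] at this
    exact this.eventually (gt_mem_nhds hσ)
  have ev3 := hτt.eventually (eventually_ge_atTop (2 * a * μ * (R / 2) ^ 2))
  obtain ⟨j, h1, h2, h3⟩ := (ev1.and (ev2.and ev3)).exists
  set G : En n → ℝ := fun x => τ j * (ev P (y j + h j • x) - ev P (y j)) - μ * w x with hG
  have hGc : Continuous G := by
    have := ev_continuous P
    simp only [hG, hw]
    fun_prop
  obtain ⟨x1, hx1, hx1min⟩ := (isCompact_closedBall y0 (R / 2)).exists_isMinOn
    ⟨y0, mem_closedBall_self (by linarith)⟩ hGc.continuousOn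
  have hnb : ∀ x, ‖x - y0‖ ≤ R / 2 → ‖x‖ ≤ R' := by
    intro x hx
    have : ‖x‖ ≤ ‖x - y0‖ + ‖y0‖ := by simpa using norm_add_le (x - y0) y0
    linarith
  have hnm : ∀ x, ‖x - y0‖ ≤ R / 2 → m ≤ ev Q x := by
    intro x hx
    apply hmin
    have : ‖x - x0‖ ≤ ‖x - y0‖ + ‖y0 - x0‖ := norm_sub_le_norm_sub_add_norm_sub _ _ _
    linarith
  rw [mem_closedBall, dist_eq_norm] at hx1
  have hGx1 : G x1 ≤ G x0 := hx1min (by rw [mem_closedBall, dist_eq_norm]; linarith)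
  have hGx0 : G x0 < m + δ / 3 - μ * w x0 := by
    have := (abs_lt.1 (h1 x0 (hnb x0 (by linarith)))).2
    simp only [hG]
    linarith
  have hlow := (abs_lt.1 (h1 x1 (hnb x1 hx1))).1
  have hlow' : ev Q x1 - δ / 3 - μ * w x1 < G x1 := by
    simp only [hG]
    linarith
  have hδe : δ = μ * w x0 - μ * w0 := by rw [hδ]; ring
  have hμw0 : 0 < μ * w0 := by positivity
  -- not on the outer sphere
  have hout : ‖x1 - y0‖ < R / 2 := by
    refine lt_of_le_of_ne hx1 fun heq => ?_
    have hwx1 : w x1 = w0 := by simp only [hw, hw0, heq]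
    have := hnm x1 hx1
    rw [hwx1] at hlow'
    linarith
  have hin : s < ‖x1 - y0‖ := by
    by_contra hle
    have hq : m + μ < ev Q x1 := hball (by rw [dist_eq_norm]; linarith)
    have : μ * w x1 ≤ μ := mul_le_of_le_one_right hμ.le (hw1 x1)
    linarith
  have hlm : IsLocalMin G x1 := by
    apply hx1min.isLocalMin
    exact mem_of_superset (isOpen_ball.mem_nhds (by rw [mem_ball, dist_eq_norm]; exact hout))
      ball_subset_closedBall
  have hz : ‖y j + h j • x1‖ < σ := by
    refine lt_of_le_of_lt ?_ h2
    refine (norm_add_le _ _).trans ?_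
    rw [norm_smul, Real.norm_of_nonneg (hh j).le]
    have := mul_le_mul_of_nonneg_left (hnb x1 hx1) (hh j).le
    linarith
  have key := touch_ineq P (τ j) (h j) μ a C (y j) y0 x1 (hτ j) (hh j) hμ ha hC hlm (hloc _ hz)
  have hs2 : s ^ 2 ≤ ‖x1 - y0‖ ^ 2 := pow_le_pow_left₀ hs.le hin.le 2
  have hr2 : ‖x1 - y0‖ ^ 2 ≤ (R / 2) ^ 2 := pow_le_pow_left₀ (norm_nonneg _) hx1 2
  have hlast : 2 * a * μ * ‖x1 - y0‖ ^ 2 / τ j ≤ 1 := by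
    rw [div_le_one (hτ j)]
    refine le_trans ?_ h3
    gcongr
  have h5 : 2 * a * s ^ 2 ≤ 2 * a * ‖x1 - y0‖ ^ 2 := by gcongr
  have h6 : C * (n + 2 * a * μ * ‖x1 - y0‖ ^ 2 / τ j) ≤ C * (n + 1) := by gcongr
  linarith

/-- limiting polynomials have no local minimum. -/
theorem limiting_polynomial_no_local_min (n r : ℕ) (hr : 1 ≤ r)
    (p : En n → ℝ) (hp : IsPolyDeg n r p) (σ C : ℝ) (hσ : 0 < σ) (hC : 0 < C)
    (hloc : ∀ x : En n, ‖x‖ < σ →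
      lamPos n p x ≤ C * (lamNeg n p x + ‖gradient p x‖ ^ 2)) :
    ∀ q : En n → ℝ, memL n r p q → q ≠ 0 → ∀ x : En n, ¬ IsLocalMin q x := by
  rintro q ⟨⟨Q, hQ, hQe⟩, hq0, y, τ, h, hy, hτ, hh, hτt, hht, H⟩ hq x0 hmin
  obtain ⟨P, hP, hPe⟩ := hp
  obtain rfl : p = ev P := funext hPe
  obtain rfl : q = ev Q := funext hQe
  obtain ⟨R, hR, hball⟩ := Metric.eventually_nhds_iff.1 hmin
  have hcore := no_min_core P Q hP hQ σ C hσ hC hloc hq0 y τ h hy hτ hh hτt hht H x0 R hR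
    (fun x hx => hball (by rwa [dist_eq_norm]))
  have hev : ev Q =ᶠ[nhds x0] fun _ => ev Q x0 := by
    filter_upwards [Metric.ball_mem_nhds x0 (show 0 < R / 4 by linarith)] with x hx
    exact hcore x (by rwa [mem_ball, dist_eq_norm] at hx)
  have hall := (ev_analytic Q).eq_of_eventuallyEq analyticOnNhd_const hev
  apply hq
  funext x
  rw [Pi.zero_apply, ← hq0, congrFun hall x, congrFun hall 0]

end
end

section
/- Let q : ℝⁿ → ℝ be a real polynomial and let C̃ ≥ 1 be a constant such that for every x ∈ ℝⁿ, Σ_{j∈I_{x,q}} λ_{q,j}(x) ≤ C̃ (M_q(x) + |∇q(x)|²). If q is not constant, then q has no local minimum point in ℝⁿ. -/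
open MeasureTheory Filter Topology Metric

noncomputable section

/-- `q` is (given by) a real polynomial. -/
def IsPolyFun (n : ℕ) (q : En n → ℝ) : Prop :=
  ∃ P : MvPolynomial (Fin n) ℝ, ∀ x : En n, q x = MvPolynomial.eval (fun i => x i) P

lemma aux_sec_test (g g' : ℝ → ℝ) (g2 L K : ℝ) (hg : ∀ s, HasDerivAt g (g' s) s)
    (hg' : HasDerivAt g' g2 0)
    (h : ∀ᶠ s in 𝓝 (0 : ℝ), g 0 + s * L + s ^ 2 * K ≤ g s) : g' 0 = L ∧ 2 * K ≤ g2 := by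
  have hd : ∀ K s : ℝ, HasDerivAt (fun s => g s - s * L - s ^ 2 * K)
      (g' s - L - 2 * s * K) s := by
    intro K s
    have h1 := ((hg s).sub ((hasDerivAt_id s).mul_const L)).sub
      ((hasDerivAt_pow 2 s).mul_const K)
    exact h1.congr_deriv (by norm_num)
  have h0 : g' 0 = L := by
    have hm : IsLocalMin (fun s => g s - s * L - s ^ 2 * K) 0 := by
      filter_upwards [h] with s hs
      simp only [zero_mul, sub_zero, ne_eq, OfNat.ofNat_ne_zero, not_false_eq_true, zero_pow]
      linarith
    have := hm.hasDerivAt_eq_zero (hd K 0)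
    linarith
  refine ⟨h0, ?_⟩
  by_contra! hc
  set δ := (2 * K - g2) / 4 with hδ
  have hδp : 0 < δ := by rw [hδ]; linarith
  have hdd : deriv (fun s => g s - s * L - s ^ 2 * (K - δ)) =
      fun s => g' s - L - 2 * s * (K - δ) := funext fun s => (hd (K - δ) s).deriv
  have hd2 : HasDerivAt (fun s => g' s - L - 2 * s * (K - δ)) (g2 - 2 * (K - δ)) 0 := by
    have h1 := (hg'.sub_const L).sub (((hasDerivAt_id (0 : ℝ)).const_mul 2).mul_const (K - δ))
    exact h1.congr_deriv (by norm_num)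
  have hmax : IsLocalMax (fun s => g s - s * L - s ^ 2 * (K - δ)) 0 := by
    apply isLocalMax_of_deriv_deriv_neg
    · rw [hdd, hd2.deriv, hδ]; linarith
    · rw [hdd]; simp [h0]
    · exact (hd (K - δ) 0).continuousAt
  have hev : ∀ᶠ s in 𝓝 (0 : ℝ), s ^ 2 * δ ≤ 0 := by
    filter_upwards [h, hmax] with s h1 h2
    simp only [zero_mul, sub_zero, ne_eq, OfNat.ofNat_ne_zero, not_false_eq_true, zero_pow] at h2
    linarith
  obtain ⟨r, hr, hb⟩ := Metric.eventually_nhds_iff.1 hev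
  have := @hb (r / 2) (by rw [Real.dist_eq, sub_zero, abs_of_pos (by linarith)]; linarith)
  have : 0 < (r / 2) ^ 2 * δ := by positivity
  linarith

lemma aux_hess_test {n : ℕ} {q : En n → ℝ} (hq : ContDiff ℝ 2 q) (x h : En n) (L K : ℝ)
    (hm : ∀ᶠ s in 𝓝 (0 : ℝ), q x + s * L + s ^ 2 * K ≤ q (x + s • h)) :
    fderiv ℝ q x h = L ∧ 2 * K ≤ fderiv ℝ (fderiv ℝ q) x h h := by
  have hl : ∀ s : ℝ, HasDerivAt (fun s : ℝ => x + s • h) h s := by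
    intro s
    simpa using ((hasDerivAt_id s).smul_const h).const_add x
  have hq1 : Differentiable ℝ q := hq.differentiable (by norm_num)
  have hq2 : Differentiable ℝ (fderiv ℝ q) :=
    (hq.fderiv_right (m := 1) (by norm_num)).differentiable (by norm_num)
  have h1 : ∀ s : ℝ, HasDerivAt (fun s : ℝ => q (x + s • h)) (fderiv ℝ q (x + s • h) h) s :=
    fun s => (hq1 _).hasFDerivAt.comp_hasDerivAt s (hl s)
  have h2 : HasDerivAt (fun s : ℝ => fderiv ℝ q (x + s • h) h)
      (fderiv ℝ (fderiv ℝ q) (x + (0 : ℝ) • h) h h) 0 := by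
    have := (hq2 (x + (0 : ℝ) • h)).hasFDerivAt.comp_hasDerivAt (0 : ℝ) (hl 0)
    have := this.clm_apply (hasDerivAt_const (0 : ℝ) h)
    simpa using this
  have := aux_sec_test _ _ _ L K h1 h2 (by simpa using hm)
  simpa using this

lemma aux_hessM {n : ℕ} {q : En n → ℝ} (hq : ContDiff ℝ 2 q) (x : En n) (i j : Fin n) :
    hessM n q x i j = fderiv ℝ (fderiv ℝ q) x (EuclideanSpace.single i 1)
      (EuclideanSpace.single j 1) := by
  have hq2 : Differentiable ℝ (fderiv ℝ q) :=
    (hq.fderiv_right (m := 1) (by norm_num)).differentiable (by norm_num)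
  unfold hessM pd1
  rw [fderiv_clm_apply (hq2 x) (by fun_prop)]
  simp

lemma aux_symm {n : ℕ} {q : En n → ℝ} (hq : ContDiff ℝ 2 q) (x : En n) :
    (hessM n q x).IsHermitian := by
  ext i j
  simp only [Matrix.conjTranspose_apply, star_trivial, aux_hessM hq]
  exact (hq.contDiffAt.isSymmSndFDerivAt (by simp)) _ _

lemma aux_quad {n : ℕ} {q : En n → ℝ} (hq : ContDiff ℝ 2 q) (x h : En n) :
    (⇑h) ⬝ᵥ (hessM n q x).mulVec (⇑h) = fderiv ℝ (fderiv ℝ q) x h h := by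
  have hh : h = ∑ i, h i • (EuclideanSpace.single i (1 : ℝ) : En n) := by
    ext j
    simp [Pi.single_apply]
  conv_rhs => rw [hh]
  simp only [map_sum, map_smul, _root_.sum_apply, _root_.smul_apply,
    smul_eq_mul, dotProduct, Matrix.mulVec, aux_hessM hq, Finset.mul_sum]
  rw [Finset.sum_comm]
  refine Finset.sum_congr rfl fun i _ => Finset.sum_congr rfl fun j _ => ?_
  ring

/-- Eigenvalue bounds from a Hessian lower bound. -/
lemma aux_eig {n : ℕ} {q : En n → ℝ} (hq : ContDiff ℝ 2 q) (x v : En n) (ε A : ℝ) (hε : 0 < ε)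
    (hA : 0 ≤ A)
    (hH : ∀ h : En n, 2 * (ε * (A * inner ℝ v h ^ 2 - ‖h‖ ^ 2)) ≤
      fderiv ℝ (fderiv ℝ q) x h h) :
    2 * ε * (A * ‖v‖ ^ 2 - n) ≤ lamPos n q x ∧ lamNeg n q x ≤ 2 * ε * n := by
  have hs := aux_symm hq x
  have he : hessEig n q x = hs.eigenvalues := by
    unfold hessEig; rw [dif_pos hs]
  unfold lamPos lamNeg
  rw [he]
  constructor
  · calc 2 * ε * (A * ‖v‖ ^ 2 - n)
        = ∑ i, 2 * (ε * (A * inner ℝ v (EuclideanSpace.single i (1 : ℝ) : En n) ^ 2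
          - ‖(EuclideanSpace.single i (1 : ℝ) : En n)‖ ^ 2)) := by
          have hi : ∀ i, inner ℝ v (EuclideanSpace.single i (1 : ℝ) : En n) = v i := fun i => by
            rw [EuclideanSpace.inner_single_right]; simp
          simp [hi, ← Finset.mul_sum, Finset.sum_sub_distrib, EuclideanSpace.norm_sq_eq]
          ring
      _ ≤ ∑ i, hessM n q x i i := by
          refine Finset.sum_le_sum fun i _ => ?_
          rw [aux_hessM hq]
          exact hH _
      _ = ∑ i, hs.eigenvalues i := by
          have := hs.trace_eq_sum_eigenvalues
          simpa [Matrix.trace] using this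
      _ ≤ _ := Finset.sum_le_sum fun i _ => le_max_left _ _
  · calc _ ≤ ∑ _i : Fin n, 2 * ε := by
          refine Finset.sum_le_sum fun i _ => max_le ?_ (by linarith)
          have h1 := hs.eigenvalues_eq i
          have h2 : hs.eigenvalues i = fderiv ℝ (fderiv ℝ q) x (hs.eigenvectorBasis i)
              (hs.eigenvectorBasis i) := by
            rw [← aux_quad hq, h1]; simp
          have h3 := hH (hs.eigenvectorBasis i)
          rw [hs.eigenvectorBasis.orthonormal.1 i] at h3
          have : 0 ≤ ε * (A * inner ℝ v (hs.eigenvectorBasis i) ^ 2) := by positivity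
          rw [h2]
          nlinarith
      _ = _ := by simp; ring

lemma aux_main {n : ℕ} {q : En n → ℝ} (hq : ContDiff ℝ 2 q) (Ct : ℝ) (hCt : 1 ≤ Ct)
    (hest : ∀ x : En n, lamPos n q x ≤ Ct * (lamNeg n q x + ‖gradient q x‖ ^ 2))
    (y z : En n) (hyz : y ≠ z) (r : ℝ) (hr : 0 < r)
    (hmin : ∀ x ∈ ball z r, q z ≤ q x)
    (hball : ∀ x ∈ ball y (dist z y), q z < q x) : False := by
  set v := y - z with hv
  have hv0 : 0 < ‖v‖ := norm_pos_iff.2 (sub_ne_zero.2 hyz)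
  set A : ℝ := (n + Ct * n + 1) / ‖v‖ ^ 2 with hA
  have hA0 : 0 < A := by positivity
  have hAv : A * ‖v‖ ^ 2 = n + Ct * n + 1 := by rw [hA]; field_simp
  obtain ⟨ρ, hρ0, hρr, hρv, hρA⟩ : ∃ ρ : ℝ, 0 < ρ ∧ ρ < r ∧ ρ ≤ ‖v‖ ∧ A * (‖v‖ * ρ) ≤ 1 / 2 := by
    refine ⟨min (r / 2) (min ‖v‖ (1 / (2 * A * ‖v‖))), by positivity, ?_, ?_, ?_⟩
    · exact lt_of_le_of_lt (min_le_left _ _) (by linarith)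
    · exact (min_le_right _ _).trans (min_le_left _ _)
    · calc _ ≤ A * (‖v‖ * (1 / (2 * A * ‖v‖))) := by
            gcongr
            exact (min_le_right _ _).trans (min_le_right _ _)
        _ = 1 / 2 := by field_simp
  set φ : En n → ℝ := fun x => inner ℝ v (x - z) + A * inner ℝ v (x - z) ^ 2 - ‖x - z‖ ^ 2 with hφ
  have hφc : Continuous φ := by rw [hφ]; fun_prop
  have hqc : Continuous q := hq.continuous
  have hin : ∀ x ∈ closedBall z ρ, |inner ℝ v (x - z)| ≤ ‖v‖ * ρ := by
    intro x hx
    rw [mem_closedBall, dist_eq_norm] at hx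
    exact (abs_real_inner_le_norm _ _).trans (by gcongr)
  have hAt : ∀ x ∈ closedBall z ρ, |A * inner ℝ v (x - z)| ≤ 1 / 2 := by
    intro x hx
    rw [abs_mul, abs_of_pos hA0]
    exact (mul_le_mul_of_nonneg_left (hin x hx) hA0.le).trans hρA
  -- compactness on the sphere
  obtain ⟨m, hm0, hm⟩ : ∃ m, q z < m ∧ ∀ x ∈ sphere z ρ ∩ {x | 0 ≤ φ x}, m ≤ q x := by
    refine IsCompact.exists_forall_le' ((isCompact_sphere z ρ).inter_right
      (isClosed_le continuous_const hφc)) hqc.continuousOn ?_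
    rintro x ⟨hx, hx0⟩
    apply hball
    have h1 := abs_le.1 (hAt x (sphere_subset_closedBall hx))
    rw [mem_sphere, dist_eq_norm] at hx
    have hx0 : 0 ≤ φ x := hx0
    simp only [hφ, hx] at hx0
    set t : ℝ := inner ℝ v (x - z) with ht
    have ht0 : ρ ^ 2 < 2 * t := by
      have : 0 < ρ ^ 2 := by positivity
      have h3 : ρ ^ 2 ≤ t * (1 + A * t) := by nlinarith
      have h4 : 0 < t := by
        by_contra! hc
        nlinarith
      nlinarith
    rw [mem_ball, dist_eq_norm, dist_comm, dist_eq_norm, ← hv]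
    have h5 : ‖x - y‖ ^ 2 = ρ ^ 2 - 2 * t + ‖v‖ ^ 2 := by
      have : x - y = (x - z) - v := by rw [hv]; abel
      rw [this, norm_sub_sq_real, hx, real_inner_comm, ← ht]
    exact lt_of_pow_lt_pow_left₀ 2 hv0.le (by linarith)
  obtain ⟨ε, hε0, hε1, hε2⟩ : ∃ ε : ℝ, 0 < ε ∧ ε * (2 * (‖v‖ * ρ)) < m - q z ∧
      ε * (Ct * (4 * ‖v‖) ^ 2) < 2 := by
    have hmz : 0 < m - q z := by linarith
    have hC0 : 0 < Ct := by linarith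
    refine ⟨min ((m - q z) / (2 * (2 * (‖v‖ * ρ)))) (1 / (Ct * (4 * ‖v‖) ^ 2)), by positivity,
      ?_, ?_⟩
    · calc _ ≤ ((m - q z) / (2 * (2 * (‖v‖ * ρ)))) * (2 * (‖v‖ * ρ)) := by
            gcongr; exact min_le_left _ _
        _ = (m - q z) / 2 := by field_simp
        _ < _ := by linarith
    · calc _ ≤ (1 / (Ct * (4 * ‖v‖) ^ 2)) * (Ct * (4 * ‖v‖) ^ 2) := by
            gcongr; exact min_le_right _ _
        _ = 1 := by field_simp
        _ < _ := by norm_num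
  have hw : Continuous fun x => q x - ε * φ x := by fun_prop
  obtain ⟨x, hxb, hxm⟩ := (isCompact_closedBall z ρ).exists_isMinOn
    ⟨z, mem_closedBall_self hρ0.le⟩ hw.continuousOn
  have hxz : q x - ε * φ x ≤ q z := by
    have := hxm (mem_closedBall_self hρ0.le)
    simpa [hφ] using this
  have hxball : x ∈ ball z ρ := by
    by_contra hc
    have hxs : x ∈ sphere z ρ := by
      rw [mem_closedBall] at hxb
      rw [mem_ball, not_lt] at hc
      exact le_antisymm hxb hc
    by_cases hp : 0 ≤ φ x
    · have h1 := hm x ⟨hxs, hp⟩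
      have h2 : φ x ≤ 2 * (‖v‖ * ρ) := by
        have h3 := abs_le.1 (hAt x hxb)
        have h4 := abs_le.1 (hin x hxb)
        have h5 : |A * inner ℝ v (x - z)| * |inner ℝ v (x - z)| ≤ 1 / 2 * (‖v‖ * ρ) :=
          mul_le_mul (hAt x hxb) (hin x hxb) (abs_nonneg _) (by norm_num)
        rw [← abs_mul] at h5
        have h6 := (abs_le.1 h5).2
        have h7 : 0 < ‖v‖ * ρ := by positivity
        simp only [hφ]
        nlinarith [sq_nonneg ‖x - z‖]
      have := mul_le_mul_of_nonneg_left h2 hε0.le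
      linarith
    · push Not at hp
      have h1 := hmin x (closedBall_subset_ball hρr hxb)
      nlinarith
  have hloc : ∀ᶠ x' in 𝓝 x, q x - ε * φ x ≤ q x' - ε * φ x' := by
    filter_upwards [isOpen_ball.mem_nhds hxball] with x' hx'
    exact hxm (ball_subset_closedBall hx')
  set t : ℝ := inner ℝ v (x - z) with ht
  have htest : ∀ h : En n, fderiv ℝ q x h =
        ε * (inner ℝ v h * (1 + 2 * (A * t)) - 2 * inner ℝ (x - z) h) ∧
      2 * (ε * (A * inner ℝ v h ^ 2 - ‖h‖ ^ 2)) ≤ fderiv ℝ (fderiv ℝ q) x h h := by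
    intro h
    apply aux_hess_test hq
    have hc : Tendsto (fun s : ℝ => x + s • h) (𝓝 0) (𝓝 x) := by
      have : Continuous fun s : ℝ => x + s • h := by fun_prop
      simpa using this.tendsto 0
    filter_upwards [hc.eventually hloc] with s hs
    have e1 : (x + s • h) - z = (x - z) + s • h := by abel
    have e2 : φ (x + s • h) = φ x + s * (inner ℝ v h * (1 + 2 * (A * t))
        - 2 * inner ℝ (x - z) h) + s ^ 2 * (A * inner ℝ v h ^ 2 - ‖h‖ ^ 2) := by
      simp only [hφ, e1, inner_add_right, inner_smul_right, norm_add_sq_real, norm_smul, mul_pow,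
        Real.norm_eq_abs, sq_abs, ← ht]
      ring
    rw [e2] at hs
    linarith
  obtain ⟨hP, hN⟩ := aux_eig hq x v ε A hε0 hA0.le fun h => (htest h).2
  have hgrad : ‖gradient q x‖ ≤ ε * (4 * ‖v‖) := by
    have h1 : ‖gradient q x‖ = ‖fderiv ℝ q x‖ := by simp [gradient]
    rw [h1]
    refine ContinuousLinearMap.opNorm_le_bound _ (by positivity) fun h => ?_
    rw [(htest h).1, norm_mul, Real.norm_of_nonneg hε0.le, mul_assoc]
    refine mul_le_mul_of_nonneg_left ?_ hε0.le
    have h3 := abs_le.1 (hAt x hxb)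
    have h4 : |inner ℝ v h * (1 + 2 * (A * t))| ≤ (‖v‖ * ‖h‖) * 2 := by
      rw [abs_mul]
      exact mul_le_mul (abs_real_inner_le_norm _ _) (abs_le.2 ⟨by linarith, by linarith⟩)
        (abs_nonneg _) (by positivity)
    have h5 : |inner ℝ (x - z) h| ≤ ‖v‖ * ‖h‖ := by
      refine (abs_real_inner_le_norm _ _).trans ?_
      rw [mem_closedBall, dist_eq_norm] at hxb
      gcongr
      exact hxb.trans hρv
    rw [Real.norm_eq_abs]
    have h6 := abs_le.1 h4
    have h7 := abs_le.1 h5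
    exact abs_le.2 ⟨by linarith, by linarith⟩
  have hg2 : ‖gradient q x‖ ^ 2 ≤ (ε * (4 * ‖v‖)) ^ 2 := by gcongr
  have hfin := hest x
  have hfin2 : 2 * ε * (A * ‖v‖ ^ 2 - n) ≤ Ct * (2 * ε * n + (ε * (4 * ‖v‖)) ^ 2) :=
    hP.trans (hfin.trans (mul_le_mul_of_nonneg_left (by linarith) (by linarith)))
  rw [hAv] at hfin2
  have hlast := mul_lt_mul_of_pos_left hε2 hε0
  linarith

/-- a nonconstant polynomial satisfying the eigenvalue estimate has no
local minimum. -/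
theorem poly_eigenvalue_estimate_no_local_min (n : ℕ) (q : En n → ℝ)
    (hq : IsPolyFun n q) (Ct : ℝ) (hCt : 1 ≤ Ct)
    (hest : ∀ x : En n, lamPos n q x ≤ Ct * (lamNeg n q x + ‖gradient q x‖ ^ 2))
    (hnc : ¬ ∃ c : ℝ, ∀ x : En n, q x = c) :
    ∀ x : En n, ¬ IsLocalMin q x := by
  obtain ⟨P, hP⟩ := hq
  have hqe : q = fun x : En n => MvPolynomial.eval (fun i => x i) P := funext hP
  have han : AnalyticOnNhd ℝ q Set.univ := by
    rw [hqe]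
    exact AnalyticOnNhd.eval_continuousLinearMap
      (EuclideanSpace.equiv (Fin n) ℝ : En n →L[ℝ] (Fin n → ℝ)) P
  have hcd : ContDiff ℝ 2 q := contDiffOn_univ.1 (han.contDiffOn uniqueDiffOn_univ)
  intro x0 hx0
  obtain ⟨r, hr, hb⟩ := Metric.eventually_nhds_iff.1 hx0
  -- `q` is constant on the ball of radius `r / 2`
  by_cases hc : ∀ y ∈ ball x0 (r / 2), q y = q x0
  · apply hnc
    refine ⟨q x0, fun x => ?_⟩
    have : q = fun _ => q x0 := han.eq_of_eventuallyEq analyticOnNhd_const (z₀ := x0) (by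
      filter_upwards [ball_mem_nhds x0 (half_pos hr)] with y hy using hc y hy)
    exact congrFun this x
  · push Not at hc
    obtain ⟨y, hy, hyq⟩ := hc
    have hZ : IsClosed {x | q x = q x0} := isClosed_eq hcd.continuous continuous_const
    obtain ⟨z, hz, hzd⟩ := hZ.exists_infDist_eq_dist ⟨x0, rfl⟩ y
    have hz : q z = q x0 := hz
    have hyz : y ≠ z := by rintro rfl; exact hyq hz
    rw [mem_ball] at hy
    have hle : dist y z ≤ dist y x0 := hzd ▸ infDist_le_dist_of_mem rfl
    have hzx : dist z x0 < r := by
      have := dist_triangle z y x0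
      rw [dist_comm z y] at this
      linarith
    refine aux_main hcd Ct hCt hest y z hyz (r - dist z x0) (by linarith) ?_ ?_
    · intro x hx
      rw [mem_ball] at hx
      rw [hz]
      apply hb
      have := dist_triangle x z x0
      linarith
    · intro x hx
      rw [mem_ball, dist_comm z y] at hx
      rw [hz]
      refine lt_of_le_of_ne (hb ?_) fun he => ?_
      · have := dist_triangle x y x0
        linarith
      · have h1 : infDist y {x | q x = q x0} ≤ dist y x := infDist_le_dist_of_mem he.symm
        rw [hzd, dist_comm y x] at h1
        linarith

end
end
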